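/- Let 2 < p < ∞, 0 < r < 1, and θ = r + (p−2)/p (dimension d = 3). There exists a constant C, depending only on r and p and independent of T, such that the following holds. Let w₀ be a Schwartz function on ℝ³, let T > 0, let f : [0,T] × ℝ³ → ℂ be continuous with f(t,·) Schwartz for each t and t ↦ [f(t,·)]_θ integrable, and define w(t, ·) = e^{itD} w₀ + ∫₀^t e^{i(t−s)D} f(s, ·) ds (so that ∂_t w = i D w + f, w(0) = w₀). Then (∫₀^T [w(t, ·)]_{r,p}^{2p/(p−2)} dt)^{(p−2)/(2p)} ≤ C · ([w₀]_θ + ∫₀^T [f(t, ·)]_θ dt). -/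

import Mathlib

open MeasureTheory ENNReal
open scoped RealInnerProductSpace

noncomputable section

/-- Shorthand for Euclidean space `ℝ^d`. -/
abbrev Ed (d : ℕ) := EuclideanSpace ℝ (Fin d)

/-- The homogeneous Besov (Gagliardo) seminorm `[f]_{r,p}`. -/
def gagliardo (d : ℕ) (r p : ℝ) {F : Type*} [NormedAddCommGroup F] (f : Ed d → F) : ℝ≥0∞ :=
  (∫⁻ x, ∫⁻ y, (‖f x - f y‖₊ : ℝ≥0∞) ^ p / (‖x - y‖₊ : ℝ≥0∞) ^ (r * p + d)) ^ (1 / p)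

/-- The homogeneous Hölder seminorm `{f}_r`. -/
def holderSemi (d : ℕ) (r : ℝ) {F : Type*} [NormedAddCommGroup F] (f : Ed d → F) : ℝ≥0∞ :=
  ⨆ x, ⨆ y, (‖f x - f y‖₊ : ℝ≥0∞) / (‖x - y‖₊ : ℝ≥0∞) ^ r

/-- The Fourier transform `f̂(κ) = ∫ e^{-i x·κ} f(x) dx`. -/
def ftransform (d : ℕ) (f : Ed d → ℂ) (κ : Ed d) : ℂ :=
  ∫ x, Complex.exp (-(Complex.I * (⟪x, κ⟫ : ℂ))) * f x

/-- The homogeneous Sobolev seminorm `[f]_θ = ((2π)^{-d} ∫ |κ|^{2θ} |f̂(κ)|² dκ)^{1/2}`. -/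
def sobolevSemi (d : ℕ) (θ : ℝ) (f : Ed d → ℂ) : ℝ≥0∞ :=
  (ENNReal.ofReal ((2 * Real.pi) ^ (-(d : ℝ))) *
    ∫⁻ κ, (‖κ‖₊ : ℝ≥0∞) ^ (2 * θ) * (‖ftransform d f κ‖₊ : ℝ≥0∞) ^ (2 : ℕ)) ^ ((1 : ℝ) / 2)

/-- A symbol of class `S⁰_{ph}`: smooth away from the origin and positively
homogeneous of degree `0`. -/
def IsSymbol0 (d : ℕ) (a : Ed d → ℂ) : Prop :=
  ContDiffOn ℝ (⊤ : ℕ∞) a {0}ᶜ ∧ ∀ (c : ℝ) (κ : Ed d), 0 < c → κ ≠ 0 → a (c • κ) = a κ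

/-- The operator `𝔞[f](x) = (2π)^{-d} ∫ e^{i x·κ} a(κ) f̂(κ) dκ` associated with a symbol. -/
def symbOp (d : ℕ) (a : Ed d → ℂ) (f : Ed d → ℂ) (x : Ed d) : ℂ :=
  (((2 * Real.pi) ^ (-(d : ℝ)) : ℝ) : ℂ) *
    ∫ κ, Complex.exp (Complex.I * (⟪x, κ⟫ : ℂ)) * a κ * ftransform d f κ

/-- The partial derivative `∂_i f(x)`. -/
def pd (d : ℕ) (i : Fin d) (f : Ed d → ℝ) (x : Ed d) : ℝ :=
  fderiv ℝ f x (EuclideanSpace.single i 1)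

/-- The half-wave propagator `(e^{itD} g)(x) = (2π)^{-d} ∫ e^{i x·κ} e^{i t|κ|} ĝ(κ) dκ`. -/
def halfWave (d : ℕ) (t : ℝ) (g : Ed d → ℂ) (x : Ed d) : ℂ :=
  (((2 * Real.pi) ^ (-(d : ℝ)) : ℝ) : ℂ) *
    ∫ κ, Complex.exp (Complex.I * ((⟪x, κ⟫ : ℂ) + (t : ℂ) * ((‖κ‖ : ℝ) : ℂ))) *
      ftransform d g κ

end

/-!
`e^{itD} g` is the Fourier extension of `ĝ` from the light cone. With a Gaussian damping
`e^{-L|κ|²/2}` in dimension three, its kernel is a radial Fourier integral, which one integration by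
parts bounds by `C / (L |t|)`. Interpolated with Plancherel's identity, this gives decay
`(L |t|)^{-(1 - 2/p)}` from `L^{p'}` to `L^p`, so that `T T*` and the Hardy–Littlewood–Sobolev
inequality in time bound the damped wave in `L^{2p/(p-2)}_t L^p_x` by the `L²` norm of its symbol.
With `L = l²` this applies to the piece of frequency about `l⁻¹`, whose increments over a distance
`|h|` gain `min(1, |h|/l)`: the dyadic pieces therefore sum to the Gagliardo seminorm for
`0 < r < 1`, and, as both Lebesgue exponents are at least two, Minkowski's inequality reassembles
their symbols into the Sobolev seminorm of order `θ`. Since the estimate is global in time,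
Minkowski's inequality in `s` absorbs the Duhamel term with a constant independent of `T`.
-/

section Integration

variable {X S : Type*} [MeasurableSpace X] [MeasurableSpace S] {μ : Measure X} {ν : Measure S}

theorem lintegral_mul_rpow_le {p : ℝ} (hp : 1 ≤ p) {w c : X → ℝ≥0∞} (hw : AEMeasurable w μ)
    (hc : AEMeasurable c μ) :
    (∫⁻ x, w x * c x ∂μ) ^ p ≤ (∫⁻ x, w x ∂μ) ^ (p - 1) * ∫⁻ x, w x * c x ^ p ∂μ := by
  have hp0 : 0 < p := by linarith
  have hp1 : 0 ≤ 1 - 1 / p := by rw [sub_nonneg, div_le_one hp0]; exact hp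
  have hsplit (x : X) : w x * c x = w x ^ (1 - 1 / p) * (w x * c x ^ p) ^ (1 / p) := by
    rw [ENNReal.mul_rpow_of_nonneg _ _ (by positivity), ← ENNReal.rpow_mul,
      mul_one_div_cancel hp0.ne', ENNReal.rpow_one, ← mul_assoc,
      ← ENNReal.rpow_add_of_nonneg _ _ hp1 (by positivity), sub_add_cancel, ENNReal.rpow_one]
  calc (∫⁻ x, w x * c x ∂μ) ^ p
      = (∫⁻ x, w x ^ (1 - 1 / p) * (w x * c x ^ p) ^ (1 / p) ∂μ) ^ p := by simp_rw [← hsplit]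
    _ ≤ ((∫⁻ x, w x ∂μ) ^ (1 - 1 / p) * (∫⁻ x, w x * c x ^ p ∂μ) ^ (1 / p)) ^ p := by
        gcongr
        exact lintegral_mul_norm_pow_le hw (hw.mul (hc.pow_const p)) hp1 (by positivity)
          (sub_add_cancel 1 (1 / p))
    _ = (∫⁻ x, w x ∂μ) ^ (p - 1) * ∫⁻ x, w x * c x ^ p ∂μ := by
        rw [ENNReal.mul_rpow_of_nonneg _ _ hp0.le, ← ENNReal.rpow_mul, ← ENNReal.rpow_mul,
          one_div_mul_cancel hp0.ne', ENNReal.rpow_one, sub_mul, one_mul,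
          one_div_mul_cancel hp0.ne']

theorem tsum_mul_rpow_le {ι : Type*} {p : ℝ} (hp : 1 ≤ p) (w c : ι → ℝ≥0∞) :
    (∑' j, w j * c j) ^ p ≤ (∑' j, w j) ^ (p - 1) * ∑' j, w j * c j ^ p := by
  let _ : MeasurableSpace ι := ⊤
  simpa only [lintegral_count] using
    lintegral_mul_rpow_le (μ := Measure.count) hp measurable_from_top.aemeasurable
      measurable_from_top.aemeasurable (w := w) (c := c)

theorem tsum_rpow_le_rpow_tsum {ι : Type*} {p : ℝ} (hp : 1 ≤ p) (c : ι → ℝ≥0∞) :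
    ∑' j, c j ^ p ≤ (∑' j, c j) ^ p := by
  have hp1 : 0 ≤ p - 1 := by linarith
  have hsplit (x : ℝ≥0∞) : x ^ p = x * x ^ (p - 1) := by
    nth_rewrite 2 [← ENNReal.rpow_one x]
    rw [← ENNReal.rpow_add_of_nonneg _ _ zero_le_one hp1, add_sub_cancel]
  simp_rw [hsplit]
  rw [← ENNReal.tsum_mul_right]
  gcongr with j
  exact ENNReal.le_tsum j

theorem lintegral_rpow_eq_rpow_eLpNorm' {p : ℝ} (hp : 0 < p) (f : X → ℝ≥0∞) :
    ∫⁻ x, f x ^ p ∂μ = eLpNorm' f p μ ^ p := by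
  simpa only [enorm_eq_self] using lintegral_rpow_enorm_eq_rpow_eLpNorm' (f := f) hp

theorem eLpNorm'_const_mul {p : ℝ} (hp : 0 < p) {c : ℝ≥0∞} (hc : c ≠ ∞) (f : X → ℝ≥0∞) :
    eLpNorm' (fun x => c * f x) p μ = c * eLpNorm' f p μ := by
  simp only [eLpNorm', enorm_eq_self, ENNReal.mul_rpow_of_nonneg _ _ hp.le]
  rw [lintegral_const_mul' _ _ (ENNReal.rpow_ne_top_of_nonneg hp.le hc),
    ENNReal.mul_rpow_of_nonneg _ _ (one_div_nonneg.2 hp.le), ← ENNReal.rpow_mul,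
    mul_one_div_cancel hp.ne', ENNReal.rpow_one]

theorem lintegral_rpow_lintegral_le_of_ne_zero [SFinite μ] [SFinite ν] {p : ℝ} (hp : 1 ≤ p)
    {F : X → S → ℝ≥0∞} (hF : Measurable (Function.uncurry F)) {M : S → ℝ≥0∞}
    (hM : Measurable M) (hM0 : ∀ s, M s ≠ 0) (hMν : ∫⁻ s, M s ∂ν ≠ ∞)
    (hFM : ∀ s, eLpNorm' (F · s) p μ ≤ M s) :
    ∫⁻ x, (∫⁻ s, F x s ∂ν) ^ p ∂μ ≤ (∫⁻ s, M s ∂ν) ^ p := by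
  have hp0 : 0 < p := by linarith
  have hMfin : ∀ᵐ s ∂ν, M s < ∞ := ae_lt_top hM hMν
  have hweight (x : X) : (∫⁻ s, F x s ∂ν) ^ p ≤
      (∫⁻ s, M s ∂ν) ^ (p - 1) * ∫⁻ s, M s * (F x s / M s) ^ p ∂ν := by
    refine le_trans (le_of_eq ?_) (lintegral_mul_rpow_le hp hM.aemeasurable
      ((hF.comp measurable_prodMk_left).div hM).aemeasurable)
    congr 1
    refine lintegral_congr_ae ?_
    filter_upwards [hMfin] with s hs
    exact (ENNReal.mul_div_cancel (hM0 s) hs.ne).symm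
  have hslice : ∀ᵐ s ∂ν, ∫⁻ x, M s * (F x s / M s) ^ p ∂μ ≤ M s := by
    filter_upwards with s
    have hFs : Measurable (F · s) := hF.comp measurable_prodMk_right
    calc ∫⁻ x, M s * (F x s / M s) ^ p ∂μ
        = M s * ((∫⁻ x, F x s ^ p ∂μ) / M s ^ p) := by
          simp_rw [ENNReal.div_rpow_of_nonneg _ _ hp0.le, div_eq_mul_inv]
          rw [lintegral_const_mul _ ((hFs.pow_const p).mul_const _),
            lintegral_mul_const _ (hFs.pow_const p)]
      _ ≤ M s * 1 := by
          gcongr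
          refine ENNReal.div_le_of_le_mul ?_
          rw [one_mul, lintegral_rpow_eq_rpow_eLpNorm' hp0]
          exact ENNReal.rpow_le_rpow (hFM s) hp0.le
      _ = M s := mul_one _
  calc ∫⁻ x, (∫⁻ s, F x s ∂ν) ^ p ∂μ
      ≤ ∫⁻ x, (∫⁻ s, M s ∂ν) ^ (p - 1) * ∫⁻ s, M s * (F x s / M s) ^ p ∂ν ∂μ :=
        lintegral_mono hweight
    _ = (∫⁻ s, M s ∂ν) ^ (p - 1) * ∫⁻ s, ∫⁻ x, M s * (F x s / M s) ^ p ∂μ ∂ν := by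
        rw [lintegral_const_mul' _ _ (ENNReal.rpow_ne_top_of_nonneg (by linarith) hMν),
          lintegral_lintegral_swap]
        fun_prop
    _ ≤ (∫⁻ s, M s ∂ν) ^ (p - 1) * ∫⁻ s, M s ∂ν := by
        gcongr 1
        exact lintegral_mono_ae hslice
    _ = (∫⁻ s, M s ∂ν) ^ p := by
        nth_rewrite 2 [← ENNReal.rpow_one (∫⁻ s, M s ∂ν)]
        rw [← ENNReal.rpow_add_of_nonneg _ _ (by linarith) zero_le_one, sub_add_cancel]

theorem eLpNorm'_lintegral_le [SFinite μ] [SigmaFinite ν] {p : ℝ} (hp : 1 ≤ p)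
    {F : X → S → ℝ≥0∞} (hF : Measurable (Function.uncurry F)) :
    eLpNorm' (fun x => ∫⁻ s, F x s ∂ν) p μ ≤ ∫⁻ s, eLpNorm' (F · s) p μ ∂ν := by
  have hp0 : 0 < p := by linarith
  by_cases htop : ∫⁻ s, eLpNorm' (F · s) p μ ∂ν = ∞
  · exact htop ▸ le_top
  have hN : Measurable fun s => eLpNorm' (F · s) p μ := by
    unfold eLpNorm'
    simp only [enorm_eq_self]
    exact ((hF.comp measurable_swap).pow_const p).lintegral_prod_right'.pow_const _
  refine ENNReal.le_of_forall_pos_le_add fun ε hε _ => ?_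
  obtain ⟨g, hg0, hg, hgε⟩ :=
    exists_pos_lintegral_lt_of_sigmaFinite ν (ENNReal.coe_ne_zero.2 hε.ne')
  -- The weight `M = ‖F(·, s)‖_p + g` is positive with almost the right integral.
  have hMint : ∫⁻ s, eLpNorm' (F · s) p μ + g s ∂ν ≤ ∫⁻ s, eLpNorm' (F · s) p μ ∂ν + ε := by
    rw [lintegral_add_left hN]
    gcongr
  refine le_trans ?_ hMint
  rw [← ENNReal.rpow_le_rpow_iff hp0, ← lintegral_rpow_eq_rpow_eLpNorm' hp0]
  exact lintegral_rpow_lintegral_le_of_ne_zero hp hF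
    (hN.add hg.coe_nnreal_ennreal) (fun s => by simp [(hg0 s).ne'])
    (ne_top_of_le_ne_top (by simp [htop]) hMint) (fun s => le_self_add)

theorem eLpNorm'_tsum_le {ι : Type*} [Countable ι] [SFinite μ] {p : ℝ} (hp : 1 ≤ p)
    {F : ι → X → ℝ≥0∞} (hF : ∀ j, Measurable (F j)) :
    eLpNorm' (fun x => ∑' j, F j x) p μ ≤ ∑' j, eLpNorm' (F j) p μ := by
  let _ : MeasurableSpace ι := ⊤
  have : MeasurableSingletonClass ι := ⟨fun _ => trivial⟩
  simpa only [lintegral_count] using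
    eLpNorm'_lintegral_le (ν := (Measure.count : Measure ι)) hp (F := fun x j => F j x)
      (measurable_from_prod_countable_left hF)

theorem eLpNorm'_tsum_rpow_le {ι : Type*} [Countable ι] [SFinite μ] {p q : ℝ} (hp : 2 ≤ p)
    (hq : 2 ≤ q) {B : ι → X → ℝ≥0∞} (hB : ∀ j, Measurable (B j)) :
    eLpNorm' (fun x => (∑' j, B j x ^ p) ^ (1 / p)) q μ ≤
      (∑' j, eLpNorm' (B j) q μ ^ (2 : ℝ)) ^ (1 / 2 : ℝ) := by
  have hhalf (f : X → ℝ≥0∞) {c : ℝ} (hc : 0 < c) (s : ℝ) :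
      eLpNorm' (fun x => f x ^ c) s μ = eLpNorm' f (s * c) μ ^ c := by
    simpa only [enorm_eq_self] using eLpNorm'_enorm_rpow f s c hc
  have hp2 (x : X) : (∑' j, B j x ^ p) ^ (1 / p) ≤ (∑' j, B j x ^ (2 : ℝ)) ^ (1 / 2 : ℝ) := by
    have hsum := tsum_rpow_le_rpow_tsum (p := p / 2) (by linarith) fun j => B j x ^ (2 : ℝ)
    simp_rw [← ENNReal.rpow_mul, mul_div_cancel₀ p two_ne_zero] at hsum
    grw [hsum, ← ENNReal.rpow_mul]
    field_simp
    rfl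
  calc eLpNorm' (fun x => (∑' j, B j x ^ p) ^ (1 / p)) q μ
      ≤ eLpNorm' (fun x => (∑' j, B j x ^ (2 : ℝ)) ^ (1 / 2 : ℝ)) q μ :=
        eLpNorm'_mono_enorm_ae (by linarith) (.of_forall hp2)
    _ = eLpNorm' (fun x => ∑' j, B j x ^ (2 : ℝ)) (q / 2) μ ^ (1 / 2 : ℝ) := by
        rw [hhalf _ (by norm_num), mul_one_div]
    _ ≤ (∑' j, eLpNorm' (fun x => B j x ^ (2 : ℝ)) (q / 2) μ) ^ (1 / 2 : ℝ) := by
        gcongr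
        exact eLpNorm'_tsum_le (by linarith) fun j => (hB j).pow_const 2
    _ = (∑' j, eLpNorm' (B j) q μ ^ (2 : ℝ)) ^ (1 / 2 : ℝ) := by
        simp_rw [hhalf _ two_pos, div_mul_cancel₀ q two_ne_zero]

theorem enorm_integral_sub_integral_le {E : Type*} [NormedAddCommGroup E] [NormedSpace ℝ E]
    {F G : X → E} (hF : AEStronglyMeasurable F μ) (hG : AEStronglyMeasurable G μ) :
    ‖(∫ x, F x ∂μ) - ∫ x, G x ∂μ‖ₑ ≤ ∫⁻ x, ‖F x - G x‖ₑ ∂μ := by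
  by_cases htop : ∫⁻ x, ‖F x - G x‖ₑ ∂μ = ∞
  · exact htop ▸ le_top
  have hFG : Integrable (F - G) μ := ⟨hF.sub hG, lt_top_iff_ne_top.2 htop⟩
  by_cases hGi : Integrable G μ
  · have hFi : Integrable F μ := by simpa using hFG.add hGi
    rw [← integral_sub hFi hGi]
    exact enorm_integral_le_lintegral_enorm _
  · have hFi : ¬ Integrable F μ := fun h => hGi (by simpa using h.sub hFG)
    simp [integral_undef hFi, integral_undef hGi]

theorem lintegral_lintegral_add_left [SFinite ν] {f : X → S → ℝ≥0∞}
    (hf : Measurable (Function.uncurry f)) (g : X → S → ℝ≥0∞) :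
    ∫⁻ x, ∫⁻ s, f x s + g x s ∂ν ∂μ = ∫⁻ x, ∫⁻ s, f x s ∂ν ∂μ + ∫⁻ x, ∫⁻ s, g x s ∂ν ∂μ := by
  have hf' : Measurable fun x => ∫⁻ s, f x s ∂ν := hf.lintegral_prod_right
  rw [← lintegral_add_left hf']
  exact lintegral_congr fun x => lintegral_add_left hf.of_uncurry_left _

theorem lintegral_lintegral_const_mul [SFinite ν] (c : ℝ≥0∞) {f : X → S → ℝ≥0∞}
    (hf : Measurable (Function.uncurry f)) :
    ∫⁻ x, ∫⁻ s, c * f x s ∂ν ∂μ = c * ∫⁻ x, ∫⁻ s, f x s ∂ν ∂μ := by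
  have hf' : Measurable fun x => ∫⁻ s, f x s ∂ν := hf.lintegral_prod_right
  rw [← lintegral_const_mul _ hf']
  exact lintegral_congr fun x => lintegral_const_mul _ hf.of_uncurry_left

theorem lintegral_lintegral_le_two_mul_of_symm [SFinite μ] {k : X → X → ℝ≥0∞}
    (hk : Measurable (Function.uncurry k)) (hsymm : ∀ x y, k x y = k y x) {φ : X → ℝ≥0∞}
    (hφ : Measurable φ) :
    ∫⁻ x, ∫⁻ y, k x y ∂μ ∂μ ≤ 2 * ∫⁻ x, ∫⁻ y, {y | φ y ≤ φ x}.indicator (k x) y ∂μ ∂μ := by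
  set K : X → X → ℝ≥0∞ := fun x y => {y | φ y ≤ φ x}.indicator (k x) y with hK
  have hKm : Measurable (Function.uncurry K) :=
    Measurable.ite (measurableSet_le (hφ.comp measurable_snd) (hφ.comp measurable_fst)) hk
      measurable_const
  have hkK (x y : X) : k x y ≤ K x y + K y x := by
    rcases le_total (φ y) (φ x) with h | h
    · simp only [hK, Set.indicator_of_mem (s := {y | φ y ≤ φ x}) h]
      exact le_self_add
    · simp only [hK, Set.indicator_of_mem (s := {x | φ x ≤ φ y}) (a := x) h, hsymm x y]
      exact le_add_self
  calc ∫⁻ x, ∫⁻ y, k x y ∂μ ∂μ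
      ≤ ∫⁻ x, ∫⁻ y, K x y + K y x ∂μ ∂μ :=
        lintegral_mono fun x => lintegral_mono fun y => hkK x y
    _ = 2 * ∫⁻ x, ∫⁻ y, K x y ∂μ ∂μ := by
        rw [lintegral_lintegral_add_left hKm fun x y => K y x, two_mul,
          lintegral_lintegral_swap (f := fun x y => K y x)
            (hKm.comp measurable_swap).aemeasurable]

end Integration

section Radial

variable {V : Type*} [NormedAddCommGroup V] [NormedSpace ℝ V] [FiniteDimensional ℝ V]
  [Nontrivial V] [MeasurableSpace V] [BorelSpace V] (μ : Measure V) [μ.IsAddHaarMeasure]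

theorem lintegral_fun_norm_addHaar {f : ℝ → ℝ≥0∞} (hf : Measurable f) :
    ∫⁻ x, f ‖x‖ ∂μ = Module.finrank ℝ V * μ (Metric.ball 0 1) *
      ∫⁻ y in Set.Ioi (0 : ℝ), ENNReal.ofReal (y ^ (Module.finrank ℝ V - 1)) * f y := by
  have hf' : Measurable fun y : Set.Ioi (0 : ℝ) => f y := hf.comp measurable_subtype_coe
  calc ∫⁻ x, f ‖x‖ ∂μ
      = ∫⁻ x : ({0}ᶜ : Set V), f ‖x.1‖ ∂(μ.comap Subtype.val) := by
        rw [lintegral_subtype_comap (measurableSet_singleton _).compl (fun x => f ‖x‖),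
          restrict_compl_singleton]
    _ = ∫⁻ x, f x.2 ∂μ.toSphere.prod (.volumeIoiPow (Module.finrank ℝ V - 1)) := by
        simpa using μ.measurePreserving_homeomorphUnitSphereProd.lintegral_comp
          (hf'.comp measurable_snd)
    _ = μ.toSphere Set.univ *
          ∫⁻ y, f y ∂(Measure.volumeIoiPow (Module.finrank ℝ V - 1)) := by
        simp only [lintegral_prod _ (by fun_prop : AEMeasurable (fun x : Metric.sphere (0 : V) 1 ×
          Set.Ioi (0 : ℝ) => f x.2) _), lintegral_const, mul_comm]
    _ = _ := by
        rw [μ.toSphere_apply_univ, Measure.volumeIoiPow,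
          lintegral_withDensity_eq_lintegral_mul _ (by fun_prop) hf']
        congr 1
        exact lintegral_subtype_comap measurableSet_Ioi
          (fun y : ℝ => ENNReal.ofReal (y ^ (Module.finrank ℝ V - 1)) * f y)

theorem ofReal_pow_mul_ofReal_rpow {y : ℝ} (hy : 0 < y) {n : ℕ} (hn : 0 < n) (b : ℝ) :
    ENNReal.ofReal (y ^ (n - 1)) * ENNReal.ofReal y ^ b = ENNReal.ofReal (y ^ (n + b - 1)) := by
  rw [ENNReal.ofReal_rpow_of_pos hy, ← ENNReal.ofReal_mul (by positivity), ← Real.rpow_natCast,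
    ← Real.rpow_add hy, Nat.cast_pred hn]
  ring_nf

theorem setLIntegral_norm_preimage_enorm_rpow {s : Set ℝ} (hs : MeasurableSet s) (b : ℝ) :
    ∫⁻ x in norm ⁻¹' s, ‖x‖ₑ ^ b ∂μ = Module.finrank ℝ V * μ (Metric.ball 0 1) *
      ∫⁻ y in Set.Ioi 0 ∩ s, ENNReal.ofReal (y ^ (Module.finrank ℝ V + b - 1)) := by
  have hpolar := lintegral_fun_norm_addHaar μ
    ((by fun_prop : Measurable fun y : ℝ => ENNReal.ofReal y ^ b).indicator hs)
  rw [← lintegral_indicator (measurable_norm hs)]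
  convert hpolar using 1
  · simp only [Set.indicator, Set.mem_preimage, ofReal_norm]
    rfl
  rw [Set.inter_comm, ← setLIntegral_indicator hs]
  congr 1
  refine setLIntegral_congr_fun measurableSet_Ioi fun y hy => ?_
  by_cases hys : y ∈ s
  · simp only [Set.indicator_of_mem hys, ofReal_pow_mul_ofReal_rpow hy Module.finrank_pos]
  · simp only [Set.indicator_of_notMem hys, mul_zero]

theorem setLIntegral_closedBall_enorm_rpow {b δ : ℝ} (hb : 0 < Module.finrank ℝ V + b)
    (hδ : 0 ≤ δ) :
    ∫⁻ x in Metric.closedBall 0 δ, ‖x‖ₑ ^ b ∂μ = Module.finrank ℝ V * μ (Metric.ball 0 1) *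
      ENNReal.ofReal (δ ^ (Module.finrank ℝ V + b) / (Module.finrank ℝ V + b)) := by
  have hball : Metric.closedBall (0 : V) δ = norm ⁻¹' Set.Iic δ := by ext; simp
  rw [hball, setLIntegral_norm_preimage_enorm_rpow μ measurableSet_Iic, Set.Ioi_inter_Iic,
    ← ofReal_integral_eq_lintegral_ofReal, ← intervalIntegral.integral_of_le hδ,
    integral_rpow (Or.inl (by linarith)), sub_add_cancel, Real.zero_rpow hb.ne', sub_zero]
  · rw [← IntegrableOn, ← intervalIntegrable_iff_integrableOn_Ioc_of_le hδ]
    exact intervalIntegral.intervalIntegrable_rpow' (by linarith)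
  · filter_upwards [ae_restrict_mem measurableSet_Ioc] with y hy
    exact Real.rpow_nonneg hy.1.le _

theorem setLIntegral_compl_closedBall_enorm_rpow {b δ : ℝ} (hb : Module.finrank ℝ V + b < 0)
    (hδ : 0 < δ) :
    ∫⁻ x in (Metric.closedBall 0 δ)ᶜ, ‖x‖ₑ ^ b ∂μ = Module.finrank ℝ V * μ (Metric.ball 0 1) *
      ENNReal.ofReal (-δ ^ (Module.finrank ℝ V + b) / (Module.finrank ℝ V + b)) := by
  have hball : (Metric.closedBall (0 : V) δ)ᶜ = norm ⁻¹' Set.Ioi δ := by ext; simp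
  rw [hball, setLIntegral_norm_preimage_enorm_rpow μ measurableSet_Ioi,
    Set.inter_eq_right.2 (Set.Ioi_subset_Ioi hδ.le), ← ofReal_integral_eq_lintegral_ofReal
      (integrableOn_Ioi_rpow_of_lt (by linarith) hδ), integral_Ioi_rpow_of_lt (by linarith) hδ,
    sub_add_cancel]
  filter_upwards [ae_restrict_mem measurableSet_Ioi] with y hy
  exact Real.rpow_nonneg (hδ.trans hy).le _

section HardyLittlewoodSobolev

theorem setLIntegral_mul_enorm_sub_rpow_le {a : ℝ} (ha : 0 < a) (ha' : a < Module.finrank ℝ V)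
    {φ : V → ℝ≥0∞} (hφ : Measurable φ) {δ : ℝ} (hδ : 0 < δ) (x : V) :
    ∫⁻ y in (x - ·) ⁻¹' (Metric.closedBall 0 δ)ᶜ,
        φ y ^ (1 - a / (2 * Module.finrank ℝ V)) * ‖x - y‖ₑ ^ (-a) ∂μ ≤
      (∫⁻ y, φ y ∂μ) ^ (1 - a / (2 * Module.finrank ℝ V)) *
        (μ (Metric.ball 0 1) * ENNReal.ofReal (δ ^ (-Module.finrank ℝ V : ℝ))) ^
          (a / (2 * Module.finrank ℝ V)) := by
  have hn : (0 : ℝ) < Module.finrank ℝ V := Nat.cast_pos.2 Module.finrank_pos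
  set n : ℝ := (Module.finrank ℝ V : ℝ) with hn_def
  have hβ : a / (2 * n) ≤ 1 := by rw [div_le_one (by positivity)]; linarith
  have hfar : ∫⁻ y in (x - ·) ⁻¹' (Metric.closedBall 0 δ)ᶜ, ‖x - y‖ₑ ^ (-(2 * n)) ∂μ =
      μ (Metric.ball 0 1) * ENNReal.ofReal (δ ^ (-n)) := by
    rw [(Measure.measurePreserving_sub_left μ x).setLIntegral_comp_preimage_emb
        (MeasurableEquiv.subLeft x).measurableEmbedding (fun y => ‖y‖ₑ ^ (-(2 * n))),
      setLIntegral_compl_closedBall_enorm_rpow μ (by rw [← hn_def]; linarith) hδ, ← hn_def,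
      mul_comm (Module.finrank ℝ V : ℝ≥0∞), mul_assoc, ← ENNReal.ofReal_natCast, ← hn_def,
      ← ENNReal.ofReal_mul hn.le]
    congr 2
    rw [show n + -(2 * n) = -n by ring, neg_div_neg_eq, mul_div_cancel₀ _ hn.ne']
  calc _ = ∫⁻ y in (x - ·) ⁻¹' (Metric.closedBall 0 δ)ᶜ,
        φ y ^ (1 - a / (2 * n)) * (‖x - y‖ₑ ^ (-(2 * n))) ^ (a / (2 * n)) ∂μ := by
        simp_rw [← ENNReal.rpow_mul]
        rw [neg_mul, mul_div_cancel₀ _ (by positivity)]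
    _ ≤ (∫⁻ y in (x - ·) ⁻¹' (Metric.closedBall 0 δ)ᶜ, φ y ∂μ) ^ (1 - a / (2 * n)) *
          (∫⁻ y in (x - ·) ⁻¹' (Metric.closedBall 0 δ)ᶜ, ‖x - y‖ₑ ^ (-(2 * n)) ∂μ) ^
            (a / (2 * n)) :=
        lintegral_mul_norm_pow_le hφ.aemeasurable (by fun_prop) (by linarith) (by positivity)
          (by ring)
    _ ≤ _ := by
        rw [hfar]
        gcongr
        exact Measure.restrict_le_self

theorem setLIntegral_enorm_sub_rpow_closedBall {a : ℝ} (ha : a < Module.finrank ℝ V) {δ : ℝ}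
    (hδ : 0 < δ) (x : V) :
    ∫⁻ y in (x - ·) ⁻¹' Metric.closedBall 0 δ, ‖x - y‖ₑ ^ (-a) ∂μ =
      Module.finrank ℝ V * μ (Metric.ball 0 1) *
        ENNReal.ofReal (δ ^ (Module.finrank ℝ V - a) / (Module.finrank ℝ V - a)) := by
  rw [(Measure.measurePreserving_sub_left μ x).setLIntegral_comp_preimage_emb
      (MeasurableEquiv.subLeft x).measurableEmbedding (fun y => ‖y‖ₑ ^ (-a)),
    setLIntegral_closedBall_enorm_rpow μ (by linarith) hδ.le, ← sub_eq_add_neg]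

theorem mul_self_rpow_mul_div_rpow {β : ℝ} (hβ : 0 ≤ β - (1 - β)) {u J : ℝ≥0∞} (hu0 : u ≠ 0)
    (hu : u ≠ ∞) : (u * u) ^ β * (J / u) ^ (β - (1 - β)) = u * J ^ (β - (1 - β)) := by
  rw [← sq, ← ENNReal.rpow_natCast, ← ENNReal.rpow_mul, ENNReal.div_rpow_of_nonneg _ _ hβ,
    div_eq_mul_inv, mul_left_comm, ← ENNReal.rpow_neg, ← ENNReal.rpow_add _ _ hu0 hu, mul_comm,
    show ((2 : ℕ) : ℝ) * β + -(β - (1 - β)) = 1 by push_cast; ring, ENNReal.rpow_one]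

theorem rpow_mul_rpow_mul_mul_inv_div_rpow {β : ℝ} (hβ : 0 ≤ 1 - β) {u J B : ℝ≥0∞} (hu0 : u ≠ 0)
    (hu : u ≠ ∞) (hJ0 : J ≠ 0) (hJ : J ≠ ∞) :
    u ^ β * (J ^ β * (B * (J / u)⁻¹) ^ (1 - β)) = B ^ (1 - β) * (u * J ^ (β - (1 - β))) := by
  rw [ENNReal.mul_rpow_of_nonneg _ _ hβ, ENNReal.inv_div (Or.inl hu) (Or.inl hu0),
    ENNReal.div_rpow_of_nonneg _ _ hβ, ENNReal.rpow_sub β (1 - β) hJ0 hJ, div_eq_mul_inv,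
    div_eq_mul_inv]
  have hpow : u ^ β * u ^ (1 - β) = u := by
    rw [← ENNReal.rpow_add _ _ hu0 hu, add_sub_cancel, ENNReal.rpow_one]
  nth_rewrite 3 [← hpow]
  ring

theorem exists_ofReal_rpow_mul_eq_rpow {n : ℝ} (hn : n ≠ 0) {u : ℝ≥0∞} (hu0 : u ≠ 0)
    (hu : u ≠ ∞) : ∃ δ : ℝ, 0 < δ ∧ ∀ e, ENNReal.ofReal (δ ^ (n * e)) = u ^ e := by
  refine ⟨u.toReal ^ (1 / n), Real.rpow_pos_of_pos (ENNReal.toReal_pos hu0 hu) _, fun e => ?_⟩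
  rw [← Real.rpow_mul ENNReal.toReal_nonneg, ← mul_assoc, one_div_mul_cancel hn, one_mul,
    ENNReal.toReal_rpow, ENNReal.ofReal_toReal (ENNReal.rpow_ne_top_of_ne_zero hu0 hu)]

theorem setLIntegral_indicator_le_mul_enorm_sub_rpow_closedBall_le {a : ℝ}
    (ha : a < Module.finrank ℝ V) {β : ℝ} (hβ : 0 ≤ β) (φ : V → ℝ≥0∞) {δ : ℝ} (hδ : 0 < δ)
    (x : V) :
    ∫⁻ y in (x - ·) ⁻¹' Metric.closedBall 0 δ, {y | φ y ≤ φ x}.indicator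
        (fun y => (φ x * φ y) ^ β * ‖x - y‖ₑ ^ (-a)) y ∂μ ≤
      (φ x * φ x) ^ β * (Module.finrank ℝ V * μ (Metric.ball 0 1) *
        ENNReal.ofReal (δ ^ (Module.finrank ℝ V - a) / (Module.finrank ℝ V - a))) := by
  rw [← setLIntegral_enorm_sub_rpow_closedBall μ ha hδ x,
    ← lintegral_const_mul _ (by fun_prop)]
  gcongr with y
  refine Set.indicator_apply_le' (fun hy => ?_) fun _ => zero_le
  gcongr
  exact hy

theorem lintegral_indicator_le_mul_enorm_sub_rpow_le {a : ℝ} (ha : 0 < a)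
    (ha' : a < Module.finrank ℝ V) {φ : V → ℝ≥0∞} (hφ : Measurable φ)
    (hφ0 : ∫⁻ y, φ y ∂μ ≠ 0) (hφi : ∫⁻ y, φ y ∂μ ≠ ∞) {x : V} (hx : φ x ≠ ∞) :
    ∫⁻ y, {y | φ y ≤ φ x}.indicator
        (fun y => (φ x * φ y) ^ (1 - a / (2 * Module.finrank ℝ V)) * ‖x - y‖ₑ ^ (-a)) y ∂μ ≤
      (Module.finrank ℝ V * μ (Metric.ball 0 1) / ENNReal.ofReal (Module.finrank ℝ V - a) +
          μ (Metric.ball 0 1) ^ (a / (2 * Module.finrank ℝ V))) *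
        (φ x * (∫⁻ y, φ y ∂μ) ^ (1 - a / Module.finrank ℝ V)) := by
  have hn : (0 : ℝ) < Module.finrank ℝ V := Nat.cast_pos.2 Module.finrank_pos
  have hβ : a / (2 * Module.finrank ℝ V) < 1 := by rw [div_lt_one (by positivity)]; linarith
  set β : ℝ := 1 - a / (2 * Module.finrank ℝ V) with hβ_def
  have hβ0 : 0 < β := by linarith
  have hβ1 : 1 - a / Module.finrank ℝ V = β - (1 - β) := by rw [hβ_def]; field_simp; ring
  have hβ2 : a / (2 * Module.finrank ℝ V) = 1 - β := by rw [hβ_def, _root_.sub_sub_cancel]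
  have hβ3 : 0 ≤ β - (1 - β) := by rw [← hβ1, sub_nonneg, div_le_one hn]; exact ha'.le
  rcases eq_or_ne (φ x) 0 with hx0 | hx0
  · simp [Set.indicator, hx0, ENNReal.zero_rpow_of_pos hβ0]
  set J := ∫⁻ y, φ y ∂μ
  -- The radius `δ = (J / φ x) ^ (1 / n)` is where the two regimes balance.
  obtain ⟨δ, hδ, hδpow⟩ := exists_ofReal_rpow_mul_eq_rpow hn.ne'
    (ENNReal.div_ne_zero.2 ⟨hφ0, hx⟩) (ENNReal.div_ne_top hφi hx0)
  have hball : MeasurableSet ((x - ·) ⁻¹' Metric.closedBall 0 δ) :=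
    measurableSet_closedBall.preimage (measurable_const_sub x)
  rw [← lintegral_add_compl _ hball, hβ1, hβ2, add_mul]
  refine add_le_add ?near ?far
  case near =>
    grw [setLIntegral_indicator_le_mul_enorm_sub_rpow_closedBall_le μ ha' hβ0.le φ hδ x]
    rw [ENNReal.ofReal_div_of_pos (by linarith), ← mul_self_rpow_mul_div_rpow hβ3 hx0 hx, ← hδpow,
      ← hβ1, mul_sub, mul_one, mul_div_cancel₀ _ hn.ne']
    simp only [div_eq_mul_inv]
    exact (by ring : _ = _).le
  case far =>
    calc _ ≤ ∫⁻ y in ((x - ·) ⁻¹' Metric.closedBall 0 δ)ᶜ,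
          φ x ^ β * (φ y ^ β * ‖x - y‖ₑ ^ (-a)) ∂μ := by
          gcongr with y
          refine Set.indicator_apply_le' (fun _ => le_of_eq ?_) fun _ => zero_le
          rw [ENNReal.mul_rpow_of_nonneg _ _ hβ0.le, mul_assoc]
      _ ≤ φ x ^ β * (J ^ β * (μ (Metric.ball 0 1) * (J / φ x)⁻¹) ^ (1 - β)) := by
          rw [lintegral_const_mul _ (by fun_prop), ← ENNReal.rpow_neg_one, ← hδpow, mul_neg_one,
            ← hβ2]
          gcongr
          exact setLIntegral_mul_enorm_sub_rpow_le μ ha ha' hφ hδ x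
      _ = _ := rpow_mul_rpow_mul_mul_inv_div_rpow (hβ2 ▸ by positivity) hx0 hx hφ0 hφi

theorem lintegral_lintegral_mul_enorm_sub_rpow_le {a : ℝ} (ha : 0 < a)
    (ha' : a < Module.finrank ℝ V) {φ : V → ℝ≥0∞} (hφ : Measurable φ) :
    ∫⁻ x, ∫⁻ y, (φ x * φ y) ^ (1 - a / (2 * Module.finrank ℝ V)) * ‖x - y‖ₑ ^ (-a) ∂μ ∂μ ≤
      2 * (Module.finrank ℝ V * μ (Metric.ball 0 1) / ENNReal.ofReal (Module.finrank ℝ V - a) +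
          μ (Metric.ball 0 1) ^ (a / (2 * Module.finrank ℝ V))) *
        (∫⁻ x, φ x ∂μ) ^ (2 - a / Module.finrank ℝ V) := by
  have hn : (0 : ℝ) < Module.finrank ℝ V := Nat.cast_pos.2 Module.finrank_pos
  have haβ : a / (2 * Module.finrank ℝ V) < 1 := by rw [div_lt_one (by positivity)]; linarith
  have haγ : a / Module.finrank ℝ V < 1 := by rwa [div_lt_one hn]
  rcases eq_or_ne (∫⁻ x, φ x ∂μ) 0 with hφ0 | hφ0
  · have hzero : ∀ᵐ x ∂μ, φ x = 0 := (lintegral_eq_zero_iff hφ).1 hφ0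
    refine le_of_eq_of_le (lintegral_eq_zero_of_ae_eq_zero ?_) zero_le
    filter_upwards [hzero] with x hx
    simp [hx, ENNReal.zero_rpow_of_pos (sub_pos.2 haβ)]
  rcases eq_or_ne (∫⁻ x, φ x ∂μ) ∞ with hφi | hφi
  · have hB : μ (Metric.ball 0 1) ≠ 0 := (Metric.measure_ball_pos μ 0 one_pos).ne'
    rw [hφi, ENNReal.top_rpow_of_pos (by linarith), ENNReal.mul_top]
    · exact le_top
    simp [hB, ENNReal.rpow_eq_zero_iff, measure_ball_lt_top.ne]
  set k : V → V → ℝ≥0∞ :=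
    fun x y => (φ x * φ y) ^ (1 - a / (2 * Module.finrank ℝ V)) * ‖x - y‖ₑ ^ (-a) with hk
  have hksymm (x y : V) : k x y = k y x := by
    simp only [hk, mul_comm (φ y), enorm_sub_rev y]
  set C := Module.finrank ℝ V * μ (Metric.ball 0 1) / ENNReal.ofReal (Module.finrank ℝ V - a) +
    μ (Metric.ball 0 1) ^ (a / (2 * Module.finrank ℝ V))
  have hkx : ∀ᵐ x ∂μ, ∫⁻ y, {y | φ y ≤ φ x}.indicator (k x) y ∂μ ≤
      C * (φ x * (∫⁻ y, φ y ∂μ) ^ (1 - a / Module.finrank ℝ V)) := by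
    filter_upwards [ae_lt_top hφ hφi] with x hx
    exact lintegral_indicator_le_mul_enorm_sub_rpow_le μ ha ha' hφ hφ0 hφi hx.ne
  calc ∫⁻ x, ∫⁻ y, k x y ∂μ ∂μ
      ≤ 2 * ∫⁻ x, ∫⁻ y, {y | φ y ≤ φ x}.indicator (k x) y ∂μ ∂μ :=
        lintegral_lintegral_le_two_mul_of_symm (by fun_prop) hksymm hφ
    _ ≤ 2 * ∫⁻ x, C * (φ x * (∫⁻ y, φ y ∂μ) ^ (1 - a / Module.finrank ℝ V)) ∂μ := by
        gcongr 1
        exact lintegral_mono_ae hkx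
    _ = _ := by
        rw [lintegral_const_mul _ (by fun_prop), lintegral_mul_const _ hφ, mul_assoc,
          show 2 - a / Module.finrank ℝ V = 1 + (1 - a / Module.finrank ℝ V) by ring,
          ENNReal.rpow_add _ _ hφ0 hφi, ENNReal.rpow_one]

end HardyLittlewoodSobolev

end Radial

section Layers

variable {X : Type*}

/-- The layer of `f` at height `t`: the direction of `f x` where `‖f x‖ > t`, and zero elsewhere, so
that `f = ∫₀^∞ layer f t dt`. -/
noncomputable def layer (f : X → ℂ) (t : ℝ) (x : X) : ℂ :=
  if t < ‖f x‖ then f x / ‖f x‖ else 0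

theorem enorm_layer (f : X → ℂ) {t : ℝ} (ht : 0 < t) (x : X) :
    ‖layer f t x‖ₑ = {x | t < ‖f x‖}.indicator 1 x := by
  by_cases h : t < ‖f x‖
  · rw [Set.indicator_of_mem (s := {x | t < ‖f x‖}) h, layer, if_pos h, ← ofReal_norm, norm_div,
      Complex.norm_real, norm_norm, div_self (ht.trans h).ne', ofReal_one, Pi.one_apply]
  · rw [Set.indicator_of_notMem (s := {x | t < ‖f x‖}) h, layer, if_neg h, enorm_zero]

theorem layer_eq_indicator (f : X → ℂ) (x : X) :
    (layer f · x) = (Set.Iio ‖f x‖).indicator fun _ => f x / ‖f x‖ := by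
  ext t
  simp only [layer, Set.indicator, Set.mem_Iio]

theorem integral_layer (f : X → ℂ) (x : X) : ∫ t in Set.Ioi (0 : ℝ), layer f t x = f x := by
  rw [layer_eq_indicator, setIntegral_indicator measurableSet_Iio, Set.Ioi_inter_Iio,
    setIntegral_const, Real.volume_real_Ioo, sub_zero, max_eq_left (norm_nonneg _),
    Complex.real_smul, mul_div_cancel_of_imp' fun h => by simpa using h]

theorem lintegral_enorm_layer (f : X → ℂ) (x : X) :
    ∫⁻ t in Set.Ioi (0 : ℝ), ‖layer f t x‖ₑ = ‖f x‖ₑ := by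
  have hind (t : ℝ) (ht : t ∈ Set.Ioi (0 : ℝ)) :
      ‖layer f t x‖ₑ = (Set.Iio ‖f x‖).indicator 1 t := enorm_layer f ht x
  rw [setLIntegral_congr_fun measurableSet_Ioi hind, setLIntegral_indicator measurableSet_Iio,
    Set.inter_comm, Set.Ioi_inter_Iio]
  simp

variable [MeasurableSpace X] {μ : Measure X}

theorem measurable_uncurry_layer {f : X → ℂ} (hf : Measurable f) :
    Measurable (Function.uncurry (layer f)) :=
  Measurable.ite (measurableSet_lt measurable_fst (hf.comp measurable_snd).norm)
    (by fun_prop) measurable_const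

theorem measurable_layer {f : X → ℂ} (hf : Measurable f) (t : ℝ) : Measurable (layer f t) :=
  (measurable_uncurry_layer hf).comp measurable_prodMk_left

theorem eLpNorm'_layer {f : X → ℂ} (hf : Measurable f) {t : ℝ} (ht : 0 < t) {q : ℝ} (hq : 0 < q) :
    eLpNorm' (layer f t) q μ = μ {x | t < ‖f x‖} ^ (1 / q) := by
  have hpow (x : X) : ‖layer f t x‖ₑ ^ q = {x | t < ‖f x‖}.indicator 1 x := by
    rw [enorm_layer f ht]
    by_cases h : t < ‖f x‖ <;> simp [h, hq]
  rw [eLpNorm', lintegral_congr hpow,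
    lintegral_indicator_one (measurableSet_lt measurable_const hf.norm)]

theorem integrable_layer {f : X → ℂ} (hf : Measurable f) (hfi : Integrable f μ) {t : ℝ}
    (ht : 0 < t) : Integrable (layer f t) μ := by
  refine ⟨(measurable_layer hf t).aestronglyMeasurable, ?_⟩
  rw [hasFiniteIntegral_iff_enorm, lintegral_congr (enorm_layer f ht),
    lintegral_indicator_one (measurableSet_lt measurable_const hf.norm)]
  exact lt_of_le_of_lt (measure_mono fun x (hx : t < ‖f x‖) => hx.le)
    (hfi.measure_norm_ge_lt_top ht)

theorem integrable_uncurry_layer [SFinite μ] {f : X → ℂ} (hf : Measurable f)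
    (hfi : Integrable f μ) :
    Integrable (Function.uncurry (layer f)) ((volume.restrict (Set.Ioi 0)).prod μ) := by
  refine ⟨(measurable_uncurry_layer hf).aestronglyMeasurable, ?_⟩
  rw [hasFiniteIntegral_iff_enorm, lintegral_prod_symm' _ (measurable_uncurry_layer hf).enorm]
  simpa only [Function.uncurry_apply_pair, lintegral_enorm_layer] using
    hasFiniteIntegral_iff_enorm.1 hfi.2

theorem enorm_integral_mul_le_lintegral_layer [SFinite μ] {f h : X → ℂ} (hf : Measurable f)
    (hfi : Integrable f μ) (hh : AEStronglyMeasurable h μ) {C : ℝ} (hC : ∀ x, ‖h x‖ ≤ C) :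
    ‖∫ x, f x * h x ∂μ‖ₑ ≤ ∫⁻ t in Set.Ioi (0 : ℝ), ‖∫ x, layer f t x * h x ∂μ‖ₑ := by
  have hint : Integrable (Function.uncurry fun t x => layer f t x * h x)
      ((volume.restrict (Set.Ioi 0)).prod μ) :=
    (integrable_uncurry_layer hf hfi).mul_bdd (c := C) hh.comp_snd (.of_forall fun q => hC q.2)
  have hlayer : ∫ x, f x * h x ∂μ = ∫ t in Set.Ioi (0 : ℝ), ∫ x, layer f t x * h x ∂μ := by
    rw [integral_integral_swap hint]
    simp_rw [integral_mul_const, integral_layer]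
  rw [hlayer]
  exact enorm_integral_le_lintegral_enorm _

theorem lintegral_measure_norm_gt_mul_rpow_le {f : X → ℂ} (hf : Measurable f) {s : ℝ}
    (hs : 1 ≤ s) :
    ∫⁻ t in Set.Ioi (0 : ℝ), μ {x | t < ‖f x‖} * ENNReal.ofReal (t ^ (s - 1)) ≤
      eLpNorm' f s μ ^ s := by
  have hs0 : 0 < s := by linarith
  rw [← lintegral_rpow_enorm_eq_rpow_eLpNorm' hs0]
  calc ∫⁻ t in Set.Ioi (0 : ℝ), μ {x | t < ‖f x‖} * ENNReal.ofReal (t ^ (s - 1))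
      ≤ ENNReal.ofReal s *
          ∫⁻ t in Set.Ioi (0 : ℝ), μ {x | t < ‖f x‖} * ENNReal.ofReal (t ^ (s - 1)) :=
        le_mul_of_one_le_left' (ENNReal.one_le_ofReal.2 hs)
    _ = ∫⁻ x, ENNReal.ofReal (‖f x‖ ^ s) ∂μ :=
        (lintegral_rpow_eq_lintegral_meas_lt_mul μ (.of_forall fun x => norm_nonneg (f x))
          hf.norm.aemeasurable hs0).symm
    _ = ∫⁻ x, ‖f x‖ₑ ^ s ∂μ := by
        simp_rw [← ENNReal.ofReal_rpow_of_nonneg (norm_nonneg _) hs0.le, ofReal_norm]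

end Layers

section RealInterpolation

theorem rpow_half_mul_le {u v a b : ℝ≥0∞} (hab : a * b = 1) :
    (u * v) ^ (1 / 2 : ℝ) ≤ u * a + v * b := by
  calc (u * v) ^ (1 / 2 : ℝ) = ((u * a) * (v * b)) ^ (1 / 2 : ℝ) := by
        rw [mul_mul_mul_comm, hab, mul_one]
    _ ≤ ((u * a + v * b) ^ 2) ^ (1 / 2 : ℝ) := by
        rw [sq]
        gcongr
        · exact le_self_add
        · exact le_add_self
    _ = u * a + v * b := by
        rw [← ENNReal.rpow_natCast, ← ENNReal.rpow_mul]
        norm_num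

/-- The mass `F t (t / t')^{s/2}` carried by a layer of height `t` against a layer of height `t'`,
restricted to the region `t t' ≤ c` where the `L²` bound is used. -/
noncomputable def lowPart (s c : ℝ) (F : ℝ → ℝ≥0∞) (t t' : ℝ) : ℝ≥0∞ :=
  (Set.Iic (c / t)).indicator (fun t' => F t * ENNReal.ofReal (t ^ (s / 2) * t' ^ (-(s / 2)))) t'

theorem measurable_uncurry_lowPart (s c : ℝ) {F : ℝ → ℝ≥0∞} (hF : Measurable F) :
    Measurable (Function.uncurry (lowPart s c F)) :=
  Measurable.ite (measurableSet_le measurable_snd (measurable_const.div measurable_fst))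
    (by fun_prop) measurable_const

theorem setLIntegral_setLIntegral_lowPart {s c : ℝ} (hs : s < 2) (hc : 0 < c) (F : ℝ → ℝ≥0∞) :
    ∫⁻ t in Set.Ioi 0, ∫⁻ t' in Set.Ioi 0, lowPart s c F t t' =
      ENNReal.ofReal (c ^ (1 - s / 2) / (1 - s / 2)) *
        ∫⁻ t in Set.Ioi 0, F t * ENNReal.ofReal (t ^ (s - 1)) := by
  have hs2 : 0 < 1 - s / 2 := by linarith
  rw [← lintegral_const_mul' _ _ ofReal_ne_top]
  refine setLIntegral_congr_fun measurableSet_Ioi fun t (ht : 0 < t) => ?_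
  have hct : 0 ≤ c / t := by positivity
  have hpow : ∫⁻ t' in Set.Ioc 0 (c / t), ENNReal.ofReal (t' ^ (-(s / 2))) =
      ENNReal.ofReal ((c / t) ^ (1 - s / 2) / (1 - s / 2)) := by
    rw [← ofReal_integral_eq_lintegral_ofReal, ← intervalIntegral.integral_of_le hct,
      integral_rpow (Or.inl (by linarith)), neg_add_eq_sub, Real.zero_rpow hs2.ne', sub_zero]
    · rw [← IntegrableOn, ← intervalIntegrable_iff_integrableOn_Ioc_of_le hct]
      exact intervalIntegral.intervalIntegrable_rpow' (by linarith)
    · filter_upwards [ae_restrict_mem measurableSet_Ioc] with t' ht'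
      exact Real.rpow_nonneg ht'.1.le _
  have hscale : t ^ (s / 2) * (c / t) ^ (1 - s / 2) = c ^ (1 - s / 2) * t ^ (s - 1) := by
    rw [Real.div_rpow hc.le ht.le, mul_div_left_comm, ← Real.rpow_sub ht]
    ring_nf
  calc ∫⁻ t' in Set.Ioi 0, lowPart s c F t t'
      = ∫⁻ t' in Set.Ioc 0 (c / t),
          F t * ENNReal.ofReal (t ^ (s / 2)) * ENNReal.ofReal (t' ^ (-(s / 2))) := by
        simp_rw [lowPart, ENNReal.ofReal_mul (Real.rpow_nonneg ht.le _), ← mul_assoc]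
        rw [setLIntegral_indicator measurableSet_Iic, Set.inter_comm, Set.Ioi_inter_Iic]
    _ = _ := by
        rw [lintegral_const_mul _ (by fun_prop), hpow, mul_assoc,
          ← ENNReal.ofReal_mul (by positivity), ← mul_div_assoc, hscale, mul_div_right_comm,
          ENNReal.ofReal_mul (by positivity)]
        ring

theorem le_add_lowPart_add_lowPart {s c A t t' : ℝ} (hs : 1 ≤ s) (hc : 0 < c) (hA : 0 ≤ A)
    {M : ℝ≥0∞} (ht : 0 < t) (ht' : 0 < t') {F G : ℝ → ℝ≥0∞} {P : ℝ≥0∞}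
    (hPA : P ≤ ENNReal.ofReal A * (F t * G t')) (hPM : P ≤ M * (F t * G t') ^ (1 / 2 : ℝ)) :
    P ≤ ENNReal.ofReal (A * c ^ (1 - s)) *
        ((F t * ENNReal.ofReal (t ^ (s - 1))) * (G t' * ENNReal.ofReal (t' ^ (s - 1)))) +
      M * (lowPart s c F t t' + lowPart s c G t' t) := by
  by_cases h : t * t' ≤ c
  · have ht'c : t' ∈ Set.Iic (c / t) := by rw [Set.mem_Iic, le_div_iff₀ ht]; linarith
    have htc : t ∈ Set.Iic (c / t') := by rw [Set.mem_Iic, le_div_iff₀ ht']; linarith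
    have hinv : ENNReal.ofReal (t ^ (s / 2) * t' ^ (-(s / 2))) *
        ENNReal.ofReal (t' ^ (s / 2) * t ^ (-(s / 2))) = 1 := by
      rw [← ENNReal.ofReal_mul (by positivity), Real.rpow_neg ht.le, Real.rpow_neg ht'.le,
        ← ofReal_one]
      congr 1
      field_simp
    refine (hPM.trans ?_).trans le_add_self
    rw [lowPart, lowPart, Set.indicator_of_mem ht'c, Set.indicator_of_mem htc]
    gcongr
    exact rpow_half_mul_le hinv
  · have hone : 1 ≤ c ^ (1 - s) * (t ^ (s - 1) * t' ^ (s - 1)) := by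
      rw [← Real.mul_rpow ht.le ht'.le, ← neg_sub s 1, Real.rpow_neg hc.le, inv_mul_eq_div,
        one_le_div (by positivity)]
      exact Real.rpow_le_rpow hc.le (not_le.1 h).le (by linarith)
    refine (hPA.trans ?_).trans le_self_add
    calc ENNReal.ofReal A * (F t * G t')
        ≤ ENNReal.ofReal (A * (c ^ (1 - s) * (t ^ (s - 1) * t' ^ (s - 1)))) * (F t * G t') := by
          gcongr
          exact le_mul_of_one_le_right hA hone
      _ = _ := by
          rw [← mul_assoc A, ENNReal.ofReal_mul (by positivity),
            ENNReal.ofReal_mul (p := t ^ (s - 1)) (by positivity)]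
          ring

theorem setLIntegral_setLIntegral_le_add_of_le_mul_of_le_rpow_half {s c A : ℝ} (hs1 : 1 ≤ s)
    (hs2 : s < 2) (hc : 0 < c) (hA : 0 ≤ A) {M : ℝ≥0∞} {F G : ℝ → ℝ≥0∞} (hF : Measurable F)
    (hG : Measurable G)
    (hFs : ∫⁻ t in Set.Ioi 0, F t * ENNReal.ofReal (t ^ (s - 1)) ≤ 1)
    (hGs : ∫⁻ t in Set.Ioi 0, G t * ENNReal.ofReal (t ^ (s - 1)) ≤ 1) {P : ℝ → ℝ → ℝ≥0∞}
    (hPA : ∀ t t', 0 < t → 0 < t' → P t t' ≤ ENNReal.ofReal A * (F t * G t'))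
    (hPM : ∀ t t', 0 < t → 0 < t' → P t t' ≤ M * (F t * G t') ^ (1 / 2 : ℝ)) :
    ∫⁻ t in Set.Ioi 0, ∫⁻ t' in Set.Ioi 0, P t t' ≤
      ENNReal.ofReal (A * c ^ (1 - s)) +
        2 * M * ENNReal.ofReal (c ^ (1 - s / 2) / (1 - s / 2)) := by
  have hlowG : Measurable (Function.uncurry fun t t' => lowPart s c G t' t) :=
    (measurable_uncurry_lowPart s c hG).comp measurable_swap
  have hlowF := measurable_uncurry_lowPart s c hF
  have hlow (F : ℝ → ℝ≥0∞) (hFs : ∫⁻ t in Set.Ioi 0, F t * ENNReal.ofReal (t ^ (s - 1)) ≤ 1) :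
      ∫⁻ t in Set.Ioi 0, ∫⁻ t' in Set.Ioi 0, lowPart s c F t t' ≤
        ENNReal.ofReal (c ^ (1 - s / 2) / (1 - s / 2)) := by
    rw [setLIntegral_setLIntegral_lowPart hs2 hc]
    exact mul_le_of_le_one_right' hFs
  set Q : ℝ → ℝ → ℝ≥0∞ := fun t t' => ENNReal.ofReal (A * c ^ (1 - s)) *
    ((F t * ENNReal.ofReal (t ^ (s - 1))) * (G t' * ENNReal.ofReal (t' ^ (s - 1)))) with hQ
  have hQm : Measurable (Function.uncurry Q) := by
    simp only [hQ, Function.uncurry_def]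
    fun_prop
  have hQint :
      ∫⁻ t in Set.Ioi 0, ∫⁻ t' in Set.Ioi 0, Q t t' ≤ ENNReal.ofReal (A * c ^ (1 - s)) := by
    simp_rw [hQ, lintegral_const_mul' _ _ ofReal_ne_top]
    rw [lintegral_lintegral_mul (by fun_prop) (by fun_prop)]
    exact mul_le_of_le_one_right' (mul_le_one' hFs hGs)
  calc ∫⁻ t in Set.Ioi 0, ∫⁻ t' in Set.Ioi 0, P t t'
      ≤ ∫⁻ t in Set.Ioi 0, ∫⁻ t' in Set.Ioi 0,
          (Q t t' + M * (lowPart s c F t t' + lowPart s c G t' t)) :=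
        setLIntegral_mono' measurableSet_Ioi fun t ht => setLIntegral_mono' measurableSet_Ioi
          fun t' ht' => le_add_lowPart_add_lowPart hs1 hc hA ht ht' (hPA t t' ht ht')
            (hPM t t' ht ht')
    _ = (∫⁻ t in Set.Ioi 0, ∫⁻ t' in Set.Ioi 0, Q t t') +
          M * ((∫⁻ t in Set.Ioi 0, ∫⁻ t' in Set.Ioi 0, lowPart s c F t t') +
            ∫⁻ t in Set.Ioi 0, ∫⁻ t' in Set.Ioi 0, lowPart s c G t' t) := by
        rw [lintegral_lintegral_add_left hQm,
          lintegral_lintegral_const_mul M (hlowF.add hlowG), lintegral_lintegral_add_left hlowF]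
    _ ≤ _ := by
        rw [mul_comm 2 M, mul_assoc, two_mul]
        gcongr
        · exact hlow F hFs
        · rw [lintegral_lintegral_swap hlowG.aemeasurable]
          exact hlow G hGs

theorem setLIntegral_setLIntegral_le_of_le_mul_of_le_rpow_half {s A : ℝ} (hs1 : 1 ≤ s)
    (hs2 : s < 2) (hA : 0 < A) {M : ℝ≥0∞} {F G : ℝ → ℝ≥0∞} (hF : Measurable F)
    (hG : Measurable G)
    (hFs : ∫⁻ t in Set.Ioi 0, F t * ENNReal.ofReal (t ^ (s - 1)) ≤ 1)
    (hGs : ∫⁻ t in Set.Ioi 0, G t * ENNReal.ofReal (t ^ (s - 1)) ≤ 1) {P : ℝ → ℝ → ℝ≥0∞}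
    (hPA : ∀ t t', 0 < t → 0 < t' → P t t' ≤ ENNReal.ofReal A * (F t * G t'))
    (hPM : ∀ t t', 0 < t → 0 < t' → P t t' ≤ M * (F t * G t') ^ (1 / 2 : ℝ)) :
    ∫⁻ t in Set.Ioi 0, ∫⁻ t' in Set.Ioi 0, P t t' ≤
      (1 + 2 * M / ENNReal.ofReal (1 - s / 2)) * ENNReal.ofReal (A ^ (2 / s - 1)) := by
  -- The two regimes balance when the heights are split at this product.
  set c : ℝ := A ^ (2 / s) with hc_def
  have hcA : A * c ^ (1 - s) = A ^ (2 / s - 1) := by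
    rw [hc_def, ← Real.rpow_mul hA.le]
    nth_rewrite 1 [← Real.rpow_one A]
    rw [← Real.rpow_add hA]
    congr 1
    field_simp
    ring
  have hcM : c ^ (1 - s / 2) = A ^ (2 / s - 1) := by
    rw [hc_def, ← Real.rpow_mul hA.le]
    congr 1
    field_simp
  refine (setLIntegral_setLIntegral_le_add_of_le_mul_of_le_rpow_half (c := c) hs1 hs2
    (by positivity) hA.le hF hG hFs hGs hPA hPM).trans_eq ?_
  rw [hcA, hcM, ENNReal.ofReal_div_of_pos (by linarith)]
  simp only [div_eq_mul_inv]
  ring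

end RealInterpolation

section KernelForm

variable {X Y : Type*} [MeasurableSpace X] [MeasurableSpace Y] {μ : Measure X} {ν : Measure Y}

/-- The bilinear form `∬ f(x) K(x, y) g(y) dμ(x) dν(y)` with integral kernel `K`. -/
noncomputable def kernelForm (K : X → Y → ℂ) (μ : Measure X) (ν : Measure Y) (f : X → ℂ)
    (g : Y → ℂ) : ℂ :=
  ∫ x, f x * ∫ y, g y * K x y ∂ν ∂μ

variable {K : X → Y → ℂ} {A : ℝ}

theorem norm_integral_mul_le_of_norm_le {h : X → ℂ} {C : ℝ} (hC : ∀ x, ‖h x‖ ≤ C) {f : X → ℂ}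
    (hf : Integrable f μ) : ‖∫ x, f x * h x ∂μ‖ ≤ (∫ x, ‖f x‖ ∂μ) * C := by
  rw [← integral_mul_const]
  refine norm_integral_le_of_norm_le (hf.norm.mul_const C) (.of_forall fun x => ?_)
  rw [norm_mul]
  gcongr
  exact hC x

theorem kernelForm_swap [SFinite μ] [SFinite ν] (hK : Measurable (Function.uncurry K))
    (hKA : ∀ x y, ‖K x y‖ ≤ A) {f : X → ℂ} {g : Y → ℂ} (hf : Integrable f μ)
    (hg : Integrable g ν) : kernelForm K μ ν f g = kernelForm (fun y x => K x y) ν μ g f := by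
  have hint : Integrable (Function.uncurry fun x y => f x * (g y * K x y)) (μ.prod ν) := by
    have := (hf.mul_prod hg).mul_bdd (c := A) hK.aestronglyMeasurable
      (.of_forall fun q => hKA q.1 q.2)
    simpa only [Function.uncurry_def, mul_assoc] using this
  simp_rw [kernelForm, ← integral_const_mul]
  rw [integral_integral_swap hint]
  simp_rw [mul_left_comm]

theorem kernelForm_const_smul (a b : ℂ) (f : X → ℂ) (g : Y → ℂ) :
    kernelForm K μ ν (a • f) (b • g) = a * b * kernelForm K μ ν f g := by
  simp only [kernelForm, Pi.smul_apply, smul_eq_mul, mul_assoc, integral_const_mul]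
  simp_rw [mul_left_comm _ b, integral_const_mul]
  ring

theorem enorm_kernelForm_le_mul_eLpNorm'_one (hKA : ∀ x y, ‖K x y‖ ≤ A) {f : X → ℂ}
    (hf : Measurable f) (g : Y → ℂ) :
    ‖kernelForm K μ ν f g‖ₑ ≤ ENNReal.ofReal A * (eLpNorm' f 1 μ * eLpNorm' g 1 ν) := by
  have hK (x : X) : ‖∫ y, g y * K x y ∂ν‖ₑ ≤ ENNReal.ofReal A * ∫⁻ y, ‖g y‖ₑ ∂ν := by
    rw [← lintegral_const_mul' _ _ ofReal_ne_top]
    refine (enorm_integral_le_lintegral_enorm _).trans (lintegral_mono fun y => ?_)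
    rw [enorm_mul, mul_comm, ← ofReal_norm (K x y)]
    gcongr
    exact hKA x y
  calc ‖kernelForm K μ ν f g‖ₑ
      ≤ ∫⁻ x, ‖f x‖ₑ * (ENNReal.ofReal A * ∫⁻ y, ‖g y‖ₑ ∂ν) ∂μ := by
        refine (enorm_integral_le_lintegral_enorm _).trans (lintegral_mono fun x => ?_)
        rw [enorm_mul]
        gcongr
        exact hK x
    _ = ENNReal.ofReal A * (eLpNorm' f 1 μ * eLpNorm' g 1 ν) := by
        rw [lintegral_mul_const _ hf.enorm]
        simp only [eLpNorm', ENNReal.rpow_one, div_one]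
        ring

theorem enorm_kernelForm_le_lintegral_layer [SFinite μ] [SFinite ν]
    (hK : Measurable (Function.uncurry K)) (hKA : ∀ x y, ‖K x y‖ ≤ A) {f : X → ℂ} {g : Y → ℂ}
    (hf : Measurable f) (hfi : Integrable f μ) (hg : Measurable g) (hgi : Integrable g ν) :
    ‖kernelForm K μ ν f g‖ₑ ≤ ∫⁻ t in Set.Ioi (0 : ℝ), ∫⁻ t' in Set.Ioi (0 : ℝ),
      ‖kernelForm K μ ν (layer f t) (layer g t')‖ₑ := by
  have hgK : Measurable fun x => ∫ y, g y * K x y ∂ν :=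
    (((hg.comp measurable_snd).mul hK).stronglyMeasurable.integral_prod_right').measurable
  have hlK (t : ℝ) : Measurable fun y => ∫ x, layer f t x * K x y ∂μ :=
    ((((measurable_layer hf t).comp measurable_fst).mul
      hK).stronglyMeasurable.integral_prod_left').measurable
  refine (enorm_integral_mul_le_lintegral_layer hf hfi hgK.aestronglyMeasurable fun x =>
    norm_integral_mul_le_of_norm_le (hKA x) hgi).trans ?_
  refine setLIntegral_mono' measurableSet_Ioi fun t (ht : 0 < t) => ?_
  have hft := integrable_layer hf hfi ht
  calc ‖kernelForm K μ ν (layer f t) g‖ₑ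
      = ‖kernelForm (fun y x => K x y) ν μ g (layer f t)‖ₑ := by
        rw [kernelForm_swap hK hKA hft hgi]
    _ ≤ ∫⁻ t' in Set.Ioi (0 : ℝ),
          ‖kernelForm (fun y x => K x y) ν μ (layer g t') (layer f t)‖ₑ :=
        enorm_integral_mul_le_lintegral_layer hg hgi (hlK t).aestronglyMeasurable fun y =>
          norm_integral_mul_le_of_norm_le (hKA · y) hft
    _ = _ := setLIntegral_congr_fun measurableSet_Ioi fun t' ht' => by
        rw [kernelForm_swap hK hKA hft (integrable_layer hg hgi ht')]

theorem enorm_kernelForm_le_of_eLpNorm'_le_one [SFinite μ] [SFinite ν] {s : ℝ} (hs1 : 1 ≤ s)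
    (hs2 : s < 2) (hA : 0 < A) {M : ℝ≥0∞} (hK : Measurable (Function.uncurry K))
    (hKA : ∀ x y, ‖K x y‖ ≤ A)
    (hKM : ∀ f g, Measurable f → Integrable f μ → Measurable g → Integrable g ν →
      ‖kernelForm K μ ν f g‖ₑ ≤ M * (eLpNorm' f 2 μ * eLpNorm' g 2 ν)) {f : X → ℂ} {g : Y → ℂ}
    (hf : Measurable f) (hfi : Integrable f μ) (hfs : eLpNorm' f s μ ≤ 1) (hg : Measurable g)
    (hgi : Integrable g ν) (hgs : eLpNorm' g s ν ≤ 1) :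
    ‖kernelForm K μ ν f g‖ₑ ≤
      (1 + 2 * M / ENNReal.ofReal (1 - s / 2)) * ENNReal.ofReal (A ^ (2 / s - 1)) := by
  have hs0 : 0 ≤ s := by linarith
  refine (enorm_kernelForm_le_lintegral_layer hK hKA hf hfi hg hgi).trans ?_
  refine setLIntegral_setLIntegral_le_of_le_mul_of_le_rpow_half hs1 hs2 hA
    (F := fun t => μ {x | t < ‖f x‖}) (G := fun t => ν {y | t < ‖g y‖})
    (Antitone.measurable fun a b hab => measure_mono fun x hx => hab.trans_lt hx)
    (Antitone.measurable fun a b hab => measure_mono fun x hx => hab.trans_lt hx)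
    ((lintegral_measure_norm_gt_mul_rpow_le hf hs1).trans (ENNReal.rpow_le_one hfs hs0))
    ((lintegral_measure_norm_gt_mul_rpow_le hg hs1).trans (ENNReal.rpow_le_one hgs hs0)) ?_ ?_
  · intro t t' ht ht'
    simpa only [eLpNorm'_layer hf ht one_pos, eLpNorm'_layer hg ht' one_pos, div_one,
      ENNReal.rpow_one] using
        enorm_kernelForm_le_mul_eLpNorm'_one hKA (measurable_layer hf t) (layer g t')
  · intro t t' ht ht'
    rw [ENNReal.mul_rpow_of_nonneg _ _ (by norm_num), ← eLpNorm'_layer hf ht two_pos,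
      ← eLpNorm'_layer hg ht' two_pos]
    exact hKM _ _ (measurable_layer hf t) (integrable_layer hf hfi ht) (measurable_layer hg t')
      (integrable_layer hg hgi ht')

theorem enorm_kernelForm_le_mul_eLpNorm' [SFinite μ] [SFinite ν] {s : ℝ} (hs1 : 1 ≤ s)
    (hs2 : s < 2) (hA : 0 < A) {M : ℝ≥0∞} (hK : Measurable (Function.uncurry K))
    (hKA : ∀ x y, ‖K x y‖ ≤ A)
    (hKM : ∀ f g, Measurable f → Integrable f μ → Measurable g → Integrable g ν →
      ‖kernelForm K μ ν f g‖ₑ ≤ M * (eLpNorm' f 2 μ * eLpNorm' g 2 ν)) {f : X → ℂ} {g : Y → ℂ}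
    (hf : Measurable f) (hfi : Integrable f μ) (hg : Measurable g) (hgi : Integrable g ν) :
    ‖kernelForm K μ ν f g‖ₑ ≤
      (1 + 2 * M / ENNReal.ofReal (1 - s / 2)) * ENNReal.ofReal (A ^ (2 / s - 1)) *
        (eLpNorm' f s μ * eLpNorm' g s ν) := by
  have hs0 : 0 < s := by linarith
  have hconst : (1 + 2 * M / ENNReal.ofReal (1 - s / 2)) * ENNReal.ofReal (A ^ (2 / s - 1)) ≠ 0 :=
    mul_ne_zero (by simp) (by simpa using Real.rpow_pos_of_pos hA _)
  rcases eq_or_ne (eLpNorm' f s μ) 0 with hf0 | hf0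
  · have hae := (eLpNorm'_eq_zero_iff hs0 hf.aestronglyMeasurable).1 hf0
    have : kernelForm K μ ν f g = 0 := integral_eq_zero_of_ae <| by
      filter_upwards [hae] with x hx
      simp [hx]
    simp [this]
  rcases eq_or_ne (eLpNorm' g s ν) 0 with hg0 | hg0
  · have hae := (eLpNorm'_eq_zero_iff hs0 hg.aestronglyMeasurable).1 hg0
    have (x : X) : ∫ y, g y * K x y ∂ν = 0 := integral_eq_zero_of_ae <| by
      filter_upwards [hae] with y hy
      simp [hy]
    simp [kernelForm, this]
  rcases eq_or_ne (eLpNorm' f s μ) ⊤ with hf1 | hf1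
  · simp [hf1, hg0, ENNReal.mul_top hconst]
  rcases eq_or_ne (eLpNorm' g s ν) ⊤ with hg1 | hg1
  · simp [hg1, hf0, ENNReal.mul_top hconst]
  have hscale {N : ℝ≥0∞} (h0 : N ≠ 0) (h1 : N ≠ ⊤) : ‖((N.toReal⁻¹ : ℝ) : ℂ)‖ₑ = N⁻¹ := by
    rw [← ofReal_norm, Complex.norm_real, Real.norm_of_nonneg (by positivity),
      ENNReal.ofReal_inv_of_pos (ENNReal.toReal_pos h0 h1), ENNReal.ofReal_toReal h1]
  set a : ℂ := (((eLpNorm' f s μ).toReal⁻¹ : ℝ) : ℂ)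
  set b : ℂ := (((eLpNorm' g s ν).toReal⁻¹ : ℝ) : ℂ)
  have hnormalized := enorm_kernelForm_le_of_eLpNorm'_le_one hs1 hs2 hA hK hKA hKM
    (hf.const_smul a) (hfi.smul a)
    (by rw [eLpNorm'_const_smul _ hs0, hscale hf0 hf1, ENNReal.inv_mul_cancel hf0 hf1])
    (hg.const_smul b) (hgi.smul b)
    (by rw [eLpNorm'_const_smul _ hs0, hscale hg0 hg1, ENNReal.inv_mul_cancel hg0 hg1])
  rw [kernelForm_const_smul, enorm_mul, enorm_mul, hscale hf0 hf1, hscale hg0 hg1,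
    ← ENNReal.mul_inv (.inl hf0) (.inl hf1), mul_comm, ← div_eq_mul_inv] at hnormalized
  exact (ENNReal.div_le_iff (mul_ne_zero hf0 hg0) (ENNReal.mul_ne_top hf1 hg1)).1 hnormalized

end KernelForm

section PlaneWave

variable {V : Type*} [NormedAddCommGroup V] [InnerProductSpace ℝ V]

/-- The character `κ ↦ e^{i x·κ}`. -/
noncomputable def planeWave (x κ : V) : ℂ := Complex.exp (Complex.I * (⟪x, κ⟫ : ℂ))

theorem norm_planeWave (x κ : V) : ‖planeWave x κ‖ = 1 := by
  rw [planeWave, mul_comm, Complex.norm_exp_ofReal_mul_I]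

@[fun_prop]
theorem continuous_planeWave {X : Type*} [TopologicalSpace X] {f g : X → V} (hf : Continuous f)
    (hg : Continuous g) : Continuous fun x => planeWave (f x) (g x) := by
  unfold planeWave
  fun_prop

theorem planeWave_mul_conj_planeWave (x y κ : V) :
    planeWave x κ * starRingEnd ℂ (planeWave y κ) = planeWave (x - y) κ := by
  simp only [planeWave, ← Complex.exp_conj, ← Complex.exp_add, inner_sub_left, map_mul,
    Complex.conj_I, Complex.conj_ofReal]
  push_cast
  ring_nf

/-- The radial profile `ρ ↦ e^{-Lρ²/2 + iτρ}` of the symbol of the half-wave propagator at time `τ`,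
damped by a Gaussian at frequencies larger than `L^{-1/2}`. -/
noncomputable def gaussWave (L τ ρ : ℝ) : ℂ :=
  Complex.exp (-(L / 2) * ρ ^ 2 + Complex.I * τ * ρ)

theorem norm_gaussWave (L τ ρ : ℝ) : ‖gaussWave L τ ρ‖ = Real.exp (-(L / 2) * ρ ^ 2) := by
  rw [gaussWave, Complex.norm_exp]
  simp [← Complex.ofReal_pow]

@[fun_prop]
theorem continuous_gaussWave (L : ℝ) {X : Type*} [TopologicalSpace X] {f g : X → ℝ}
    (hf : Continuous f) (hg : Continuous g) : Continuous fun x => gaussWave L (f x) (g x) := by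
  unfold gaussWave
  fun_prop

theorem gaussWave_mul_conj_gaussWave (L L' t t' ρ : ℝ) :
    gaussWave L t ρ * starRingEnd ℂ (gaussWave L' t' ρ) = gaussWave (L + L') (t - t') ρ := by
  simp only [gaussWave, ← Complex.exp_conj, ← Complex.exp_add, map_add, map_mul, map_neg, map_div₀,
    map_pow, map_ofNat, Complex.conj_I, Complex.conj_ofReal]
  push_cast
  ring_nf

theorem hasDerivAt_gaussWave (L τ ρ : ℝ) :
    HasDerivAt (gaussWave L τ) ((-L * ρ + Complex.I * τ) * gaussWave L τ ρ) ρ := by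
  have hρ : HasDerivAt (fun ρ : ℝ => (ρ : ℂ)) 1 ρ := Complex.ofRealCLM.hasDerivAt
  refine (((hρ.fun_pow 2).const_mul (-(L / 2 : ℂ))).fun_add
    (hρ.const_mul (Complex.I * τ))).cexp.congr_deriv ?_
  rw [gaussWave]
  push_cast
  ring

theorem gaussWave_mul_left (L τ ρ : ℝ) {R : ℝ} (hR : R ≠ 0) :
    gaussWave L (τ / R) (R * ρ) = gaussWave (R ^ 2 * L) τ ρ := by
  have : (R : ℂ) ≠ 0 := by exact_mod_cast hR
  rw [gaussWave, gaussWave]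
  congr 1
  push_cast
  field_simp

variable [FiniteDimensional ℝ V] [MeasurableSpace V] [BorelSpace V]

theorem integrable_exp_neg_mul_norm_sq {b : ℝ} (hb : 0 < b) :
    Integrable fun κ : V => Real.exp (-b * ‖κ‖ ^ 2) := by
  simpa [Complex.norm_exp, ← Complex.ofReal_pow] using
    (GaussianFourier.integrable_cexp_neg_mul_sq_norm_add (b := (b : ℂ)) (by simpa using hb) 0
      (0 : V)).norm

theorem integrable_gaussWave_norm {L : ℝ} (hL : 0 < L) (τ : ℝ) :
    Integrable fun κ : V => gaussWave L τ ‖κ‖ := by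
  have hcont : Continuous fun κ : V => gaussWave L τ ‖κ‖ := by fun_prop
  rw [← integrable_norm_iff hcont.aestronglyMeasurable]
  simpa only [norm_gaussWave] using integrable_exp_neg_mul_norm_sq (half_pos hL)

end PlaneWave

section Dispersive

theorem integral_comp_sqrt_add_sq (g : ℝ → ℂ) (k : ℝ) :
    ∫ s in Set.Ioi (0 : ℝ), s • g √(k ^ 2 + s ^ 2) = ∫ ρ in Set.Ioi |k|, ρ • g ρ := by
  have hpos {s : ℝ} (hs : s ∈ Set.Ioi (0 : ℝ)) : 0 < k ^ 2 + s ^ 2 := by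
    have : 0 < s := hs
    positivity
  have himage : (fun s => √(k ^ 2 + s ^ 2)) '' Set.Ioi 0 = Set.Ioi |k| := by
    ext ρ
    constructor
    · rintro ⟨s, hs, rfl⟩
      rw [Set.mem_Ioi, ← Real.sqrt_sq_eq_abs]
      exact Real.sqrt_lt_sqrt (sq_nonneg k) (by have : 0 < s := hs; nlinarith)
    · intro (hρ : |k| < ρ)
      have hkρ : k ^ 2 < ρ ^ 2 :=
        sq_lt_sq' (by linarith [neg_abs_le k]) (by linarith [le_abs_self k])
      refine ⟨√(ρ ^ 2 - k ^ 2), Real.sqrt_pos.2 (by linarith), ?_⟩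
      simp only
      rw [Real.sq_sqrt (by linarith), add_sub_cancel, Real.sqrt_sq ((abs_nonneg k).trans hρ.le)]
  have hderiv (s : ℝ) (hs : s ∈ Set.Ioi (0 : ℝ)) :
      HasDerivWithinAt (fun s => √(k ^ 2 + s ^ 2)) (s / √(k ^ 2 + s ^ 2)) (Set.Ioi 0) s := by
    refine (((hasDerivAt_pow 2 s).const_add (k ^ 2)).sqrt
      (hpos hs).ne').hasDerivWithinAt.congr_deriv ?_
    norm_num [mul_div_mul_left]
  have hinj : Set.InjOn (fun s => √(k ^ 2 + s ^ 2)) (Set.Ioi 0) := by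
    intro s hs s' hs' h
    have := (Real.sqrt_inj (hpos hs).le (hpos hs').le).1 h
    exact (sq_eq_sq₀ (le_of_lt hs) (le_of_lt hs')).1 (by linarith)
  rw [← himage, integral_image_eq_integral_abs_deriv_smul measurableSet_Ioi hderiv hinj]
  refine setIntegral_congr_fun measurableSet_Ioi fun s (hs : 0 < s) => ?_
  have := Real.sqrt_pos.2 (hpos hs)
  rw [abs_of_pos (by positivity), smul_smul, div_mul_cancel₀ _ this.ne']

theorem integral_prod_comp_sqrt_add_sq (g : ℝ → ℂ) (k : ℝ) :
    ∫ y : ℝ × ℝ, g √(k ^ 2 + (y.1 ^ 2 + y.2 ^ 2)) =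
      2 * Real.pi * ∫ ρ in Set.Ioi |k|, ρ * g ρ := by
  have hsq (q : ℝ × ℝ) : (polarCoord.symm q).1 ^ 2 + (polarCoord.symm q).2 ^ 2 = q.1 ^ 2 := by
    rw [polarCoord_symm_apply]
    linear_combination q.1 ^ 2 * Real.cos_sq_add_sin_sq q.2
  calc ∫ y : ℝ × ℝ, g √(k ^ 2 + (y.1 ^ 2 + y.2 ^ 2))
      = ∫ q in Set.Ioi (0 : ℝ) ×ˢ Set.Ioo (-Real.pi) Real.pi,
          (q.1 • g √(k ^ 2 + q.1 ^ 2)) * (fun _ => 1 : ℝ → ℂ) q.2 := by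
        rw [← integral_comp_polarCoord_symm, polarCoord_target]
        simp_rw [hsq, mul_one]
    _ = (∫ s in Set.Ioi (0 : ℝ), s • g √(k ^ 2 + s ^ 2)) *
          ∫ _ in Set.Ioo (-Real.pi) Real.pi, (1 : ℂ) := by
        exact setIntegral_prod_mul (fun s => s • g √(k ^ 2 + s ^ 2)) (fun _ => 1) _ _
    _ = _ := by
        rw [integral_comp_sqrt_add_sq, setIntegral_const, Real.volume_real_Ioo,
          max_eq_left (by linarith [Real.pi_pos]), mul_comm]
        simp only [Complex.real_smul]
        push_cast
        ring

theorem exists_measurableEquiv_apply_apply_apply : ∃ e : Ed 3 ≃ᵐ ℝ × (ℝ × ℝ),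
    MeasurePreserving e ∧ ∀ κ, e κ = (κ 0, κ 1, κ 2) := by
  refine ⟨(MeasurableEquiv.toLp 2 (Fin 3 → ℝ)).symm.trans
    ((MeasurableEquiv.piFinSuccAbove (fun _ : Fin 3 => ℝ) 0).trans
      ((MeasurableEquiv.refl ℝ).prodCongr MeasurableEquiv.finTwoArrow)), ?_, fun κ => rfl⟩
  exact (((MeasurePreserving.id volume).prod (volume_preserving_finTwoArrow ℝ)).comp
    (volume_preserving_piFinSuccAbove (fun _ : Fin 3 => ℝ) 0)).comp
      (EuclideanSpace.volume_preserving_symm_measurableEquiv_toLp (Fin 3))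

theorem exists_measurableEquiv_norm_inner (z : Ed 3) : ∃ e : Ed 3 ≃ᵐ ℝ × (ℝ × ℝ),
    MeasurePreserving e ∧ ∀ κ, ‖κ‖ = √((e κ).1 ^ 2 + ((e κ).2.1 ^ 2 + (e κ).2.2 ^ 2)) ∧
      ⟪z, κ⟫ = ‖z‖ * (e κ).1 := by
  obtain ⟨A, hA⟩ : ∃ A : Ed 3 ≃ₗᵢ[ℝ] Ed 3, A z = EuclideanSpace.single 0 ‖z‖ :=
    ⟨_, Submodule.reflection_sub (by simp)⟩
  obtain ⟨e, hmp, he⟩ := exists_measurableEquiv_apply_apply_apply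
  refine ⟨A.toMeasurableEquiv.trans e, hmp.comp A.measurePreserving, fun κ => ⟨?_, ?_⟩⟩
  · rw [MeasurableEquiv.trans_apply, he, ← A.norm_map, EuclideanSpace.norm_eq, Fin.sum_univ_three]
    simp [add_assoc]
  · rw [MeasurableEquiv.trans_apply, he, ← A.inner_map_map, hA, EuclideanSpace.inner_single_left]
    simp

-- Slicing `ℝ³` orthogonally to `z`: the sphere of radius `ρ` has constant density `2πρ` along `z`.
theorem integral_norm_mul_planeWave {m : ℝ → ℂ} (hm : Integrable fun κ : Ed 3 => m ‖κ‖) (z : Ed 3) :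
    ∫ κ : Ed 3, m ‖κ‖ * planeWave z κ =
      ∫ k : ℝ, (2 * Real.pi * ∫ ρ in Set.Ioi |k|, ρ * m ρ) *
        Complex.exp ((‖z‖ * k : ℝ) * Complex.I) := by
  obtain ⟨e, hmp, he⟩ := exists_measurableEquiv_norm_inner z
  set F : ℝ × (ℝ × ℝ) → ℂ := fun q =>
    m √(q.1 ^ 2 + (q.2.1 ^ 2 + q.2.2 ^ 2)) * Complex.exp ((‖z‖ * q.1 : ℝ) * Complex.I) with hF
  have hFe (κ : Ed 3) : m ‖κ‖ * planeWave z κ = F (e κ) := by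
    rw [hF, planeWave, (he κ).1, (he κ).2, mul_comm Complex.I]
  have hFint : Integrable F := by
    rw [← hmp.integrable_comp_emb e.measurableEmbedding]
    refine (hm.mul_bdd (c := 1) (by fun_prop : Continuous (planeWave z)).aestronglyMeasurable
      (.of_forall fun κ => (norm_planeWave z κ).le)).congr (.of_forall hFe)
  simp_rw [hFe]
  rw [hmp.integral_comp' , Measure.volume_eq_prod, integral_prod F hFint]
  simp_rw [hF, integral_mul_const, integral_prod_comp_sqrt_add_sq]

theorem one_add_sq_mul_exp_neg_half_le (ρ : ℝ) :
    (1 + ρ ^ 2) * Real.exp (-(1 / 2) * ρ ^ 2) ≤ 4 * Real.exp (-(1 / 4) * ρ ^ 2) := by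
  have hexp : Real.exp (-(1 / 4) * ρ ^ 2) =
      Real.exp (ρ ^ 2 / 4) * Real.exp (-(1 / 2) * ρ ^ 2) := by
    rw [← Real.exp_add]
    ring_nf
  rw [hexp, ← mul_assoc]
  gcongr
  linarith [Real.add_one_le_exp (ρ ^ 2 / 4)]

theorem norm_mul_gaussWave_one_le {c : ℂ} {ρ : ℝ} (hc : ‖c‖ ≤ 1 + ρ ^ 2) (τ : ℝ) :
    ‖c * gaussWave 1 τ ρ‖ ≤ 4 * Real.exp (-(1 / 4) * ρ ^ 2) := by
  rw [norm_mul, norm_gaussWave]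
  exact (mul_le_mul_of_nonneg_right hc (Real.exp_nonneg _)).trans
    (one_add_sq_mul_exp_neg_half_le ρ)

theorem norm_ofReal_le_one_add_sq (ρ : ℝ) : ‖(ρ : ℂ)‖ ≤ 1 + ρ ^ 2 := by
  rw [Complex.norm_real, Real.norm_eq_abs, abs_le]
  constructor <;> nlinarith [sq_nonneg (ρ - 1), sq_nonneg (ρ + 1)]

theorem norm_one_sub_ofReal_sq_le (ρ : ℝ) : ‖(1 - ρ ^ 2 : ℂ)‖ ≤ 1 + ρ ^ 2 :=
  (norm_sub_le _ _).trans_eq (by simp)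

theorem integral_Ioi_mul_gaussWave (τ a : ℝ) :
    Complex.I * τ * ∫ ρ in Set.Ioi a, ρ * gaussWave 1 τ ρ =
      -(a * gaussWave 1 τ a) - ∫ ρ in Set.Ioi a, (1 - ρ ^ 2) * gaussWave 1 τ ρ := by
  have hgauss : Integrable fun ρ : ℝ => 4 * Real.exp (-(1 / 4) * ρ ^ 2) :=
    (integrable_exp_neg_mul_sq (by norm_num)).const_mul 4
  have hint : Integrable fun ρ : ℝ => ρ * gaussWave 1 τ ρ :=
    hgauss.mono' (by fun_prop)
      (.of_forall fun ρ => norm_mul_gaussWave_one_le (norm_ofReal_le_one_add_sq ρ) τ)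
  have hint' : Integrable fun ρ : ℝ => (1 - ρ ^ 2) * gaussWave 1 τ ρ :=
    hgauss.mono' (by fun_prop)
      (.of_forall fun ρ => norm_mul_gaussWave_one_le (norm_one_sub_ofReal_sq_le ρ) τ)
  have hderiv (ρ : ℝ) : HasDerivAt (fun ρ : ℝ => ρ * gaussWave 1 τ ρ)
      (Complex.I * τ * (ρ * gaussWave 1 τ ρ) + (1 - ρ ^ 2) * gaussWave 1 τ ρ) ρ := by
    have hρ : HasDerivAt (fun ρ : ℝ => (ρ : ℂ)) 1 ρ := Complex.ofRealCLM.hasDerivAt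
    refine (hρ.fun_mul (hasDerivAt_gaussWave 1 τ ρ)).congr_deriv ?_
    push_cast
    ring
  have hderiv_int := (hint.const_mul (Complex.I * τ)).add hint'
  have hlim : Filter.Tendsto (fun ρ : ℝ => ρ * gaussWave 1 τ ρ) Filter.atTop (nhds 0) :=
    tendsto_zero_of_hasDerivAt_of_integrableOn_Ioi (a := a) (fun ρ _ => hderiv ρ)
      hderiv_int.integrableOn hint.integrableOn
  have hftc := integral_Ioi_of_hasDerivAt_of_tendsto' (a := a) (fun ρ _ => hderiv ρ)
    hderiv_int.integrableOn hlim
  rw [integral_add (hint.const_mul _).integrableOn hint'.integrableOn, integral_const_mul] at hftc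
  linear_combination hftc

theorem norm_integral_Ioi_mul_gaussWave_le {τ : ℝ} (hτ : τ ≠ 0) (k : ℝ) :
    ‖∫ ρ in Set.Ioi |k|, ρ * gaussWave 1 τ ρ‖ ≤
      4 * (1 + √(8 * Real.pi)) / |τ| * Real.exp (-(1 / 8) * k ^ 2) := by
  have hexp {ρ : ℝ} (hρ : |k| ≤ ρ) :
      Real.exp (-(1 / 4) * ρ ^ 2) ≤ Real.exp (-(1 / 8) * k ^ 2) * Real.exp (-(1 / 8) * ρ ^ 2) := by
    rw [← Real.exp_add, Real.exp_le_exp]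
    nlinarith [sq_abs k, abs_nonneg k]
  have hboundary : ‖-(|k| * gaussWave 1 τ |k|)‖ ≤ 4 * Real.exp (-(1 / 8) * k ^ 2) := by
    rw [norm_neg]
    refine (norm_mul_gaussWave_one_le (norm_ofReal_le_one_add_sq |k|) τ).trans ?_
    rw [sq_abs]
    gcongr 4 * Real.exp ?_
    nlinarith
  have hrest : ‖∫ ρ in Set.Ioi |k|, (1 - ρ ^ 2) * gaussWave 1 τ ρ‖ ≤
      4 * Real.exp (-(1 / 8) * k ^ 2) * √(8 * Real.pi) := by
    have hint : Integrable fun ρ : ℝ =>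
        4 * Real.exp (-(1 / 8) * k ^ 2) * Real.exp (-(1 / 8) * ρ ^ 2) :=
      (integrable_exp_neg_mul_sq (by norm_num)).const_mul _
    calc ‖∫ ρ in Set.Ioi |k|, (1 - ρ ^ 2) * gaussWave 1 τ ρ‖
        ≤ ∫ ρ in Set.Ioi |k|, 4 * Real.exp (-(1 / 8) * k ^ 2) * Real.exp (-(1 / 8) * ρ ^ 2) := by
          refine norm_integral_le_of_norm_le hint.integrableOn ?_
          filter_upwards [ae_restrict_mem measurableSet_Ioi] with ρ hρ
          refine (norm_mul_gaussWave_one_le (norm_one_sub_ofReal_sq_le ρ) τ).trans ?_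
          rw [mul_assoc]
          gcongr
          exact hexp (le_of_lt hρ)
      _ ≤ ∫ ρ : ℝ, 4 * Real.exp (-(1 / 8) * k ^ 2) * Real.exp (-(1 / 8) * ρ ^ 2) :=
          setIntegral_le_integral hint (.of_forall fun ρ => by positivity)
      _ = _ := by
          rw [integral_const_mul, integral_gaussian, one_div, div_inv_eq_mul, mul_comm Real.pi]
  have hτ' : 0 < |τ| := abs_pos.2 hτ
  rw [div_mul_eq_mul_div, le_div_iff₀ hτ', mul_comm]
  calc |τ| * ‖∫ ρ in Set.Ioi |k|, ρ * gaussWave 1 τ ρ‖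
      = ‖Complex.I * τ * ∫ ρ in Set.Ioi |k|, ρ * gaussWave 1 τ ρ‖ := by simp
    _ ≤ 4 * Real.exp (-(1 / 8) * k ^ 2) + 4 * Real.exp (-(1 / 8) * k ^ 2) * √(8 * Real.pi) := by
        rw [integral_Ioi_mul_gaussWave]
        exact (norm_sub_le _ _).trans (add_le_add hboundary hrest)
    _ = _ := by ring

/-- The constant of the dispersive estimate for the Gaussian-damped half-wave kernel. -/
noncomputable def dispersiveConst : ℝ := 8 * Real.pi * (1 + √(8 * Real.pi)) * √(8 * Real.pi)

theorem dispersiveConst_pos : 0 < dispersiveConst := by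
  have := Real.pi_pos
  unfold dispersiveConst
  positivity

theorem norm_integral_gaussWave_one_mul_planeWave_le {τ : ℝ} (hτ : τ ≠ 0) (z : Ed 3) :
    ‖∫ κ : Ed 3, gaussWave 1 τ ‖κ‖ * planeWave z κ‖ ≤ dispersiveConst / |τ| := by
  rw [integral_norm_mul_planeWave (integrable_gaussWave_norm one_pos τ)]
  have hslice (k : ℝ) : ‖(2 * Real.pi * ∫ ρ in Set.Ioi |k|, ρ * gaussWave 1 τ ρ) *
      Complex.exp ((‖z‖ * k : ℝ) * Complex.I)‖ ≤
        2 * Real.pi * (4 * (1 + √(8 * Real.pi)) / |τ|) * Real.exp (-(1 / 8) * k ^ 2) := by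
    rw [norm_mul, Complex.norm_exp_ofReal_mul_I, mul_one, norm_mul, mul_assoc]
    refine mul_le_mul (by simp [abs_of_pos Real.pi_pos]) (norm_integral_Ioi_mul_gaussWave_le hτ k)
      (norm_nonneg _) (by positivity)
  refine (norm_integral_le_of_norm_le ((integrable_exp_neg_mul_sq (by norm_num)).const_mul _)
    (.of_forall hslice)).trans_eq ?_
  rw [integral_const_mul, integral_gaussian, dispersiveConst, one_div, div_inv_eq_mul, mul_comm _ 8]
  ring

theorem norm_integral_gaussWave_mul_planeWave_le {L τ : ℝ} (hL : 0 < L) (hτ : τ ≠ 0) (z : Ed 3) :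
    ‖∫ κ : Ed 3, gaussWave L τ ‖κ‖ * planeWave z κ‖ ≤ dispersiveConst / (L * |τ|) := by
  set R : ℝ := √L with hR_def
  have hR : 0 < R := Real.sqrt_pos.2 hL
  have hscale (κ : Ed 3) : gaussWave L τ ‖κ‖ * planeWave z κ =
      gaussWave 1 (τ / R) ‖R • κ‖ * planeWave (R⁻¹ • z) (R • κ) := by
    rw [norm_smul, Real.norm_of_nonneg hR.le, gaussWave_mul_left 1 τ _ hR.ne', mul_one, hR_def,
      Real.sq_sqrt hL.le, planeWave, planeWave, real_inner_smul_left, real_inner_smul_right,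
      inv_mul_cancel_left₀ hR.ne']
  simp_rw [hscale]
  rw [Measure.integral_comp_smul volume
    (fun κ => gaussWave 1 (τ / R) ‖κ‖ * planeWave (R⁻¹ • z) κ), norm_smul]
  calc _ ≤ ‖|(R ^ Module.finrank ℝ (Ed 3))⁻¹|‖ * (dispersiveConst / |τ / R|) := by
        gcongr
        exact norm_integral_gaussWave_one_mul_planeWave_le (div_ne_zero hτ hR.ne') _
    _ = _ := by
        rw [finrank_euclideanSpace_fin, norm_abs_eq_norm, Real.norm_of_nonneg (by positivity),
          abs_div, abs_of_pos hR, ← Real.sq_sqrt hL.le, ← hR_def]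
        field_simp

end Dispersive

section MixedNormDuality

variable {X Y : Type*} [MeasurableSpace X] [MeasurableSpace Y] {μ : Measure X} {ν : Measure Y}

theorem tendsto_eLpNorm'_of_monotone {ε : Type*} [ENorm ε] {p : ℝ} (hp : 0 < p) {f : ℕ → X → ε}
    {g : X → ε} (hf : ∀ k, Measurable fun x => ‖f k x‖ₑ) (hmono : ∀ x, Monotone fun k => ‖f k x‖ₑ)
    (hlim : ∀ x, Filter.Tendsto (fun k => ‖f k x‖ₑ) Filter.atTop (nhds ‖g x‖ₑ)) :
    Filter.Tendsto (fun k => eLpNorm' (f k) p μ) Filter.atTop (nhds (eLpNorm' g p μ)) := by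
  refine (ENNReal.continuous_rpow_const.tendsto _).comp (lintegral_tendsto_of_tendsto_of_monotone
    (fun k => ((hf k).pow_const p).aemeasurable) (.of_forall fun x i j hij => ?_)
    (.of_forall fun x => (ENNReal.continuous_rpow_const.tendsto _).comp (hlim x)))
  exact ENNReal.rpow_le_rpow (hmono x hij) hp.le

theorem eLpNorm'_le_mul_rpow_of_enorm_le_indicator {ε : Type*} [ENorm ε] {p : ℝ} (hp : 0 < p)
    {f : X → ε} {s : Set X} {A : ℝ≥0∞} (hf : ∀ x, ‖f x‖ₑ ≤ s.indicator (fun _ => A) x) :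
    eLpNorm' f p μ ≤ A * μ s ^ (1 / p) := by
  calc eLpNorm' f p μ ≤ (∫⁻ x, s.indicator (fun _ => A ^ p) x ∂μ) ^ (1 / p) := by
        rw [eLpNorm'_eq_lintegral_enorm]
        gcongr with x
        refine (ENNReal.rpow_le_rpow (hf x) hp.le).trans_eq ?_
        by_cases hx : x ∈ s <;> simp [hx, hp]
    _ ≤ (A ^ p * μ s) ^ (1 / p) := by
        gcongr
        exact lintegral_indicator_const_le s (A ^ p)
    _ = A * μ s ^ (1 / p) := by
        rw [ENNReal.mul_rpow_of_nonneg _ _ (by positivity), ← ENNReal.rpow_mul,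
          mul_one_div_cancel hp.ne', ENNReal.rpow_one]

theorem lintegral_enorm_le_eLpNorm'_mul_rpow_measure {ε : Type*} [TopologicalSpace ε]
    [ContinuousENorm ε] {p : ℝ} (hp : 1 ≤ p) {f : X → ε} (hf : AEStronglyMeasurable f μ) {s : Set X}
    (hfs : ∀ x ∉ s, ‖f x‖ₑ = 0) :
    ∫⁻ x, ‖f x‖ₑ ∂μ ≤ eLpNorm' f p μ * μ s ^ (1 - 1 / p) := by
  have h := eLpNorm'_le_eLpNorm'_mul_rpow_measure_univ zero_lt_one hp (hf.restrict (s := s))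
  rw [Measure.restrict_apply_univ, eLpNorm'_eq_lintegral_enorm] at h
  simp only [ENNReal.rpow_one, div_one] at h
  rw [setLIntegral_eq_of_support_subset (Function.support_subset_iff'.2 hfs)] at h
  exact h.trans (mul_le_mul_left (eLpNorm'_mono_measure f Measure.restrict_le_self (by linarith)) _)

/-- The duality map `w ↦ ‖w‖_p ^ (q - p) |w| ^ (p - 2) w̄` of the functional `‖w‖_p ^ q / q`. It is
where Hölder's inequality for the norm of `L^q(L^p)` is attained. -/
noncomputable def dualityMap (p q : ℝ) (ν : Measure Y) (w : Y → ℂ) (y : Y) : ℂ :=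
  ((‖w y‖ ^ (p - 2) * (eLpNorm' w p ν).toReal ^ (q - p) : ℝ) : ℂ) * starRingEnd ℂ (w y)

theorem enorm_dualityMap {p : ℝ} (hp : 1 < p) (q : ℝ) (w : Y → ℂ) (y : Y) :
    ‖dualityMap p q ν w y‖ₑ =
      ‖w y‖ₑ ^ (p - 1) * ENNReal.ofReal ((eLpNorm' w p ν).toReal ^ (q - p)) := by
  have hpow : ‖w y‖ ^ (p - 2) * ‖w y‖ = ‖w y‖ ^ (p - 1) := by
    rcases eq_or_ne ‖w y‖ 0 with h0 | h0
    · rw [h0, Real.zero_rpow (by linarith : p - 1 ≠ 0), mul_zero]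
    · rw [← Real.rpow_add_one h0]
      ring_nf
  rw [dualityMap, ← ofReal_norm, norm_mul, RCLike.norm_conj, Complex.norm_real,
    Real.norm_of_nonneg (by positivity), mul_right_comm, hpow, ENNReal.ofReal_mul (by positivity),
    ← ENNReal.ofReal_rpow_of_nonneg (norm_nonneg _) (by linarith), ofReal_norm]

theorem dualityMap_mul_self {p : ℝ} (hp : 0 < p) (q : ℝ) (w : Y → ℂ) (y : Y) :
    dualityMap p q ν w y * w y = ((‖w y‖ ^ p * (eLpNorm' w p ν).toReal ^ (q - p) : ℝ) : ℂ) := by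
  rw [dualityMap, mul_assoc, mul_comm (starRingEnd ℂ _), Complex.mul_conj,
    Complex.normSq_eq_norm_sq, ← Complex.ofReal_mul, mul_right_comm]
  rcases eq_or_ne ‖w y‖ 0 with h0 | h0
  · rw [h0, Real.zero_rpow hp.ne']
    simp
  · rw [← Real.rpow_natCast, ← Real.rpow_add (by positivity)]
    norm_num

theorem integral_dualityMap_mul_self {p q : ℝ} (hp : 0 < p) (hq : 0 < q) {w : Y → ℂ}
    (hw : AEStronglyMeasurable w ν) :
    ∫ y, dualityMap p q ν w y * w y ∂ν = (((eLpNorm' w p ν).toReal ^ q : ℝ) : ℂ) := by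
  have hnorm : ∫ y, ‖w y‖ ^ p ∂ν = (eLpNorm' w p ν).toReal ^ p := by
    rw [integral_eq_lintegral_of_nonneg_ae (.of_forall fun y => by positivity)
      (hw.norm.aemeasurable.pow_const p).aestronglyMeasurable, ENNReal.toReal_rpow,
      ← lintegral_rpow_enorm_eq_rpow_eLpNorm' hp]
    simp_rw [← ENNReal.ofReal_rpow_of_nonneg (norm_nonneg _) hp.le, ofReal_norm]
  simp_rw [dualityMap_mul_self hp]
  rw [integral_complex_ofReal, integral_mul_const, hnorm]
  rcases eq_or_ne (eLpNorm' w p ν).toReal 0 with h0 | h0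
  · rw [h0, Real.zero_rpow hp.ne', Real.zero_rpow hq.ne', zero_mul]
  · rw [← Real.rpow_add (by positivity), add_sub_cancel]

theorem eLpNorm'_dualityMap {p q : ℝ} (hp : 1 < p) (hq : 1 < q) {w : Y → ℂ}
    (hw : eLpNorm' w p ν ≠ ⊤) :
    eLpNorm' (dualityMap p q ν w) (p / (p - 1)) ν = eLpNorm' w p ν ^ (q - 1) := by
  have hp1 : 0 < p - 1 := by linarith
  set c := ENNReal.ofReal ((eLpNorm' w p ν).toReal ^ (q - p)) with hc
  have hpow (y : Y) : ‖dualityMap p q ν w y‖ₑ ^ (p / (p - 1)) =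
      c ^ (p / (p - 1)) * ‖w y‖ₑ ^ p := by
    rw [enorm_dualityMap hp, ENNReal.mul_rpow_of_nonneg _ _ (by positivity), ← ENNReal.rpow_mul,
      mul_div_cancel₀ _ hp1.ne', mul_comm]
  have hctop : c ^ (p / (p - 1)) ≠ ⊤ := ENNReal.rpow_ne_top_of_nonneg (by positivity) ofReal_ne_top
  have hval : eLpNorm' (dualityMap p q ν w) (p / (p - 1)) ν = c * eLpNorm' w p ν ^ (p - 1) := by
    rw [eLpNorm'_eq_lintegral_enorm]
    simp_rw [hpow]
    rw [lintegral_const_mul' _ _ hctop, lintegral_rpow_enorm_eq_rpow_eLpNorm' (by linarith),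
      ENNReal.mul_rpow_of_nonneg _ _ (by positivity), ← ENNReal.rpow_mul, ← ENNReal.rpow_mul,
      one_div_div, div_mul_div_cancel₀ hp1.ne', div_self (by linarith), ENNReal.rpow_one,
      mul_div_cancel₀ _ (by linarith : p ≠ 0)]
  rcases eq_or_ne (eLpNorm' w p ν) 0 with h0 | h0
  · rw [hval, h0, ENNReal.zero_rpow_of_pos hp1, ENNReal.zero_rpow_of_pos (by linarith), mul_zero]
  · rw [hval, hc, ← ENNReal.ofReal_rpow_of_pos (ENNReal.toReal_pos h0 hw), ENNReal.ofReal_toReal hw,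
      ← ENNReal.rpow_add _ _ h0 hw]
    ring_nf

theorem eLpNorm'_eLpNorm'_dualityMap {p q : ℝ} (hp : 1 < p) (hq : 1 < q) {w : X → Y → ℂ}
    (hw : ∀ x, eLpNorm' (w x) p ν ≠ ⊤) :
    eLpNorm' (fun x => eLpNorm' (dualityMap p q ν (w x)) (p / (p - 1)) ν) (q / (q - 1)) μ =
      eLpNorm' (fun x => eLpNorm' (w x) p ν) q μ ^ (q - 1) := by
  simp_rw [eLpNorm'_dualityMap hp hq (hw _)]
  rw [eLpNorm'_eq_lintegral_enorm]
  simp_rw [enorm_eq_self, ← ENNReal.rpow_mul, mul_div_cancel₀ _ (by linarith : q - 1 ≠ 0)]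
  rw [lintegral_rpow_eq_rpow_eLpNorm' (by linarith), ← ENNReal.rpow_mul, one_div_div,
    mul_div_cancel₀ _ (by linarith : q ≠ 0)]

theorem measurable_uncurry_dualityMap [SFinite ν] (p q : ℝ) {w : X → Y → ℂ}
    (hw : Measurable (Function.uncurry w)) :
    Measurable (Function.uncurry fun x => dualityMap p q ν (w x)) := by
  have hnorm : Measurable fun x => eLpNorm' (w x) p ν :=
    (hw.enorm.pow_const p).lintegral_prod_right.pow_const _
  exact (Complex.measurable_ofReal.comp ((hw.norm.pow_const _).mul
    ((hnorm.ennreal_toReal.pow_const _).comp measurable_fst))).mul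
    (Complex.continuous_conj.measurable.comp hw)

theorem eLpNorm'_eLpNorm'_le_of_enorm_integral_dualityMap_le [SFinite ν] {p q : ℝ} (hp : 1 < p)
    (hq : 1 < q) {w : X → Y → ℂ} (hw : Measurable (Function.uncurry w))
    (hwp : ∀ x, eLpNorm' (w x) p ν ≠ ⊤) (hwq : eLpNorm' (fun x => eLpNorm' (w x) p ν) q μ ≠ ⊤)
    {M : ℝ≥0∞} (h : ‖∫ x, ∫ y, dualityMap p q ν (w x) y * w x y ∂ν ∂μ‖ₑ ≤
      M * eLpNorm' (fun x => eLpNorm' (dualityMap p q ν (w x)) (p / (p - 1)) ν) (q / (q - 1)) μ) :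
    eLpNorm' (fun x => eLpNorm' (w x) p ν) q μ ≤ M := by
  have hq1 : 0 < q - 1 := by linarith
  set J := eLpNorm' (fun x => eLpNorm' (w x) p ν) q μ with hJ
  have hpairing : ‖∫ x, ∫ y, dualityMap p q ν (w x) y * w x y ∂ν ∂μ‖ₑ = J ^ q := by
    simp_rw [fun x => integral_dualityMap_mul_self (by linarith : 0 < p) (by linarith : 0 < q)
      (hw.comp measurable_prodMk_left).aestronglyMeasurable (w := w x) (ν := ν)]
    have hnorm : Measurable fun x => eLpNorm' (w x) p ν :=
      (hw.enorm.pow_const p).lintegral_prod_right.pow_const _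
    have hJq : J ^ q ≠ ⊤ := ENNReal.rpow_ne_top_of_nonneg (by linarith) hwq
    rw [integral_complex_ofReal, ← ofReal_norm, Complex.norm_real, Real.norm_of_nonneg
      (integral_nonneg fun x => by positivity), integral_eq_lintegral_of_nonneg_ae
      (.of_forall fun x => by positivity)
      (hnorm.ennreal_toReal.pow_const q).aestronglyMeasurable]
    simp_rw [ENNReal.toReal_rpow]
    simp_rw [fun x => ENNReal.ofReal_toReal
      (ENNReal.rpow_ne_top_of_nonneg (by linarith : 0 ≤ q) (hwp x))]
    rw [lintegral_rpow_eq_rpow_eLpNorm' (by linarith), ENNReal.ofReal_toReal hJq]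
  rcases eq_or_ne J 0 with h0 | h0
  · rw [h0]
    exact zero_le
  rw [hpairing, eLpNorm'_eLpNorm'_dualityMap hp hq hwp, ← hJ, ← sub_add_cancel q 1,
    ENNReal.rpow_add _ _ h0 hwq, ENNReal.rpow_one, sub_add_cancel, mul_comm M] at h
  exact (ENNReal.mul_le_mul_iff_right (ENNReal.rpow_pos (pos_iff_ne_zero.2 h0) hwq).ne'
    (ENNReal.rpow_ne_top_of_nonneg hq1.le hwq)).1 h

theorem integrable_uncurry_dualityMap [SFinite ν] {p q : ℝ} (hp : 1 < p) (hq : 1 < q)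
    {w : X → Y → ℂ} (hw : Measurable (Function.uncurry w))
    (hwp : ∀ x, eLpNorm' (w x) p ν ≠ ⊤) (hwq : eLpNorm' (fun x => eLpNorm' (w x) p ν) q μ ≠ ⊤)
    {s : Set X} {t : Set Y} (hs : μ s ≠ ⊤) (ht : ν t ≠ ⊤) (hwst : ∀ z ∉ s ×ˢ t, w z.1 z.2 = 0) :
    Integrable (Function.uncurry fun x => dualityMap p q ν (w x)) (μ.prod ν) := by
  have hm := measurable_uncurry_dualityMap (ν := ν) p q hw
  have hzero (z : X × Y) (hz : z ∉ s ×ˢ t) : ‖dualityMap p q ν (w z.1) z.2‖ₑ = 0 := by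
    rw [enorm_dualityMap hp, hwst z hz, enorm_zero, ENNReal.zero_rpow_of_pos (by linarith),
      zero_mul]
  have hp' : 1 ≤ p / (p - 1) := by rw [one_le_div₀ (by linarith)]; linarith
  have hq' : 1 ≤ q / (q - 1) := by rw [one_le_div₀ (by linarith)]; linarith
  set N : X → ℝ≥0∞ := fun x => eLpNorm' (dualityMap p q ν (w x)) (p / (p - 1)) ν with hN
  have hNm : Measurable N := (hm.enorm.pow_const _).lintegral_prod_right.pow_const _
  have hN0 (x : X) (hx : x ∉ s) : ‖N x‖ₑ = 0 := by
    simp only [hN, eLpNorm', hzero (x, _) fun h => hx h.1]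
    rw [ENNReal.zero_rpow_of_pos (by linarith), lintegral_zero,
      ENNReal.zero_rpow_of_pos (by positivity), enorm_zero]
  have hNq : eLpNorm' N (q / (q - 1)) μ ≠ ⊤ := by
    rw [hN, eLpNorm'_eLpNorm'_dualityMap hp hq hwp]
    exact ENNReal.rpow_ne_top_of_nonneg (by linarith) hwq
  refine ⟨hm.aestronglyMeasurable, ?_⟩
  calc ∫⁻ z, ‖dualityMap p q ν (w z.1) z.2‖ₑ ∂μ.prod ν
      = ∫⁻ x, ∫⁻ y, ‖dualityMap p q ν (w x) y‖ₑ ∂ν ∂μ := lintegral_prod _ hm.enorm.aemeasurable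
    _ ≤ ∫⁻ x, N x * ν t ^ (1 - 1 / (p / (p - 1))) ∂μ := lintegral_mono fun x =>
        lintegral_enorm_le_eLpNorm'_mul_rpow_measure hp'
          (hm.comp measurable_prodMk_left).aestronglyMeasurable fun y hy =>
            hzero (x, y) fun h => hy h.2
    _ = (∫⁻ x, ‖N x‖ₑ ∂μ) * ν t ^ (1 - 1 / (p / (p - 1))) := lintegral_mul_const _ hNm
    _ ≤ eLpNorm' N (q / (q - 1)) μ * μ s ^ (1 - 1 / (q / (q - 1))) *
          ν t ^ (1 - 1 / (p / (p - 1))) := by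
        gcongr
        exact lintegral_enorm_le_eLpNorm'_mul_rpow_measure hq' hNm.aestronglyMeasurable hN0
    _ < ⊤ := by
        have hle {a : ℝ} (ha : 1 ≤ a) : 0 ≤ 1 - 1 / a := by
          rw [sub_nonneg, div_le_one (by linarith)]
          exact ha
        exact ENNReal.mul_lt_top (ENNReal.mul_lt_top hNq.lt_top
          (ENNReal.rpow_lt_top_of_nonneg (hle hq') hs)) (ENNReal.rpow_lt_top_of_nonneg (hle hp') ht)

theorem eLpNorm'_eLpNorm'_indicator_le_of_forall_integrable [SFinite ν] {p q : ℝ} (hp : 1 < p)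
    (hq : 1 < q) {v : X → Y → ℂ} (hv : Measurable (Function.uncurry v)) {A : ℝ}
    (hvA : ∀ x y, ‖v x y‖ ≤ A) {M : ℝ≥0∞}
    (h : ∀ f : X → Y → ℂ, Measurable (Function.uncurry f) →
      Integrable (Function.uncurry f) (μ.prod ν) → ‖∫ x, ∫ y, f x y * v x y ∂ν ∂μ‖ₑ ≤
        M * eLpNorm' (fun x => eLpNorm' (f x) (p / (p - 1)) ν) (q / (q - 1)) μ)
    {s : Set X} {t : Set Y} (hsm : MeasurableSet s) (htm : MeasurableSet t) (hs : μ s ≠ ⊤)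
    (ht : ν t ≠ ⊤) :
    eLpNorm' (fun x => eLpNorm' (fun y => (s ×ˢ t).indicator (Function.uncurry v) (x, y)) p ν) q μ
      ≤ M := by
  have hp0 : 0 < p := by linarith
  have hq0 : 0 < q := by linarith
  set w : X → Y → ℂ := fun x y => (s ×ˢ t).indicator (Function.uncurry v) (x, y) with hwdef
  have hw : Measurable (Function.uncurry w) := hv.indicator (hsm.prod htm)
  have hwst (z : X × Y) (hz : z ∉ s ×ˢ t) : w z.1 z.2 = 0 := Set.indicator_of_notMem hz _
  have hinner (x : X) : ‖eLpNorm' (w x) p ν‖ₑ ≤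
      s.indicator (fun _ => ENNReal.ofReal A * ν t ^ (1 / p)) x := by
    by_cases hx : x ∈ s
    · rw [Set.indicator_of_mem hx]
      refine eLpNorm'_le_mul_rpow_of_enorm_le_indicator hp0 fun y => ?_
      by_cases hy : y ∈ t
      · rw [Set.indicator_of_mem hy, hwdef]
        dsimp only
        rw [Set.indicator_of_mem (Set.mk_mem_prod hx hy), ← ofReal_norm]
        exact ENNReal.ofReal_le_ofReal (hvA x y)
      · simp [hwst (x, y) fun hxy => hy hxy.2]
    · simp [eLpNorm', hwst (x, _) fun hxy => hx hxy.1, hx, hp0]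
  have hAt : ENNReal.ofReal A * ν t ^ (1 / p) ≠ ⊤ :=
    ENNReal.mul_ne_top ofReal_ne_top (ENNReal.rpow_ne_top_of_nonneg (by positivity) ht)
  have hwp (x : X) : eLpNorm' (w x) p ν ≠ ⊤ :=
    ne_top_of_le_ne_top hAt ((hinner x).trans (Set.indicator_apply_le' (fun _ => le_rfl)
      fun _ => zero_le))
  have hwq : eLpNorm' (fun x => eLpNorm' (w x) p ν) q μ ≠ ⊤ :=
    ne_top_of_le_ne_top (ENNReal.mul_ne_top hAt (ENNReal.rpow_ne_top_of_nonneg (by positivity) hs))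
      (eLpNorm'_le_mul_rpow_of_enorm_le_indicator hq0 hinner)
  refine eLpNorm'_eLpNorm'_le_of_enorm_integral_dualityMap_le hp hq hw hwp hwq ?_
  have hself (x : X) (y : Y) :
      dualityMap p q ν (w x) y * w x y = dualityMap p q ν (w x) y * v x y := by
    by_cases hxy : (x, y) ∈ s ×ˢ t
    · rw [show w x y = v x y from Set.indicator_of_mem hxy _]
    · rw [dualityMap, hwst (x, y) hxy]
      simp
  simp_rw [hself]
  exact h _ (measurable_uncurry_dualityMap p q hw)
    (integrable_uncurry_dualityMap hp hq hw hwp hwq hs ht hwst)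

theorem eLpNorm'_eLpNorm'_le_of_forall_integrable [SigmaFinite μ] [SigmaFinite ν] {p q : ℝ}
    (hp : 1 < p) (hq : 1 < q) {v : X → Y → ℂ} (hv : Measurable (Function.uncurry v)) {A : ℝ}
    (hvA : ∀ x y, ‖v x y‖ ≤ A) {M : ℝ≥0∞}
    (h : ∀ f : X → Y → ℂ, Measurable (Function.uncurry f) →
      Integrable (Function.uncurry f) (μ.prod ν) → ‖∫ x, ∫ y, f x y * v x y ∂ν ∂μ‖ₑ ≤
        M * eLpNorm' (fun x => eLpNorm' (f x) (p / (p - 1)) ν) (q / (q - 1)) μ) :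
    eLpNorm' (fun x => eLpNorm' (v x) p ν) q μ ≤ M := by
  let s (k : ℕ) : Set (X × Y) := spanningSets μ k ×ˢ spanningSets ν k
  let w (k : ℕ) (x : X) (y : Y) : ℂ := (s k).indicator (Function.uncurry v) (x, y)
  have hw (k : ℕ) : Measurable (Function.uncurry (w k)) :=
    hv.indicator ((measurableSet_spanningSets μ k).prod (measurableSet_spanningSets ν k))
  have hnorm (k : ℕ) : Measurable fun x => eLpNorm' (w k x) p ν :=
    ((hw k).enorm.pow_const p).lintegral_prod_right.pow_const _
  have hs : Monotone s := fun i j hij =>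
    Set.prod_mono (monotone_spanningSets μ hij) (monotone_spanningSets ν hij)
  have hmono (z : X × Y) : Monotone fun k => ‖w k z.1 z.2‖ₑ := fun i j hij => by
    simp only [w, enorm_indicator_eq_indicator_enorm]
    exact Set.indicator_le_indicator_of_subset (hs hij) (fun _ => zero_le) z
  have hlim (z : X × Y) :
      Filter.Tendsto (fun k => ‖w k z.1 z.2‖ₑ) Filter.atTop (nhds ‖v z.1 z.2‖ₑ) := by
    have hunion : ⋃ k, s k = Set.univ := by
      rw [Set.iUnion_prod_of_monotone (monotone_spanningSets μ) (monotone_spanningSets ν),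
        iUnion_spanningSets, iUnion_spanningSets, Set.univ_prod_univ]
    have hz := hs.tendsto_indicator s (Function.uncurry v) z
    rw [hunion, Set.indicator_univ] at hz
    exact (hz.mono_right (pure_le_nhds _)).enorm
  refine le_of_tendsto' (tendsto_eLpNorm'_of_monotone (by linarith) (fun k => (hnorm k).enorm)
    (fun x i j hij => ?_) fun x => ?_) fun k =>
      eLpNorm'_eLpNorm'_indicator_le_of_forall_integrable hp hq hv hvA h
        (measurableSet_spanningSets μ k) (measurableSet_spanningSets ν k)
        (measure_spanningSets_lt_top μ k).ne (measure_spanningSets_lt_top ν k).ne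
  · exact ENNReal.rpow_le_rpow (lintegral_mono fun y =>
      ENNReal.rpow_le_rpow (hmono (x, y) hij) (by linarith)) (by positivity)
  · exact tendsto_eLpNorm'_of_monotone (by linarith)
      (fun k => ((hw k).comp measurable_prodMk_left).enorm) (fun y => hmono (x, y))
      fun y => hlim (x, y)

end MixedNormDuality

section Plancherel

open scoped FourierTransform

variable {V : Type*} [NormedAddCommGroup V] [InnerProductSpace ℝ V] [FiniteDimensional ℝ V]
  [MeasurableSpace V] [BorelSpace V]

theorem fourier_toLp_ae_eq {f : V → ℂ} (hf : Integrable f) (hf2 : MemLp f 2) :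
    ⇑(𝓕 (hf2.toLp f) : Lp ℂ 2 (volume : Measure V)) =ᵐ[volume] 𝓕 f := by
  refine ae_eq_of_integral_contDiff_smul_eq
    ((Lp.memLp (𝓕 (hf2.toLp f) : Lp ℂ 2 (volume : Measure V))).locallyIntegrable one_le_two)
    (VectorFourier.fourierIntegral_continuous Real.continuous_fourierChar
      continuous_inner hf).locallyIntegrable fun g hg hgc => ?_
  have hgc' : HasCompactSupport (Complex.ofRealCLM ∘ g) := hgc.comp_left rfl
  set G := hgc'.toSchwartzMap (by fun_prop)
  have hGg (x : V) : G x = g x := rfl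
  calc ∫ κ, g κ • (𝓕 (hf2.toLp f) : Lp ℂ 2 (volume : Measure V)) κ
      = Lp.toTemperedDistribution (𝓕 (hf2.toLp f)) G := by
        simp [hGg]
    _ = ∫ x, 𝓕 (G : V → ℂ) x • f x := by
        rw [← Lp.fourier_toTemperedDistribution_eq, TemperedDistribution.fourier_apply,
          Lp.toTemperedDistribution_apply]
        refine integral_congr_ae ?_
        filter_upwards [hf2.coeFn_toLp] with x hx
        rw [hx, SchwartzMap.fourier_coe]
    _ = ∫ κ, g κ • 𝓕 f κ := by
        simpa [hGg] using! VectorFourier.integral_fourierIntegral_smul_eq_flip (L := innerₗ V)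
          Real.continuous_fourierChar continuous_inner G.integrable hf

theorem eLpNorm_fourier_two {f : V → ℂ} (hf : Integrable f) (hf2 : MemLp f 2) :
    eLpNorm (𝓕 f : V → ℂ) 2 volume = eLpNorm f 2 volume := by
  rw [← eLpNorm_congr_ae (fourier_toLp_ae_eq hf hf2), ← Lp.enorm_def, ← ofReal_norm,
    Lp.norm_fourier_eq, ofReal_norm, Lp.enorm_toLp]

/-- The Fourier transform with the opposite sign and without `2π` in the exponent, adapted to
synthesising waves from their frequencies. -/
noncomputable def planeWaveTransform (f : V → ℂ) (κ : V) : ℂ := ∫ x, f x * planeWave x κ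

theorem planeWaveTransform_eq_fourier (f : V → ℂ) (κ : V) :
    planeWaveTransform f κ = 𝓕 f (-(2 * Real.pi)⁻¹ • κ) := by
  rw [planeWaveTransform, Real.fourier_eq']
  refine integral_congr_ae (.of_forall fun x => ?_)
  have : (Real.pi : ℂ) ≠ 0 := by exact_mod_cast Real.pi_ne_zero
  simp only [planeWave, inner_smul_right, smul_eq_mul]
  rw [mul_comm (f x)]
  congr 2
  push_cast
  field_simp

theorem norm_planeWaveTransform_le (f : V → ℂ) (κ : V) :
    ‖planeWaveTransform f κ‖ ≤ ∫ x, ‖f x‖ := by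
  refine (norm_integral_le_integral_norm _).trans_eq ?_
  simp only [norm_mul, norm_planeWave, mul_one]

theorem continuous_planeWaveTransform {f : V → ℂ} (hf : Integrable f) :
    Continuous (planeWaveTransform f) := by
  rw [funext (planeWaveTransform_eq_fourier f)]
  exact (VectorFourier.fourierIntegral_continuous Real.continuous_fourierChar
    continuous_inner hf).comp (continuous_const_smul _)

theorem measurable_uncurry_planeWaveTransform {X : Type*} [MeasurableSpace X] {f : X → V → ℂ}
    (hf : Measurable (Function.uncurry f)) :
    Measurable (Function.uncurry fun t => planeWaveTransform (f t)) := by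
  have hf' : Measurable fun q : (X × V) × V => f q.1.1 q.2 :=
    hf.comp (by fun_prop : Measurable fun q : (X × V) × V => (q.1.1, q.2))
  have hwave : Measurable fun q : (X × V) × V => planeWave q.2 q.1.2 := by fun_prop
  exact (hf'.mul hwave).stronglyMeasurable.integral_prod_right'.measurable

theorem eLpNorm'_planeWaveTransform_two_le {f : V → ℂ} (hf : Integrable f) :
    eLpNorm' (planeWaveTransform f) 2 volume ≤
      ENNReal.ofReal ((2 * Real.pi) ^ ((Module.finrank ℝ V : ℝ) / 2)) * eLpNorm' f 2 volume := by
  have hpi := Real.pi_pos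
  rcases eq_or_ne (eLpNorm' f 2 volume) ⊤ with htop | htop
  · rw [htop, ENNReal.mul_top (ENNReal.ofReal_pos.2 (by positivity)).ne']
    exact le_top
  have htwo {u : V → ℂ} : eLpNorm u 2 volume = eLpNorm' u 2 volume := by
    simpa using eLpNorm_eq_eLpNorm' (μ := volume) (f := u) two_ne_zero ofNat_ne_top
  have hf2 : MemLp f 2 := ⟨hf.aestronglyMeasurable, by rw [htwo]; exact htop.lt_top⟩
  have hfourier : Measurable (𝓕 f) := (VectorFourier.fourierIntegral_continuous
    Real.continuous_fourierChar continuous_inner hf).measurable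
  have hc : -(2 * Real.pi)⁻¹ ≠ 0 := by simp [hpi.ne']
  have hconst : |((-(2 * Real.pi)⁻¹) ^ Module.finrank ℝ V)⁻¹| =
      (2 * Real.pi) ^ (Module.finrank ℝ V : ℝ) := by
    rw [abs_inv, abs_pow, abs_neg, abs_of_pos (by positivity), inv_pow, inv_inv, Real.rpow_natCast]
  rw [funext (planeWaveTransform_eq_fourier f), eLpNorm'_eq_lintegral_enorm,
    ← lintegral_map (hfourier.enorm.pow_const 2) (measurable_const_smul _),
    Measure.map_addHaar_smul _ hc, hconst, lintegral_smul_measure, smul_eq_mul,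
    ENNReal.mul_rpow_of_nonneg _ _ (by norm_num), ← eLpNorm'_eq_lintegral_enorm, ← htwo,
    eLpNorm_fourier_two hf hf2, htwo, ENNReal.ofReal_rpow_of_pos (by positivity),
    ← Real.rpow_mul (by positivity), mul_one_div]

end Plancherel

section FourierForm

theorem integral_mul_integral_mul_integral {X Y Z : Type*} [MeasurableSpace X] [MeasurableSpace Y]
    [MeasurableSpace Z] {μ : Measure X} {ν : Measure Y} {ρ : Measure Z} [SFinite μ] [SFinite ν]
    [SFinite ρ] {w : Y → ℂ} (hw : Integrable w ν) {c : X → Y → ℂ} {d : Z → Y → ℂ}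
    (hc : Measurable (Function.uncurry c)) (hd : Measurable (Function.uncurry d)) {m : X → ℝ}
    {n : Z → ℝ} (hm : Integrable m μ) (hn : Integrable n ρ) (hcm : ∀ x y, ‖c x y‖ ≤ m x)
    (hdn : ∀ z y, ‖d z y‖ ≤ n z) :
    ∫ y, w y * ((∫ x, c x y ∂μ) * ∫ z, d z y ∂ρ) ∂ν =
      ∫ x, ∫ z, ∫ y, w y * (c x y * d z y) ∂ν ∂ρ ∂μ := by
  have hint : Integrable (fun q : Y × (X × Z) => w q.1 * (c q.2.1 q.1 * d q.2.2 q.1))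
      (ν.prod (μ.prod ρ)) := by
    refine (hw.norm.mul_prod (hm.mul_prod hn)).mono'
      (hw.1.comp_fst.mul (Measurable.aestronglyMeasurable ?_)) (.of_forall fun q => ?_)
    · exact (hc.comp (by fun_prop : Measurable fun q : Y × (X × Z) => (q.2.1, q.1))).mul
        (hd.comp (by fun_prop : Measurable fun q : Y × (X × Z) => (q.2.2, q.1)))
    · rw [norm_mul, norm_mul]
      gcongr
      · exact (norm_nonneg _).trans (hcm _ q.1)
      · exact hcm _ _
      · exact hdn _ _
  calc ∫ y, w y * ((∫ x, c x y ∂μ) * ∫ z, d z y ∂ρ) ∂ν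
      = ∫ y, ∫ q : X × Z, w y * (c q.1 y * d q.2 y) ∂μ.prod ρ ∂ν := by
        simp_rw [integral_const_mul, ← integral_prod_mul]
    _ = ∫ q : X × Z, ∫ y, w y * (c q.1 y * d q.2 y) ∂ν ∂μ.prod ρ := integral_integral_swap hint
    _ = ∫ x, ∫ z, ∫ y, w y * (c x y * d z y) ∂ν ∂ρ ∂μ := integral_prod _ hint.integral_prod_right

theorem enorm_integral_mul_le_eLpNorm'_two {X : Type*} [MeasurableSpace X] {μ : Measure X}
    {u v : X → ℂ} (hu : AEStronglyMeasurable u μ) (hv : AEStronglyMeasurable v μ) :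
    ‖∫ x, u x * v x ∂μ‖ₑ ≤ eLpNorm' u 2 μ * eLpNorm' v 2 μ := by
  refine (enorm_integral_le_lintegral_enorm _).trans ?_
  simp_rw [enorm_mul]
  exact ENNReal.lintegral_mul_le_Lp_mul_Lq μ Real.HolderConjugate.two_two hu.enorm hv.enorm

variable {V : Type*} [NormedAddCommGroup V] [InnerProductSpace ℝ V] [FiniteDimensional ℝ V]
  [MeasurableSpace V] [BorelSpace V]

theorem enorm_integral_mul_planeWaveTransform_le_two {m f g : V → ℂ} (hm : Measurable m)
    (hm1 : ∀ κ, ‖m κ‖ ≤ 1) (hf : Integrable f) (hg : Integrable g) :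
    ‖∫ κ, m κ * (planeWaveTransform f κ * starRingEnd ℂ (planeWaveTransform g κ))‖ₑ ≤
      ENNReal.ofReal ((2 * Real.pi) ^ Module.finrank ℝ V) *
        (eLpNorm' f 2 volume * eLpNorm' g 2 volume) := by
  have hfm := (continuous_planeWaveTransform hf).measurable
  have hgm := (continuous_planeWaveTransform hg).measurable
  have hmf : eLpNorm' (fun κ => m κ * planeWaveTransform f κ) 2 volume ≤
      eLpNorm' (planeWaveTransform f) 2 volume :=
    eLpNorm'_mono_ae zero_le_two (.of_forall fun κ => by
      rw [norm_mul]
      exact mul_le_of_le_one_left (norm_nonneg _) (hm1 κ))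
  have hconj : eLpNorm' (fun κ => starRingEnd ℂ (planeWaveTransform g κ)) 2 volume =
      eLpNorm' (planeWaveTransform g) 2 volume :=
    eLpNorm'_congr_norm_ae (.of_forall fun κ => RCLike.norm_conj _)
  simp_rw [← mul_assoc (m _)]
  refine (enorm_integral_mul_le_eLpNorm'_two (hm.mul hfm).aestronglyMeasurable
    (Complex.continuous_conj.measurable.comp hgm).aestronglyMeasurable).trans ?_
  refine (mul_le_mul' (hmf.trans (eLpNorm'_planeWaveTransform_two_le hf))
    (hconj.trans_le (eLpNorm'_planeWaveTransform_two_le hg))).trans_eq ?_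
  rw [mul_mul_mul_comm, ← ENNReal.ofReal_mul (by positivity), ← Real.rpow_add Real.two_pi_pos,
    add_halves, Real.rpow_natCast]

theorem kernelForm_integral_planeWave {m f g : V → ℂ} (hm : Integrable m) (hf : Measurable f)
    (hfi : Integrable f) (hg : Measurable g) (hgi : Integrable g) :
    kernelForm (fun x y => ∫ κ, m κ * planeWave (x - y) κ) volume volume f
        (fun y => starRingEnd ℂ (g y)) =
      ∫ κ, m κ * (planeWaveTransform f κ * starRingEnd ℂ (planeWaveTransform g κ)) := by
  have hmul {u : V → ℂ} (hu : Measurable u) :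
      Measurable (Function.uncurry fun x κ => u x * planeWave x κ) :=
    (hu.comp measurable_fst).mul (by fun_prop)
  have hnorm (u : V → ℂ) (x κ : V) : ‖u x * planeWave x κ‖ = ‖u x‖ := by
    rw [norm_mul, norm_planeWave, mul_one]
  simp_rw [planeWaveTransform, ← integral_conj]
  rw [integral_mul_integral_mul_integral hm (hmul hf)
    (d := fun y κ => starRingEnd ℂ (g y * planeWave y κ))
    (Complex.continuous_conj.measurable.comp (hmul hg)) hfi.norm hgi.norm
    (fun x κ => (hnorm f x κ).le) fun x κ => ((RCLike.norm_conj _).trans (hnorm g x κ)).le]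
  simp only [kernelForm, ← integral_const_mul, map_mul, ← planeWave_mul_conj_planeWave]
  congr! 6
  ring

theorem enorm_integral_mul_planeWaveTransform_le {s A : ℝ} (hs1 : 1 ≤ s) (hs2 : s < 2)
    (hA : 0 < A) {m f g : V → ℂ} (hm : Measurable m) (hmi : Integrable m) (hm1 : ∀ κ, ‖m κ‖ ≤ 1)
    (hmA : ∀ z, ‖∫ κ, m κ * planeWave z κ‖ ≤ A) (hf : Measurable f) (hfi : Integrable f)
    (hg : Measurable g) (hgi : Integrable g) :
    ‖∫ κ, m κ * (planeWaveTransform f κ * starRingEnd ℂ (planeWaveTransform g κ))‖ₑ ≤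
      (1 + 2 * ENNReal.ofReal ((2 * Real.pi) ^ Module.finrank ℝ V) / ENNReal.ofReal (1 - s / 2)) *
        ENNReal.ofReal (A ^ (2 / s - 1)) * (eLpNorm' f s volume * eLpNorm' g s volume) := by
  have hconj {u : V → ℂ} (q : ℝ) : eLpNorm' (fun y => starRingEnd ℂ (u y)) q volume =
      eLpNorm' u q volume :=
    eLpNorm'_congr_norm_ae (.of_forall fun κ => RCLike.norm_conj _)
  have hmeas {u : V → ℂ} (hu : Measurable u) : Measurable fun y => starRingEnd ℂ (u y) :=
    Complex.continuous_conj.measurable.comp hu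
  have hint {u : V → ℂ} (hu : Integrable u) : Integrable fun y => starRingEnd ℂ (u y) :=
    Complex.conjCLE.integrable_comp_iff.2 hu
  have hK : Measurable (Function.uncurry fun x y => ∫ κ, m κ * planeWave (x - y) κ) :=
    ((hm.comp measurable_snd).mul (by fun_prop : Measurable fun q : (V × V) × V =>
      planeWave (q.1.1 - q.1.2) q.2)).stronglyMeasurable.integral_prod_right'.measurable
  rw [← kernelForm_integral_planeWave hmi hf hfi hg hgi, ← hconj (u := g)]
  refine enorm_kernelForm_le_mul_eLpNorm' hs1 hs2 hA hK (fun x y => hmA (x - y))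
    (fun f g hf hfi hg hgi => ?_) hf hfi (hmeas hg) (hint hgi)
  have := kernelForm_integral_planeWave hmi hf hfi (hmeas hg) (hint hgi)
  simp only [Complex.conj_conj] at this
  rw [this, ← hconj (u := g)]
  exact enorm_integral_mul_planeWaveTransform_le_two hm hm1 hfi (hint hgi)

end FourierForm

section ConeRestriction

theorem eLpNorm'_two_sq_eq_enorm_integral_mul_conj {X : Type*} [MeasurableSpace X]
    {μ : Measure X} {u : X → ℂ} (hu : Integrable (fun x => ‖u x‖ ^ 2) μ) :
    eLpNorm' u 2 μ ^ 2 = ‖∫ x, u x * starRingEnd ℂ (u x) ∂μ‖ₑ := by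
  have hconj (x : X) : u x * starRingEnd ℂ (u x) = ((‖u x‖ ^ 2 : ℝ) : ℂ) := by
    rw [Complex.mul_conj']
    norm_cast
  have hpow (x : X) : ENNReal.ofReal (‖u x‖ ^ 2) = ‖u x‖ₑ ^ (2 : ℝ) := by
    rw [ENNReal.ofReal_pow (norm_nonneg _), ofReal_norm, ENNReal.rpow_two]
  simp_rw [hconj]
  rw [integral_complex_ofReal, ← ofReal_norm, Complex.norm_real, Real.norm_of_nonneg
      (integral_nonneg fun x => by positivity),
    ofReal_integral_eq_lintegral_ofReal hu (.of_forall fun x => by positivity)]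
  simp_rw [hpow]
  exact (ENNReal.rpow_two _).symm.trans (lintegral_rpow_enorm_eq_rpow_eLpNorm' two_pos).symm

theorem lintegral_lintegral_mul_mul_enorm_sub_rpow_le {a : ℝ} (ha : 0 < a) (ha' : a < 1)
    {φ : ℝ → ℝ≥0∞} (hφ : Measurable φ) :
    ∫⁻ x, ∫⁻ y, φ x * φ y * ‖x - y‖ₑ ^ (-a) ≤
      2 * (2 / ENNReal.ofReal (1 - a) + 2 ^ (a / 2)) * eLpNorm' φ (1 / (1 - a / 2)) volume ^ 2 := by
  have hβ : 0 < 1 - a / 2 := by linarith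
  have hHLS := lintegral_lintegral_mul_enorm_sub_rpow_le (volume : Measure ℝ) ha
    (by simpa using ha') (hφ.pow_const (1 / (1 - a / 2)))
  have hball : volume (Metric.ball (0 : ℝ) 1) = 2 := by simp
  simp only [Module.finrank_self, Nat.cast_one, mul_one, div_one, one_mul, hball] at hHLS
  simp_rw [← ENNReal.mul_rpow_of_nonneg _ _ (one_div_nonneg.2 hβ.le), ← ENNReal.rpow_mul,
    one_div_mul_cancel hβ.ne', ENNReal.rpow_one] at hHLS
  refine hHLS.trans_eq ?_
  rw [eLpNorm'_eq_lintegral_enorm, ← ENNReal.rpow_natCast, ← ENNReal.rpow_mul, one_div_one_div]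
  simp only [enorm_eq_self]
  congr 2
  push_cast
  ring

/-- The damped Fourier transform of a space-time function restricted to the light cone, the
adjoint of `waveExtension`. -/
noncomputable def coneRestriction (L : ℝ) (Φ : ℝ → Ed 3 → ℂ) (κ : Ed 3) : ℂ :=
  ∫ t, gaussWave L t ‖κ‖ * planeWaveTransform (Φ t) κ

theorem coneRestriction_eq_mul (L : ℝ) (Φ : ℝ → Ed 3 → ℂ) (κ : Ed 3) :
    coneRestriction L Φ κ =
      gaussWave L 0 ‖κ‖ * ∫ t, gaussWave 0 t ‖κ‖ * planeWaveTransform (Φ t) κ := by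
  rw [coneRestriction, ← integral_const_mul]
  congr! 2
  rw [← mul_assoc, gaussWave, gaussWave, gaussWave, ← Complex.exp_add]
  congr 2
  push_cast
  ring

theorem measurable_uncurry_gaussWave_mul_planeWaveTransform (L : ℝ) {Φ : ℝ → Ed 3 → ℂ}
    (hΦ : Measurable (Function.uncurry Φ)) :
    Measurable (Function.uncurry fun t κ => gaussWave L t ‖κ‖ * planeWaveTransform (Φ t) κ) :=
  (by fun_prop : Measurable fun q : ℝ × Ed 3 => gaussWave L q.1 ‖q.2‖).mul
    (measurable_uncurry_planeWaveTransform hΦ)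

theorem measurable_coneRestriction (L : ℝ) {Φ : ℝ → Ed 3 → ℂ}
    (hΦ : Measurable (Function.uncurry Φ)) : Measurable (coneRestriction L Φ) :=
  (measurable_uncurry_gaussWave_mul_planeWaveTransform L
    hΦ).stronglyMeasurable.integral_prod_left'.measurable

theorem norm_gaussWave_mul_planeWaveTransform_le (t : ℝ) (f : Ed 3 → ℂ) (κ : Ed 3) :
    ‖gaussWave 0 t ‖κ‖ * planeWaveTransform f κ‖ ≤ ∫ x, ‖f x‖ := by
  rw [norm_mul, norm_gaussWave]
  simpa using norm_planeWaveTransform_le f κ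

theorem integrable_norm_coneRestriction_sq {L : ℝ} (hL : 0 < L) {Φ : ℝ → Ed 3 → ℂ}
    (hΦ : Measurable (Function.uncurry Φ))
    (hΦi : Integrable (Function.uncurry Φ) (volume.prod volume)) :
    Integrable fun κ => ‖coneRestriction L Φ κ‖ ^ 2 := by
  refine ((integrable_exp_neg_mul_norm_sq hL).const_mul ((∫ t, ∫ x, ‖Φ t x‖) ^ 2)).mono'
    ((measurable_coneRestriction L hΦ).norm.pow_const 2).aestronglyMeasurable
    (.of_forall fun κ => ?_)
  have hexp : Real.exp (-L * ‖κ‖ ^ 2) = Real.exp (-(L / 2) * ‖κ‖ ^ 2) ^ 2 := by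
    rw [← Real.exp_nat_mul]
    congr 1
    push_cast
    ring
  rw [Real.norm_of_nonneg (by positivity), coneRestriction_eq_mul, norm_mul, norm_gaussWave, hexp,
    ← mul_pow, mul_comm]
  gcongr
  exact norm_integral_le_of_norm_le hΦi.integral_norm_prod_left
    (.of_forall fun t => norm_gaussWave_mul_planeWaveTransform_le t (Φ t) κ)

theorem integral_coneRestriction_mul_conj {L : ℝ} (hL : 0 < L) {Φ : ℝ → Ed 3 → ℂ}
    (hΦ : Measurable (Function.uncurry Φ))
    (hΦi : Integrable (Function.uncurry Φ) (volume.prod volume)) :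
    ∫ κ, coneRestriction L Φ κ * starRingEnd ℂ (coneRestriction L Φ κ) =
      ∫ t, ∫ t', ∫ κ, gaussWave (2 * L) (t - t') ‖κ‖ *
        (planeWaveTransform (Φ t) κ * starRingEnd ℂ (planeWaveTransform (Φ t') κ)) := by
  have hmeas := measurable_uncurry_gaussWave_mul_planeWaveTransform 0 hΦ
  have hint := hΦi.integral_norm_prod_left
  calc ∫ κ, coneRestriction L Φ κ * starRingEnd ℂ (coneRestriction L Φ κ)
      = ∫ κ, gaussWave (2 * L) 0 ‖κ‖ *
          ((∫ t, gaussWave 0 t ‖κ‖ * planeWaveTransform (Φ t) κ) *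
            ∫ t, starRingEnd ℂ (gaussWave 0 t ‖κ‖ * planeWaveTransform (Φ t) κ)) := by
        simp_rw [coneRestriction_eq_mul, integral_conj, map_mul, two_mul, mul_mul_mul_comm,
          gaussWave_mul_conj_gaussWave, sub_zero]
    _ = ∫ t, ∫ t', ∫ κ, gaussWave (2 * L) 0 ‖κ‖ *
          (gaussWave 0 t ‖κ‖ * planeWaveTransform (Φ t) κ *
            starRingEnd ℂ (gaussWave 0 t' ‖κ‖ * planeWaveTransform (Φ t') κ)) :=
        integral_mul_integral_mul_integral (integrable_gaussWave_norm (by positivity) 0) hmeas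
          (d := fun t κ => starRingEnd ℂ (gaussWave 0 t ‖κ‖ * planeWaveTransform (Φ t) κ))
          (Complex.continuous_conj.measurable.comp hmeas) hint hint
          (fun t κ => norm_gaussWave_mul_planeWaveTransform_le t (Φ t) κ)
          fun t κ => (RCLike.norm_conj _).trans_le
            (norm_gaussWave_mul_planeWaveTransform_le t (Φ t) κ)
    _ = _ := by
        congr! 6 with t t' κ
        have hgauss : gaussWave (2 * L) (t - t') ‖κ‖ = gaussWave (2 * L) 0 ‖κ‖ *
            (gaussWave 0 t ‖κ‖ * starRingEnd ℂ (gaussWave 0 t' ‖κ‖)) := by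
          rw [gaussWave_mul_conj_gaussWave, gaussWave, gaussWave, gaussWave, ← Complex.exp_add]
          congr 1
          push_cast
          ring
        rw [hgauss, map_mul]
        ring

/-- The constant of the fixed-time estimate `enorm_integral_gaussWave_mul_planeWaveTransform_le`. -/
noncomputable def decayConst (s : ℝ) : ℝ≥0∞ :=
  (1 + 2 * ENNReal.ofReal ((2 * Real.pi) ^ 3) / ENNReal.ofReal (1 - s / 2)) *
    ENNReal.ofReal (dispersiveConst ^ (2 / s - 1))

theorem decayConst_ne_top {s : ℝ} (hs : s < 2) : decayConst s ≠ ⊤ :=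
  ENNReal.mul_ne_top (ENNReal.add_ne_top.2 ⟨one_ne_top, ENNReal.div_ne_top
    (ENNReal.mul_ne_top ofNat_ne_top ofReal_ne_top) (ENNReal.ofReal_pos.2 (by linarith)).ne'⟩)
    ofReal_ne_top

theorem enorm_integral_gaussWave_mul_planeWaveTransform_le {s L τ : ℝ} (hs1 : 1 ≤ s) (hs2 : s < 2)
    (hL : 0 < L) (hτ : τ ≠ 0) {f g : Ed 3 → ℂ} (hf : Measurable f) (hfi : Integrable f)
    (hg : Measurable g) (hgi : Integrable g) :
    ‖∫ κ, gaussWave L τ ‖κ‖ *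
        (planeWaveTransform f κ * starRingEnd ℂ (planeWaveTransform g κ))‖ₑ ≤
      decayConst s * ENNReal.ofReal (L ^ (-(2 / s - 1))) *
        (eLpNorm' f s volume * eLpNorm' g s volume * ‖τ‖ₑ ^ (-(2 / s - 1))) := by
  have hA : 0 < dispersiveConst / (L * |τ|) :=
    div_pos dispersiveConst_pos (mul_pos hL (abs_pos.2 hτ))
  have hunit (κ : Ed 3) : ‖gaussWave L τ ‖κ‖‖ ≤ 1 := by
    rw [norm_gaussWave, Real.exp_le_one_iff, neg_mul]
    exact neg_nonpos.2 (by positivity)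
  refine (enorm_integral_mul_planeWaveTransform_le hs1 hs2 hA (by fun_prop)
    (integrable_gaussWave_norm hL τ) hunit (norm_integral_gaussWave_mul_planeWave_le hL hτ)
    hf hfi hg hgi).trans_eq ?_
  have hpow : ENNReal.ofReal ((dispersiveConst / (L * |τ|)) ^ (2 / s - 1)) =
      ENNReal.ofReal (dispersiveConst ^ (2 / s - 1)) * ENNReal.ofReal (L ^ (-(2 / s - 1))) *
        ‖τ‖ₑ ^ (-(2 / s - 1)) := by
    rw [← ofReal_norm, Real.norm_eq_abs, ENNReal.ofReal_rpow_of_pos (abs_pos.2 hτ),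
      ← ENNReal.ofReal_mul (Real.rpow_nonneg dispersiveConst_pos.le _),
      ← ENNReal.ofReal_mul (mul_nonneg (Real.rpow_nonneg dispersiveConst_pos.le _)
        (Real.rpow_nonneg hL.le _)), Real.rpow_neg hL.le, Real.rpow_neg (abs_nonneg _),
      Real.div_rpow dispersiveConst_pos.le (by positivity), Real.mul_rpow hL.le (abs_nonneg _),
      div_eq_mul_inv, mul_inv, mul_assoc]
  rw [hpow, decayConst, finrank_euclideanSpace_fin]
  ring

theorem eLpNorm'_coneRestriction_two_sq_le {s a L : ℝ} (hs1 : 1 < s) (hs2 : s < 2)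
    (ha : a = 2 / s - 1) (hL : 0 < L) {Φ : ℝ → Ed 3 → ℂ} (hΦ : Measurable (Function.uncurry Φ))
    (hΦi : Integrable (Function.uncurry Φ) (volume.prod volume)) :
    eLpNorm' (coneRestriction L Φ) 2 volume ^ 2 ≤
      decayConst s * ENNReal.ofReal ((2 * L) ^ (-a)) *
        (2 * (2 / ENNReal.ofReal (1 - a) + 2 ^ (a / 2)) *
          eLpNorm' (fun t => eLpNorm' (Φ t) s volume) (1 / (1 - a / 2)) volume ^ 2) := by
  have hs0 : 0 < s := by linarith
  have ha0 : 0 < a := by rw [ha, sub_pos, lt_div_iff₀ hs0]; linarith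
  have ha1 : a < 1 := by rw [ha, sub_lt_iff_lt_add, div_lt_iff₀ hs0]; linarith
  have hslice : ∀ᵐ t, Integrable (Φ t) := hΦi.prod_right_ae
  have hmeas (t : ℝ) : Measurable (Φ t) := hΦ.comp measurable_prodMk_left
  have hnorm : Measurable fun t => eLpNorm' (Φ t) s volume :=
    (hΦ.enorm.pow_const s).lintegral_prod_right.pow_const _
  rw [eLpNorm'_two_sq_eq_enorm_integral_mul_conj (integrable_norm_coneRestriction_sq hL hΦ hΦi),
    integral_coneRestriction_mul_conj hL hΦ hΦi]
  calc _ ≤ ∫⁻ t, ∫⁻ t', ‖∫ κ, gaussWave (2 * L) (t - t') ‖κ‖ * (planeWaveTransform (Φ t) κ *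
            starRingEnd ℂ (planeWaveTransform (Φ t') κ))‖ₑ :=
        (enorm_integral_le_lintegral_enorm _).trans
          (lintegral_mono fun t => enorm_integral_le_lintegral_enorm _)
    _ ≤ ∫⁻ t, ∫⁻ t', decayConst s * ENNReal.ofReal ((2 * L) ^ (-a)) *
          (eLpNorm' (Φ t) s volume * eLpNorm' (Φ t') s volume * ‖t - t'‖ₑ ^ (-a)) := by
        refine lintegral_mono_ae (hslice.mono fun t ht => lintegral_mono_ae ?_)
        filter_upwards [hslice, Measure.ae_ne volume t] with t' ht' htt'
        rw [ha]
        exact enorm_integral_gaussWave_mul_planeWaveTransform_le hs1.le hs2 (by positivity)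
          (sub_ne_zero.2 htt'.symm) (hmeas t) ht (hmeas t') ht'
    _ = decayConst s * ENNReal.ofReal ((2 * L) ^ (-a)) * ∫⁻ t, ∫⁻ t',
          eLpNorm' (Φ t) s volume * eLpNorm' (Φ t') s volume * ‖t - t'‖ₑ ^ (-a) := by
        simp_rw [lintegral_const_mul' _ _ (ENNReal.mul_ne_top (decayConst_ne_top hs2)
          ofReal_ne_top)]
    _ ≤ _ := by grw [lintegral_lintegral_mul_mul_enorm_sub_rpow_le ha0 ha1 hnorm]

theorem exists_eLpNorm'_coneRestriction_le {s : ℝ} (hs1 : 1 < s) (hs2 : s < 2) :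
    ∃ C : ℝ≥0∞, C ≠ ⊤ ∧ ∀ L : ℝ, 0 < L → ∀ Φ : ℝ → Ed 3 → ℂ, Measurable (Function.uncurry Φ) →
      Integrable (Function.uncurry Φ) (volume.prod volume) →
      eLpNorm' (coneRestriction L Φ) 2 volume ≤
        C * ENNReal.ofReal (L ^ (-(1 / s - 1 / 2))) *
          eLpNorm' (fun t => eLpNorm' (Φ t) s volume) (1 / (3 / 2 - 1 / s)) volume := by
  set a := 2 / s - 1 with ha
  have hs0 : 0 < s := by linarith
  have ha0 : 0 < a := by rw [ha, sub_pos, lt_div_iff₀ hs0]; linarith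
  have ha1 : a < 1 := by rw [ha, sub_lt_iff_lt_add, div_lt_iff₀ hs0]; linarith
  set K : ℝ≥0∞ := decayConst s * (2 * (2 / ENNReal.ofReal (1 - a) + 2 ^ (a / 2))) with hK_def
  have hK : K ≠ ⊤ :=
    ENNReal.mul_ne_top (decayConst_ne_top hs2) (ENNReal.mul_ne_top ofNat_ne_top
      (ENNReal.add_ne_top.2 ⟨ENNReal.div_ne_top ofNat_ne_top
        (ENNReal.ofReal_pos.2 (by linarith)).ne',
          ENNReal.rpow_ne_top_of_nonneg (by positivity) ofNat_ne_top⟩))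
  refine ⟨K ^ (2⁻¹ : ℝ), ENNReal.rpow_ne_top_of_nonneg (by norm_num) hK, fun L hL Φ hΦ hΦi => ?_⟩
  have hL2 : ENNReal.ofReal ((2 * L) ^ (-a)) ≤ ENNReal.ofReal (L ^ (-(1 / s - 1 / 2))) ^ 2 := by
    rw [← ENNReal.ofReal_pow (by positivity), ← Real.rpow_mul_natCast hL.le]
    refine ENNReal.ofReal_le_ofReal ((Real.rpow_le_rpow_of_nonpos hL (by linarith)
      (by linarith)).trans_eq ?_)
    rw [ha]
    push_cast
    ring_nf
  have hKsq : (K ^ (2⁻¹ : ℝ)) ^ 2 = K := by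
    rw [← ENNReal.rpow_two, ENNReal.rpow_inv_rpow two_ne_zero]
  have hexp : 3 / 2 - 1 / s = 1 - a / 2 := by rw [ha]; ring
  rw [← ENNReal.pow_le_pow_left_iff two_ne_zero, mul_pow, mul_pow, hKsq, hexp]
  grw [eLpNorm'_coneRestriction_two_sq_le hs1 hs2 ha hL hΦ hΦi, hL2]
  exact (by rw [hK_def]; ring : _ = _).le

end ConeRestriction

section WaveExtension

/-- The Fourier extension of `G` from the light cone, damped by the Gaussian `exp (-L |κ|² / 2)`.
For `L = 0` and `G` the Fourier transform of `g` it is `(2π)³` times the half-wave of `g`. -/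
noncomputable def waveExtension (L : ℝ) (G : Ed 3 → ℂ) (t : ℝ) (x : Ed 3) : ℂ :=
  ∫ κ, G κ * (gaussWave L t ‖κ‖ * planeWave x κ)

theorem norm_gaussWave_mul_planeWave_le {L : ℝ} (hL : 0 ≤ L) (t : ℝ) (x κ : Ed 3) :
    ‖gaussWave L t ‖κ‖ * planeWave x κ‖ ≤ 1 := by
  rw [norm_mul, norm_gaussWave, norm_planeWave, mul_one, Real.exp_le_one_iff, neg_mul]
  exact neg_nonpos.2 (by positivity)

theorem norm_mul_gaussWave_mul_planeWave_le {L : ℝ} (hL : 0 ≤ L) (c : ℂ) (t : ℝ) (x κ : Ed 3) :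
    ‖c * (gaussWave L t ‖κ‖ * planeWave x κ)‖ ≤ ‖c‖ := by
  rw [norm_mul]
  exact mul_le_of_le_one_right (norm_nonneg _) (norm_gaussWave_mul_planeWave_le hL t x κ)

theorem integrable_mul_gaussWave_mul_planeWave {L : ℝ} (hL : 0 ≤ L) {G : Ed 3 → ℂ}
    (hG : Integrable G) (t : ℝ) (x : Ed 3) :
    Integrable fun κ => G κ * (gaussWave L t ‖κ‖ * planeWave x κ) :=
  hG.mul_bdd (by fun_prop : Continuous fun κ : Ed 3 =>
      gaussWave L t ‖κ‖ * planeWave x κ).aestronglyMeasurable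
    (.of_forall fun κ => norm_gaussWave_mul_planeWave_le hL t x κ)

theorem norm_waveExtension_le {L : ℝ} (hL : 0 ≤ L) {G : Ed 3 → ℂ} (hG : Integrable G) (t : ℝ)
    (x : Ed 3) : ‖waveExtension L G t x‖ ≤ ∫ κ, ‖G κ‖ :=
  norm_integral_le_of_norm_le hG.norm
    (.of_forall fun κ => norm_mul_gaussWave_mul_planeWave_le hL (G κ) t x κ)

theorem measurable_uncurry_waveExtension (L : ℝ) {G : Ed 3 → ℂ} (hG : Measurable G) :
    Measurable (Function.uncurry (waveExtension L G)) := by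
  have hwave : Measurable fun q : (ℝ × Ed 3) × Ed 3 =>
      gaussWave L q.1.1 ‖q.2‖ * planeWave q.1.2 q.2 := by fun_prop
  exact ((hG.comp measurable_snd).mul hwave).stronglyMeasurable.integral_prod_right'.measurable

theorem integral_integral_mul_waveExtension {L : ℝ} (hL : 0 ≤ L) {G : Ed 3 → ℂ}
    (hG : Integrable G) {Φ : ℝ → Ed 3 → ℂ}
    (hΦ : Integrable (Function.uncurry Φ) (volume.prod volume)) :
    ∫ t, ∫ x, Φ t x * waveExtension L G t x = ∫ κ, G κ * coneRestriction L Φ κ := by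
  have hwave : Measurable fun q : (ℝ × Ed 3) × Ed 3 =>
      gaussWave L q.1.1 ‖q.2‖ * planeWave q.1.2 q.2 := by fun_prop
  have hint : Integrable (fun q : (ℝ × Ed 3) × Ed 3 => Function.uncurry Φ q.1 * G q.2 *
      (gaussWave L q.1.1 ‖q.2‖ * planeWave q.1.2 q.2)) ((volume.prod volume).prod volume) :=
    (hΦ.mul_prod hG).mul_bdd hwave.aestronglyMeasurable
      (.of_forall fun q => norm_gaussWave_mul_planeWave_le hL _ _ _)
  calc ∫ t, ∫ x, Φ t x * waveExtension L G t x
      = ∫ t, ∫ x, ∫ κ, Φ t x * G κ * (gaussWave L t ‖κ‖ * planeWave x κ) := by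
        simp_rw [waveExtension, ← integral_const_mul, mul_assoc]
    _ = ∫ q, (∫ κ, Function.uncurry Φ q * G κ *
          (gaussWave L q.1 ‖κ‖ * planeWave q.2 κ)) ∂volume.prod volume :=
        (integral_prod _ hint.integral_prod_left).symm
    _ = ∫ κ, ∫ q, Function.uncurry Φ q * G κ *
          (gaussWave L q.1 ‖κ‖ * planeWave q.2 κ) ∂volume.prod volume :=
        integral_integral_swap hint
    _ = ∫ κ, ∫ t, ∫ x, Φ t x * G κ * (gaussWave L t ‖κ‖ * planeWave x κ) :=
        integral_congr_ae (hint.prod_left_ae.mono fun κ hκ => integral_prod _ hκ)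
    _ = ∫ κ, G κ * coneRestriction L Φ κ := by
        simp_rw [coneRestriction, planeWaveTransform, ← integral_const_mul]
        congr! 6
        ring

theorem exists_eLpNorm'_waveExtension_le {p : ℝ} (hp : 2 < p) :
    ∃ C : ℝ≥0∞, C ≠ ⊤ ∧ ∀ L : ℝ, 0 < L → ∀ G : Ed 3 → ℂ, Measurable G → Integrable G →
      eLpNorm' (fun t => eLpNorm' (waveExtension L G t) p volume) (2 * p / (p - 2)) volume ≤
        C * ENNReal.ofReal (L ^ (-((p - 2) / (2 * p)))) * eLpNorm' G 2 volume := by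
  have hp0 : p ≠ 0 := by linarith
  have hp2 : p - 2 ≠ 0 := by linarith
  have hp2' : p + 2 ≠ 0 := by linarith
  have hs1 : 1 < p / (p - 1) := by rw [lt_div_iff₀ (by linarith)]; linarith
  have hs2 : p / (p - 1) < 2 := by rw [div_lt_iff₀ (by linarith)]; linarith
  have hq : 1 < 2 * p / (p - 2) := by rw [lt_div_iff₀ (by linarith)]; linarith
  have hexpL : 1 / (p / (p - 1)) - 1 / 2 = (p - 2) / (2 * p) := by field_simp; ring
  have hexpq : 2 * p / (p - 2) / (2 * p / (p - 2) - 1) = 1 / (3 / 2 - 1 / (p / (p - 1))) := by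
    have h1 : 2 * p / (p - 2) - 1 = (p + 2) / (p - 2) := by field_simp; ring
    have h2 : 3 / 2 - 1 / (p / (p - 1)) = (p + 2) / (2 * p) := by field_simp; ring
    rw [h1, h2]
    field_simp
  obtain ⟨C, hC, hcone⟩ := exists_eLpNorm'_coneRestriction_le hs1 hs2
  refine ⟨C, hC, fun L hL G hG hGi => eLpNorm'_eLpNorm'_le_of_forall_integrable (by linarith) hq
    (measurable_uncurry_waveExtension L hG) (norm_waveExtension_le hL.le hGi)
    fun Φ hΦ hΦi => ?_⟩
  rw [integral_integral_mul_waveExtension hL.le hGi hΦi, hexpq, ← hexpL]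
  refine (enorm_integral_mul_le_eLpNorm'_two hG.aestronglyMeasurable
    (measurable_coneRestriction L hΦ).aestronglyMeasurable).trans ?_
  grw [hcone L hL Φ hΦ hΦi]
  exact (by ring : _ = _).le

end WaveExtension

section DyadicSum

theorem min_one_rpow_mul_rpow_neg_le {a b : ℝ} (ha : 0 < a) (hab : a < b) {x : ℝ} {j : ℤ}
    (hj : 2 ^ j ≤ x) (hj' : x < 2 ^ (j + 1)) :
    min 1 (x ^ b) * x ^ (-a) ≤ 2 ^ (b - a) * ((2 : ℝ) ^ (-min a (b - a))) ^ j.natAbs := by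
  have hx : 0 < x := lt_of_lt_of_le (by positivity) hj
  rw [← Real.rpow_mul_natCast zero_le_two, Nat.cast_natAbs, Int.cast_abs]
  rcases le_or_gt 0 j with hj0 | hj0
  · have hj0' : (0 : ℝ) ≤ j := by exact_mod_cast hj0
    calc min 1 (x ^ b) * x ^ (-a) ≤ 1 * ((2 : ℝ) ^ j) ^ (-a) :=
          mul_le_mul (min_le_left _ _)
            (Real.rpow_le_rpow_of_nonpos (by positivity) hj (by linarith)) (by positivity)
            zero_le_one
      _ ≤ 2 ^ (b - a) * (2 : ℝ) ^ (-min a (b - a) * |(j : ℝ)|) := by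
          rw [← Real.rpow_intCast, ← Real.rpow_mul zero_le_two, abs_of_nonneg hj0']
          exact mul_le_mul (Real.one_le_rpow one_le_two (by linarith))
            (Real.rpow_le_rpow_of_exponent_le one_le_two (by nlinarith [min_le_left a (b - a)]))
            (by positivity) (by positivity)
  · have hj0' : (j : ℝ) ≤ 0 := by exact_mod_cast hj0.le
    calc min 1 (x ^ b) * x ^ (-a) ≤ x ^ b * x ^ (-a) := by
          gcongr
          exact min_le_right _ _
      _ = x ^ (b - a) := by rw [← Real.rpow_add hx, sub_eq_add_neg]
      _ ≤ ((2 : ℝ) ^ (j + 1)) ^ (b - a) := by gcongr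
      _ ≤ 2 ^ (b - a) * (2 : ℝ) ^ (-min a (b - a) * |(j : ℝ)|) := by
          rw [← Real.rpow_intCast, ← Real.rpow_mul zero_le_two, abs_of_nonpos hj0',
            ← Real.rpow_add two_pos]
          refine Real.rpow_le_rpow_of_exponent_le one_le_two ?_
          push_cast
          nlinarith [min_le_right a (b - a)]

theorem exists_tsum_min_one_rpow_mul_rpow_neg_le {a b : ℝ} (ha : 0 < a) (hab : a < b) :
    ∃ C : ℝ≥0∞, C ≠ ⊤ ∧ ∀ ρ : ℝ, 0 < ρ →
      ∑' j : ℤ, ENNReal.ofReal (min 1 ((2 ^ j * ρ) ^ b) * (2 ^ j * ρ) ^ (-a)) ≤ C := by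
  set lam : ℝ := 2 ^ (-min a (b - a))
  have hlam0 : 0 ≤ lam := by positivity
  have hlam1 : lam < 1 := Real.rpow_lt_one_of_one_lt_of_neg one_lt_two
    (neg_lt_zero.2 (lt_min ha (by linarith)))
  have hgeom : Summable fun j : ℤ => 2 ^ (b - a) * lam ^ j.natAbs := by
    refine Summable.mul_left _ (.of_nat_of_neg ?_ ?_) <;>
      simpa using summable_geometric_of_lt_one hlam0 hlam1
  refine ⟨_, hgeom.tsum_ofReal_ne_top, fun ρ hρ => ?_⟩
  obtain ⟨n, hn, hn'⟩ := exists_mem_Ico_zpow hρ one_lt_two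
  rw [← (Equiv.addRight (-n)).tsum_eq]
  refine ENNReal.tsum_le_tsum fun j => ENNReal.ofReal_le_ofReal
    (min_one_rpow_mul_rpow_neg_le ha hab ?_ ?_)
  · calc (2 : ℝ) ^ j = 2 ^ (j + -n) * 2 ^ n := by rw [← zpow_add₀ two_ne_zero]; simp
      _ ≤ _ := by simp only [Equiv.coe_addRight]; gcongr
  · calc _ < (2 : ℝ) ^ (j + -n) * 2 ^ (n + 1) := by simp only [Equiv.coe_addRight]; gcongr
      _ = 2 ^ (j + 1) := by rw [← zpow_add₀ two_ne_zero]; ring_nf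

end DyadicSum

section Gagliardo

theorem lintegral_enorm_rpow_neg_finrank_mul_le {V : Type*} [NormedAddCommGroup V]
    [NormedSpace ℝ V] [FiniteDimensional ℝ V] [Nontrivial V] [MeasurableSpace V] [BorelSpace V]
    (μ : Measure V) [μ.IsAddHaarMeasure] {r δ : ℝ} (hr0 : 0 < r) (hr1 : r < 1)
    (hδ : 0 < δ) :
    ∫⁻ h, ‖h‖ₑ ^ (-(Module.finrank ℝ V : ℝ)) *
        ENNReal.ofReal (min 1 (‖h‖ / δ) * (‖h‖ / δ) ^ (-r)) ∂μ ≤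
      Module.finrank ℝ V * μ (Metric.ball 0 1) * ENNReal.ofReal (1 / (1 - r) + 1 / r) := by
  set n : ℝ := (Module.finrank ℝ V : ℝ)
  set A : ℝ≥0∞ := Module.finrank ℝ V * μ (Metric.ball 0 1)
  have hscale (c : ℝ) {h : V} (hh : h ≠ 0) : ‖h‖ₑ ^ (-n) * ENNReal.ofReal ((‖h‖ / δ) ^ c) =
      ENNReal.ofReal (δ ^ (-c)) * ‖h‖ₑ ^ (-n + c) := by
    have hh' : 0 < ‖h‖ := norm_pos_iff.2 hh
    rw [← ofReal_norm, ENNReal.ofReal_rpow_of_pos hh', ENNReal.ofReal_rpow_of_pos hh',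
      ← ENNReal.ofReal_mul (by positivity), ← ENNReal.ofReal_mul (by positivity),
      Real.div_rpow hh'.le hδ.le, Real.rpow_neg hδ.le, Real.rpow_add hh']
    congr 1
    ring
  have hbound (s : Set V) {c b : ℝ}
      (hle : ∀ x : ℝ, 0 < x → min 1 x * x ^ (-r) ≤ x ^ c)
      (hs : ∫⁻ h in s, ‖h‖ₑ ^ (-n + c) ∂μ = A * ENNReal.ofReal (δ ^ c / b)) :
      ∫⁻ h in s, ‖h‖ₑ ^ (-n) * ENNReal.ofReal (min 1 (‖h‖ / δ) * (‖h‖ / δ) ^ (-r)) ∂μ ≤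
        A * ENNReal.ofReal (1 / b) := by
    calc _ ≤ ∫⁻ h in s, ENNReal.ofReal (δ ^ (-c)) * ‖h‖ₑ ^ (-n + c) ∂μ := by
          refine lintegral_mono_ae (ae_restrict_of_ae ((Measure.ae_ne μ 0).mono fun h hh => ?_))
          rw [← hscale c hh]
          gcongr
          exact hle _ (div_pos (norm_pos_iff.2 hh) hδ)
      _ = A * (ENNReal.ofReal (δ ^ (-c)) * ENNReal.ofReal (δ ^ c / b)) := by
          rw [lintegral_const_mul' _ _ ofReal_ne_top, hs, mul_left_comm]
      _ = A * ENNReal.ofReal (1 / b) := by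
          rw [← ENNReal.ofReal_mul (by positivity), ← mul_div_assoc, ← Real.rpow_add hδ,
            neg_add_cancel, Real.rpow_zero]
  have hnear := hbound (Metric.closedBall 0 δ) (c := 1 - r) (b := 1 - r)
    (fun x hx => by
      rw [sub_eq_add_neg, Real.rpow_add hx, Real.rpow_one]
      gcongr
      exact min_le_right _ _)
    (by rw [setLIntegral_closedBall_enorm_rpow μ (by simp [n, hr1]) hδ.le, add_neg_cancel_left])
  have hfar := hbound (Metric.closedBall 0 δ)ᶜ (c := -r) (b := r)
    (fun x hx => mul_le_of_le_one_left (by positivity) (min_le_left _ _))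
    (by rw [setLIntegral_compl_closedBall_enorm_rpow μ (by simp [n, hr0]) hδ,
      add_neg_cancel_left, neg_div_neg_eq])
  rw [← lintegral_add_compl _ Metric.isClosed_closedBall.measurableSet,
    ENNReal.ofReal_add (one_div_nonneg.2 (by linarith)) (by positivity), mul_add]
  exact add_le_add hnear hfar

theorem gagliardo_rpow_eq_lintegral {d : ℕ} {r p : ℝ} (hp : 0 < p) {F : Type*}
    [NormedAddCommGroup F] {f : Ed d → F} (hf : StronglyMeasurable f) :
    gagliardo d r p f ^ p =
      ∫⁻ h, ‖h‖ₑ ^ (-(r * p + d)) * eLpNorm' (fun x => f (x + h) - f x) p volume ^ p := by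
  have hmeas : Measurable fun q : Ed d × Ed d =>
      ‖q.2‖ₑ ^ (-(r * p + d)) * ‖f (q.1 + q.2) - f q.1‖ₑ ^ p := by
    have hdiff : StronglyMeasurable fun q : Ed d × Ed d => f (q.1 + q.2) - f q.1 :=
      (hf.comp_measurable (by fun_prop)).sub (hf.comp_measurable measurable_fst)
    exact (measurable_snd.enorm.pow_const _).mul (hdiff.enorm.pow_const p)
  calc gagliardo d r p f ^ p
      = ∫⁻ x, ∫⁻ y, ‖f x - f y‖ₑ ^ p / ‖x - y‖ₑ ^ (r * p + d) := by
        rw [gagliardo, ← ENNReal.rpow_mul, one_div_mul_cancel hp.ne', ENNReal.rpow_one]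
        rfl
    _ = ∫⁻ x, ∫⁻ h, ‖h‖ₑ ^ (-(r * p + d)) * ‖f (x + h) - f x‖ₑ ^ p := by
        refine lintegral_congr fun x => ?_
        rw [← lintegral_add_left_eq_self _ x]
        refine lintegral_congr fun h => ?_
        rw [sub_add_cancel_left, enorm_neg, ← enorm_neg (f x - _), neg_sub, ENNReal.rpow_neg,
          div_eq_mul_inv, mul_comm]
    _ = ∫⁻ h, ∫⁻ x, ‖h‖ₑ ^ (-(r * p + d)) * ‖f (x + h) - f x‖ₑ ^ p :=
        lintegral_lintegral_swap hmeas.aemeasurable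
    _ = _ := by
        refine lintegral_congr fun h => ?_
        rw [← lintegral_rpow_enorm_eq_rpow_eLpNorm' hp]
        exact lintegral_const_mul _ (((hf.comp_measurable (by fun_prop)).sub hf).enorm.pow_const p)

theorem exists_tsum_min_one_mul_rpow_le {r p : ℝ} (hr0 : 0 < r) (hr1 : r < 1) (hp : 1 ≤ p) :
    ∃ C : ℝ≥0∞, C ≠ ⊤ ∧ ∀ (a : ℤ → ℝ≥0∞) (x : ℝ), 0 < x →
      (∑' j : ℤ, ENNReal.ofReal (min 1 (x / 2 ^ j)) * a j) ^ p ≤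
        C * ENNReal.ofReal x ^ (r * p) * ∑' j : ℤ,
          ENNReal.ofReal (min 1 (x / 2 ^ j) * (x / 2 ^ j) ^ (-r)) *
            (ENNReal.ofReal ((2 ^ j) ^ (-r)) * a j) ^ p := by
  obtain ⟨C, hC, hsum⟩ := exists_tsum_min_one_rpow_mul_rpow_neg_le hr0 hr1
  refine ⟨C ^ (p - 1), ENNReal.rpow_ne_top_of_nonneg (by linarith) hC, fun a x hx => ?_⟩
  set w : ℤ → ℝ≥0∞ := fun j => ENNReal.ofReal (min 1 (x / 2 ^ j) * (x / 2 ^ j) ^ (-r))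
  have hw : ∑' j, w j ≤ C := by
    rw [← (Equiv.neg ℤ).tsum_eq]
    refine le_of_eq_of_le (tsum_congr fun j => ?_) (hsum x hx)
    simp only [w, Equiv.neg_apply, zpow_neg, div_inv_eq_mul, Real.rpow_one, mul_comm x]
  have hfactor (j : ℤ) : ENNReal.ofReal (min 1 (x / 2 ^ j)) * a j =
      w j * (ENNReal.ofReal (x ^ r) * (ENNReal.ofReal ((2 ^ j) ^ (-r)) * a j)) := by
    rw [← mul_assoc, ← mul_assoc, ← ENNReal.ofReal_mul (by positivity),
      ← ENNReal.ofReal_mul (by positivity), Real.rpow_neg (by positivity),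
      Real.rpow_neg (by positivity), Real.div_rpow hx.le (by positivity)]
    congr 2
    field_simp
  calc (∑' j : ℤ, ENNReal.ofReal (min 1 (x / 2 ^ j)) * a j) ^ p
      ≤ (∑' j, w j) ^ (p - 1) * ∑' j, w j *
          (ENNReal.ofReal (x ^ r) * (ENNReal.ofReal ((2 ^ j) ^ (-r)) * a j)) ^ p := by
        simp_rw [hfactor]
        exact tsum_mul_rpow_le hp _ _
    _ ≤ C ^ (p - 1) * ∑' j, ENNReal.ofReal x ^ (r * p) *
          (w j * (ENNReal.ofReal ((2 ^ j) ^ (-r)) * a j) ^ p) := by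
        refine mul_le_mul' (ENNReal.rpow_le_rpow hw (by linarith))
          (ENNReal.tsum_le_tsum fun j => le_of_eq ?_)
        rw [ENNReal.mul_rpow_of_nonneg _ _ (by linarith), ← ENNReal.ofReal_rpow_of_pos hx,
          ← ENNReal.rpow_mul, mul_left_comm]
    _ = _ := by rw [ENNReal.tsum_mul_left, mul_assoc]

theorem exists_gagliardo_le_tsum {d : ℕ} [NeZero d] {F : Type*} [NormedAddCommGroup F] {r p : ℝ}
    (hr0 : 0 < r) (hr1 : r < 1) (hp : 1 ≤ p) :
    ∃ C : ℝ≥0∞, C ≠ ⊤ ∧ ∀ (f : Ed d → F) (a : ℤ → ℝ≥0∞),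
      StronglyMeasurable f →
      (∀ h, eLpNorm' (fun x => f (x + h) - f x) p volume ≤
        ∑' j : ℤ, ENNReal.ofReal (min 1 (‖h‖ / 2 ^ j)) * a j) →
      gagliardo d r p f ≤
        C * (∑' j : ℤ, (ENNReal.ofReal ((2 ^ j) ^ (-r)) * a j) ^ p) ^ (1 / p) := by
  have hp0 : 0 < p := by linarith
  obtain ⟨C, hC, hpow⟩ := exists_tsum_min_one_mul_rpow_le hr0 hr1 hp
  set A : ℝ≥0∞ := Module.finrank ℝ (Ed d) * volume (Metric.ball (0 : Ed d) 1) *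
    ENNReal.ofReal (1 / (1 - r) + 1 / r)
  have hA : A ≠ ⊤ := by finiteness
  refine ⟨(C * A) ^ (1 / p), by finiteness, fun f a hf hdiff => ?_⟩
  rw [← ENNReal.mul_rpow_of_nonneg _ _ (by positivity),
    ← ENNReal.rpow_inv_le_iff (by positivity), inv_div, div_one]
  set b : ℤ → ℝ≥0∞ := fun j => (ENNReal.ofReal ((2 ^ j) ^ (-r)) * a j) ^ p
  set w : ℤ → Ed d → ℝ≥0∞ := fun j h => ‖h‖ₑ ^ (-(Module.finrank ℝ (Ed d) : ℝ)) *
    ENNReal.ofReal (min 1 (‖h‖ / 2 ^ j) * (‖h‖ / 2 ^ j) ^ (-r))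
  have hpointwise : ∀ h ≠ 0, ‖h‖ₑ ^ (-(r * p + d)) *
      eLpNorm' (fun x => f (x + h) - f x) p volume ^ p ≤ C * ∑' j, w j h * b j := by
    intro h hh
    have hh0 : ‖h‖ₑ ≠ 0 := enorm_ne_zero.2 hh
    grw [hdiff h, hpow a ‖h‖ (norm_pos_iff.2 hh)]
    rw [ofReal_norm, ← mul_assoc, mul_left_comm, ← ENNReal.rpow_add _ _ hh0 enorm_ne_top,
      mul_assoc, ← ENNReal.tsum_mul_left]
    simp_rw [w, finrank_euclideanSpace_fin, mul_assoc]
    ring_nf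
    rfl
  calc gagliardo d r p f ^ p
      = ∫⁻ h, ‖h‖ₑ ^ (-(r * p + d)) * eLpNorm' (fun x => f (x + h) - f x) p volume ^ p :=
        gagliardo_rpow_eq_lintegral hp0 hf
    _ ≤ ∫⁻ h, C * ∑' j, w j h * b j :=
        lintegral_mono_ae ((Measure.ae_ne volume 0).mono hpointwise)
    _ = C * ∑' j, (∫⁻ h, w j h) * b j := by
        have hw (j : ℤ) : Measurable (w j) := by fun_prop
        rw [lintegral_const_mul' _ _ hC, lintegral_tsum fun j => ((hw j).mul_const _).aemeasurable]
        congr! 3 with j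
        exact lintegral_mul_const (b j) (hw j)
    _ ≤ C * ∑' j, A * b j := by
        gcongr with j
        exact lintegral_enorm_rpow_neg_finrank_mul_le volume hr0 hr1 (by positivity)
    _ = C * A * ∑' j, b j := by rw [ENNReal.tsum_mul_left, ← mul_assoc]

end Gagliardo

section Difference

theorem eLpNorm'_comp_add_right {V F : Type*} [AddGroup V] [MeasurableSpace V] [MeasurableAdd V]
    [ENorm F] {μ : Measure V} [μ.IsAddRightInvariant] (p : ℝ) (f : V → F) (h : V) :
    eLpNorm' (fun x => f (x + h)) p μ = eLpNorm' f p μ := by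
  rw [eLpNorm', lintegral_add_right_eq_self fun x => ‖f x‖ₑ ^ p, eLpNorm']

theorem eLpNorm'_add_sub_le_of_hasLineDerivAt {V F : Type*} [NormedAddCommGroup V]
    [NormedSpace ℝ V] [MeasurableSpace V] [BorelSpace V] [SecondCountableTopology V]
    [NormedAddCommGroup F] [NormedSpace ℝ F] [CompleteSpace F] {μ : Measure V} [SFinite μ]
    [μ.IsAddRightInvariant] {p : ℝ} (hp : 1 ≤ p) {f f' : V → F} {h : V}
    (hf : ∀ x, HasLineDerivAt ℝ f (f' x) x h) (hf' : Continuous f') :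
    eLpNorm' (fun x => f (x + h) - f x) p μ ≤ eLpNorm' f' p μ := by
  have hsegment (x : V) : ‖f (x + h) - f x‖ₑ ≤ ∫⁻ s in Set.Ioc (0 : ℝ) 1, ‖f' (x + s • h)‖ₑ := by
    have hderiv (s : ℝ) : HasDerivAt (fun s : ℝ => f (x + s • h)) (f' (x + s • h)) s := by
      have := HasDerivAt.comp_sub_const s s
        (f := fun τ : ℝ => f (x + s • h + τ • h)) (by rw [sub_self]; exact hf _)
      simpa [sub_smul] using this
    have hFTC := intervalIntegral.integral_eq_sub_of_hasDerivAt (a := 0) (b := 1)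
      (fun s _ => hderiv s) (Continuous.intervalIntegrable (by fun_prop) _ _)
    simp only [one_smul, zero_smul, add_zero] at hFTC
    rw [← hFTC, intervalIntegral.integral_of_le zero_le_one]
    exact enorm_integral_le_lintegral_enorm _
  calc eLpNorm' (fun x => f (x + h) - f x) p μ
      ≤ eLpNorm' (fun x => ∫⁻ s in Set.Ioc (0 : ℝ) 1, ‖f' (x + s • h)‖ₑ) p μ :=
        eLpNorm'_mono_enorm_ae (by linarith) (.of_forall hsegment)
    _ ≤ ∫⁻ s in Set.Ioc (0 : ℝ) 1, eLpNorm' (fun x => ‖f' (x + s • h)‖ₑ) p μ :=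
        eLpNorm'_lintegral_le hp (by
          have : Continuous fun q : V × ℝ => ‖f' (q.1 + q.2 • h)‖ₑ := by fun_prop
          exact this.measurable)
    _ = eLpNorm' f' p μ := by simp [eLpNorm'_enorm, eLpNorm'_comp_add_right]

theorem hasDerivAt_planeWave_add_smul {V : Type*} [NormedAddCommGroup V] [InnerProductSpace ℝ V]
    (x h κ : V) (s : ℝ) :
    HasDerivAt (fun s : ℝ => planeWave (x + s • h) κ)
      (Complex.I * ⟪h, κ⟫ * planeWave (x + s • h) κ) s := by
  have hphase : HasDerivAt (fun s : ℝ => Complex.I * (⟪x + s • h, κ⟫ : ℂ))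
      (Complex.I * ⟪h, κ⟫) s := by
    simp only [inner_add_left, inner_smul_left, conj_trivial]
    simpa using ((((hasDerivAt_id s).mul_const ⟪h, κ⟫).const_add ⟪x, κ⟫).ofReal_comp).const_mul
      Complex.I
  simpa only [planeWave, mul_comm] using hphase.cexp

theorem continuous_waveExtension {L : ℝ} (hL : 0 ≤ L) {G : Ed 3 → ℂ} (hG : Integrable G) (t : ℝ) :
    Continuous (waveExtension L G t) := by
  exact continuous_of_dominated
    (fun x => (integrable_mul_gaussWave_mul_planeWave hL hG t x).aestronglyMeasurable)
    (fun x => .of_forall fun κ => norm_mul_gaussWave_mul_planeWave_le hL (G κ) t x κ) hG.norm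
    (.of_forall fun κ => by fun_prop)

theorem hasLineDerivAt_waveExtension {L : ℝ} (hL : 0 ≤ L) {G : Ed 3 → ℂ} (hG : Integrable G)
    {h : Ed 3} (hG' : Integrable fun κ => ⟪h, κ⟫ * G κ) (t : ℝ) (x : Ed 3) :
    HasLineDerivAt ℝ (waveExtension L G t)
      (Complex.I * waveExtension L (fun κ => ⟪h, κ⟫ * G κ) t x) x h := by
  have hderiv := (hasDerivAt_integral_of_dominated_loc_of_deriv_le (μ := volume) (𝕜 := ℝ)
    (F := fun s κ => G κ * (gaussWave L t ‖κ‖ * planeWave (x + s • h) κ))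
    (F' := fun s κ => Complex.I *
      (⟪h, κ⟫ * G κ * (gaussWave L t ‖κ‖ * planeWave (x + s • h) κ))) (x₀ := 0)
    (bound := fun κ => ‖⟪h, κ⟫ * G κ‖) Filter.univ_mem
    (.of_forall fun s => (integrable_mul_gaussWave_mul_planeWave hL hG t _).aestronglyMeasurable)
    (integrable_mul_gaussWave_mul_planeWave hL hG t _)
    ((integrable_mul_gaussWave_mul_planeWave hL hG' t _).aestronglyMeasurable.const_mul _)
    (.of_forall fun κ s _ => ?_) hG'.norm (.of_forall fun κ s _ => ?_)).2
  · rw [integral_const_mul] at hderiv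
    simp only [zero_smul, add_zero] at hderiv
    exact hderiv
  · rw [norm_mul, Complex.norm_I, one_mul]
    exact norm_mul_gaussWave_mul_planeWave_le hL _ t _ κ
  · exact ((hasDerivAt_planeWave_add_smul x h κ s).const_mul (G κ * gaussWave L t ‖κ‖)).congr_deriv
      (by ring) |>.congr_of_eventuallyEq (.of_forall fun s => by simp only [mul_assoc])

/-- The symbols `1` and `l * κ i` of the identity and of the partial derivatives rescaled to length
`l` (up to the factor `i`), so that a translation difference at scale `l` is controlled by them. -/
noncomputable def gradientSymbol (l : ℝ) : Option (Fin 3) → Ed 3 → ℂ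
  | none, _ => 1
  | some i, κ => l * κ i

theorem inner_eq_sum_mul_gradientSymbol {l : ℝ} (hl : 0 < l) (h κ : Ed 3) :
    (⟪h, κ⟫ : ℂ) = ∑ i : Fin 3, h i / l * gradientSymbol l (some i) κ := by
  rw [PiLp.inner_apply, Complex.ofReal_sum]
  refine Finset.sum_congr rfl fun i _ => ?_
  have hl' : (l : ℂ) ≠ 0 := Complex.ofReal_ne_zero.2 hl.ne'
  simp only [gradientSymbol, RCLike.inner_apply, conj_trivial, Complex.ofReal_mul]
  field_simp

theorem eLpNorm'_waveExtension_inner_mul_le {p : ℝ} (hp : 1 ≤ p) {L l : ℝ} (hL : 0 ≤ L)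
    (hl : 0 < l) {G : Ed 3 → ℂ} (hG : ∀ o, Integrable fun κ => gradientSymbol l o κ * G κ)
    (t : ℝ) (h : Ed 3) :
    eLpNorm' (waveExtension L (fun κ => ⟪h, κ⟫ * G κ) t) p volume ≤ ENNReal.ofReal (‖h‖ / l) *
      ∑ i, eLpNorm' (waveExtension L (fun κ => gradientSymbol l (some i) κ * G κ) t) p volume := by
  set u : Fin 3 → Ed 3 → ℂ := fun i =>
    waveExtension L (fun κ => gradientSymbol l (some i) κ * G κ) t
  have hu (i : Fin 3) : Continuous (u i) := continuous_waveExtension hL (hG (some i)) t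
  have hlinear : waveExtension L (fun κ => ⟪h, κ⟫ * G κ) t = ∑ i, (h i / l : ℂ) • u i := by
    ext x
    simp_rw [Finset.sum_apply, Pi.smul_apply, smul_eq_mul, u, waveExtension, ← integral_const_mul]
    rw [← integral_finsetSum _ fun i _ =>
      (integrable_mul_gaussWave_mul_planeWave hL (hG (some i)) t x).const_mul _]
    simp_rw [inner_eq_sum_mul_gradientSymbol hl, Finset.sum_mul, mul_assoc]
  have hcoeff (i : Fin 3) : ‖(h i / l : ℂ)‖ₑ ≤ ENNReal.ofReal (‖h‖ / l) := by
    rw [← ofReal_norm, norm_div, Complex.norm_real, Complex.norm_real, Real.norm_of_nonneg hl.le]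
    gcongr
    exact PiLp.norm_apply_le h i
  rw [hlinear, Finset.mul_sum]
  refine (eLpNorm'_sum_le (fun i _ => ((hu i).const_smul _).aestronglyMeasurable) hp).trans
    (Finset.sum_le_sum fun i _ => ?_)
  rw [eLpNorm'_const_smul _ (by linarith)]
  gcongr
  exact hcoeff i

theorem eLpNorm'_waveExtension_add_sub_le {p : ℝ} (hp : 1 ≤ p) {L l : ℝ} (hL : 0 ≤ L) (hl : 0 < l)
    {G : Ed 3 → ℂ} (hG : ∀ o, Integrable fun κ => gradientSymbol l o κ * G κ) (t : ℝ) (h : Ed 3) :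
    eLpNorm' (fun x => waveExtension L G t (x + h) - waveExtension L G t x) p volume ≤
      ENNReal.ofReal (min 1 (‖h‖ / l)) *
        (2 * ∑ o, eLpNorm' (waveExtension L (fun κ => gradientSymbol l o κ * G κ) t) p volume) := by
  set u : Option (Fin 3) → Ed 3 → ℂ := fun o =>
    waveExtension L (fun κ => gradientSymbol l o κ * G κ) t
  have hnone : u none = waveExtension L G t := by simp only [u, gradientSymbol, one_mul]
  have hGi : Integrable G := by simpa only [gradientSymbol, one_mul] using hG none
  have hGi' : Integrable fun κ => ⟪h, κ⟫ * G κ := by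
    simp_rw [inner_eq_sum_mul_gradientSymbol hl, Finset.sum_mul, mul_assoc]
    exact integrable_finsetSum _ fun i _ => (hG (some i)).const_mul _
  have hu : Continuous (waveExtension L G t) := continuous_waveExtension hL hGi t
  have htrivial :
      eLpNorm' (fun x => waveExtension L G t (x + h) - waveExtension L G t x) p volume ≤
        2 * eLpNorm' (u none) p volume := by
    have hsub := eLpNorm'_add_le (q := p) (μ := volume)
      (hu.comp (continuous_add_const h)).aestronglyMeasurable hu.neg.aestronglyMeasurable hp
    rw [eLpNorm'_neg] at hsub
    rw [hnone, two_mul]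
    nth_rewrite 1 [← eLpNorm'_comp_add_right p (waveExtension L G t) h]
    simp_rw [sub_eq_add_neg]
    exact hsub
  have hgradient :
      eLpNorm' (fun x => waveExtension L G t (x + h) - waveExtension L G t x) p volume ≤
        ENNReal.ofReal (‖h‖ / l) * ∑ i, eLpNorm' (u (some i)) p volume := by
    refine (eLpNorm'_add_sub_le_of_hasLineDerivAt hp (hasLineDerivAt_waveExtension hL hGi hGi' t)
      ((continuous_waveExtension hL hGi' t).const_mul _)).trans (le_of_eq_of_le ?_
        (eLpNorm'_waveExtension_inner_mul_le hp hL hl hG t h))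
    refine (eLpNorm'_const_smul Complex.I (by linarith)).trans ?_
    rw [← ofReal_norm, Complex.norm_I, ENNReal.ofReal_one, one_mul]
  rw [Fintype.sum_option]
  rcases min_cases 1 (‖h‖ / l) with ⟨hmin, -⟩ | ⟨hmin, -⟩ <;> rw [hmin]
  · grw [htrivial, ENNReal.ofReal_one, one_mul]
    gcongr
    exact le_self_add
  · grw [hgradient, two_mul]
    gcongr
    exact le_add_self.trans le_self_add

end Difference

section LittlewoodPaley

theorem hasSum_int_sub_of_antitone {g : ℤ → ℝ} (hg : Antitone g) {a b : ℝ}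
    (htop : Filter.Tendsto g Filter.atTop (nhds a))
    (hbot : Filter.Tendsto g Filter.atBot (nhds b)) :
    HasSum (fun j => g j - g (j + 1)) (b - a) := by
  have hnonneg (j : ℤ) : 0 ≤ g j - g (j + 1) := sub_nonneg.2 (hg (by lia))
  have hnat : HasSum (fun n : ℕ => g n - g (n + 1)) (g 0 - a) := by
    rw [hasSum_iff_tendsto_nat_of_nonneg fun n => hnonneg n]
    have htel (n : ℕ) : ∑ i ∈ Finset.range n, (g i - g (i + 1)) = g 0 - g n :=
      Finset.sum_range_sub' (fun i : ℕ => g i) n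
    simp_rw [htel]
    exact (htop.comp tendsto_natCast_atTop_atTop).const_sub _
  have hneg : HasSum (fun n : ℕ => g (-(n + 1)) - g (-(n + 1) + 1)) (b - g 0) := by
    rw [hasSum_iff_tendsto_nat_of_nonneg fun n => hnonneg _]
    have htel (n : ℕ) :
        ∑ i ∈ Finset.range n, (g (-(i + 1)) - g (-(i + 1) + 1)) = g (-n) - g 0 := by
      simpa only [Nat.cast_add, Nat.cast_one, Nat.cast_zero, neg_zero, neg_add,
        neg_add_cancel_right] using Finset.sum_range_sub (fun i : ℕ => g (-i)) n
    simp_rw [htel]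
    exact (hbot.comp (Filter.tendsto_neg_atTop_atBot.comp tendsto_natCast_atTop_atTop)).sub_const _
  have hsum := HasSum.of_nat_of_neg_add_one (f := fun j : ℤ => g j - g (j + 1)) hnat hneg
  rwa [add_comm, sub_add_sub_cancel] at hsum

/-- The profile of the dyadic frequency cutoffs, `e^(-x²) - e^(-4x²)` deprived of a factor
`e^(-x²/2)` which is left to damp the wave extension. -/
noncomputable def dyadicBump (x : ℝ) : ℝ := Real.exp (-x ^ 2 / 2) * (1 - Real.exp (-3 * x ^ 2))

@[fun_prop]
theorem continuous_dyadicBump : Continuous dyadicBump := by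
  unfold dyadicBump
  fun_prop

theorem dyadicBump_nonneg (x : ℝ) : 0 ≤ dyadicBump x :=
  mul_nonneg (Real.exp_nonneg _) (sub_nonneg.2 (Real.exp_le_one_iff.2 (by nlinarith [sq_nonneg x])))

theorem max_one_mul_dyadicBump_le (x : ℝ) : max 1 x * dyadicBump x ≤ 3 * min 1 (x ^ 2) := by
  have hexp : max 1 x * Real.exp (-x ^ 2 / 2) ≤ 1 := by
    have hmax : max 1 x ≤ Real.exp (x ^ 2 / 2) :=
      max_le (Real.one_le_exp (by positivity))
        (by nlinarith [Real.add_one_le_exp (x ^ 2 / 2), sq_nonneg (x - 1)])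
    rw [neg_div, Real.exp_neg]
    exact mul_inv_le_one_of_le₀ hmax (Real.exp_nonneg _)
  have hdiff0 : 0 ≤ 1 - Real.exp (-3 * x ^ 2) :=
    sub_nonneg.2 (Real.exp_le_one_iff.2 (by nlinarith [sq_nonneg x]))
  have hdiff : 1 - Real.exp (-3 * x ^ 2) ≤ 3 * min 1 (x ^ 2) := by
    rw [mul_min_of_nonneg _ _ zero_le_three]
    exact le_min (by linarith [Real.exp_nonneg (-3 * x ^ 2)])
      (by linarith [Real.add_one_le_exp (-3 * x ^ 2)])
  calc max 1 x * dyadicBump x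
      = max 1 x * Real.exp (-x ^ 2 / 2) * (1 - Real.exp (-3 * x ^ 2)) := (mul_assoc _ _ _).symm
    _ ≤ 1 * (3 * min 1 (x ^ 2)) := mul_le_mul hexp hdiff hdiff0 zero_le_one
    _ = 3 * min 1 (x ^ 2) := one_mul _

theorem hasSum_exp_mul_dyadicBump {ρ : ℝ} (hρ : 0 < ρ) :
    HasSum (fun j : ℤ => Real.exp (-(2 ^ j * ρ) ^ 2 / 2) * dyadicBump (2 ^ j * ρ)) 1 := by
  set g : ℤ → ℝ := fun j => Real.exp (-(2 ^ j * ρ) ^ 2)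
  have hg : Antitone g := fun i j hij => by
    simp only [g]
    gcongr
    exact one_le_two
  have htop : Filter.Tendsto g Filter.atTop (nhds 0) := by
    have hpow := (tendsto_rpow_atTop_of_base_gt_one 2 one_lt_two).comp tendsto_intCast_atTop_atTop
    have hsq := (Filter.tendsto_pow_atTop two_ne_zero).comp (hpow.atTop_mul_const hρ)
    refine (Real.tendsto_exp_neg_atTop_nhds_zero.comp hsq).congr fun j => ?_
    simp [g]
  have hbot : Filter.Tendsto g Filter.atBot (nhds 1) := by
    have hpow := (tendsto_rpow_atBot_of_base_gt_one 2 one_lt_two).comp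
      (tendsto_intCast_atBot_iff.2 Filter.tendsto_id)
    have hexp := ((hpow.mul_const ρ).pow 2).neg.rexp
    rw [zero_mul, zero_pow two_ne_zero, neg_zero, Real.exp_zero] at hexp
    refine hexp.congr fun j => ?_
    simp [g]
  have hsum := hasSum_int_sub_of_antitone hg htop hbot
  rw [sub_zero] at hsum
  refine hsum.congr_fun fun j => ?_
  rw [dyadicBump, ← mul_assoc, ← Real.exp_add, mul_sub, mul_one, ← Real.exp_add]
  simp only [g, zpow_add_one₀ (two_ne_zero (α := ℝ))]
  ring_nf

theorem gaussWave_sq (l τ ρ : ℝ) :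
    gaussWave (l ^ 2) τ ρ = Real.exp (-(l * ρ) ^ 2 / 2) * gaussWave 0 τ ρ := by
  rw [gaussWave, gaussWave, Complex.ofReal_exp, ← Complex.exp_add]
  congr 1
  push_cast
  ring

/-- The localisation of `G` to the frequencies of size about `l⁻¹`. -/
noncomputable def dyadicCutoff {V : Type*} [Norm V] (l : ℝ) (G : V → ℂ) (κ : V) : ℂ :=
  dyadicBump (l * ‖κ‖) * G κ

theorem measurable_dyadicCutoff {V : Type*} [NormedAddCommGroup V] [MeasurableSpace V]
    [OpensMeasurableSpace V] (l : ℝ) {G : V → ℂ} (hG : Measurable G) :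
    Measurable (dyadicCutoff l G) := by
  have hbump : Measurable fun κ : V => (dyadicBump (l * ‖κ‖) : ℂ) :=
    (by fun_prop : Continuous fun κ : V => (dyadicBump (l * ‖κ‖) : ℂ)).measurable
  exact hbump.mul hG

theorem hasSum_waveExtension_dyadicCutoff {G : Ed 3 → ℂ} (hG : Integrable G) (t : ℝ) (x : Ed 3) :
    HasSum (fun j : ℤ => waveExtension ((2 ^ j) ^ 2) (dyadicCutoff (2 ^ j) G) t x)
      (waveExtension 0 G t x) := by
  set e : ℤ → Ed 3 → ℝ := fun j κ =>
    Real.exp (-(2 ^ j * ‖κ‖) ^ 2 / 2) * dyadicBump (2 ^ j * ‖κ‖)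
  set H : Ed 3 → ℂ := fun κ => G κ * (gaussWave 0 t ‖κ‖ * planeWave x κ)
  have he (j : ℤ) : Continuous (e j) := by fun_prop
  have he0 (j : ℤ) (κ : Ed 3) : 0 ≤ e j κ := mul_nonneg (Real.exp_nonneg _) (dyadicBump_nonneg _)
  have hH : AEStronglyMeasurable H :=
    (integrable_mul_gaussWave_mul_planeWave le_rfl hG t x).aestronglyMeasurable
  have hsum : ∀ᵐ κ : Ed 3, HasSum (fun j => e j κ) 1 :=
    (Measure.ae_ne volume 0).mono fun κ hκ => hasSum_exp_mul_dyadicBump (norm_pos_iff.2 hκ)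
  have hpiece (j : ℤ) : waveExtension ((2 ^ j) ^ 2) (dyadicCutoff (2 ^ j) G) t x =
      ∫ κ, (e j κ : ℂ) * H κ := by
    refine integral_congr_ae (.of_forall fun κ => ?_)
    simp only [dyadicCutoff, gaussWave_sq, e, H, Complex.ofReal_mul]
    ring
  simp_rw [hpiece]
  refine hasSum_integral_of_dominated_convergence (fun j κ => e j κ * ‖G κ‖)
    (fun j => ((Complex.continuous_ofReal.comp (he j)).aestronglyMeasurable).mul hH)
    (fun j => .of_forall fun κ => ?_)
    (hsum.mono fun κ hκ => hκ.summable.mul_right _) ?_ (hsum.mono fun κ hκ => ?_)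
  · rw [norm_mul, Complex.norm_real, Real.norm_of_nonneg (he0 j κ)]
    exact mul_le_mul_of_nonneg_left (norm_mul_gaussWave_mul_planeWave_le le_rfl _ t x κ) (he0 j κ)
  · refine hG.norm.congr (hsum.mono fun κ hκ => ?_)
    simp only [tsum_mul_right, hκ.tsum_eq, one_mul]
  · simpa using (Complex.hasSum_ofReal.2 hκ).mul_right (H κ)

theorem norm_gradientSymbol_mul_dyadicCutoff_le {l : ℝ} (hl : 0 < l) (o : Option (Fin 3))
    (G : Ed 3 → ℂ) (κ : Ed 3) :
    ‖gradientSymbol l o κ * dyadicCutoff l G κ‖ ≤ 3 * min 1 ((l * ‖κ‖) ^ 2) * ‖G κ‖ := by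
  have hsymbol : ‖gradientSymbol l o κ‖ ≤ max 1 (l * ‖κ‖) := by
    rcases o with - | i
    · simp [gradientSymbol]
    · rw [gradientSymbol, norm_mul, Complex.norm_real, Complex.norm_real, Real.norm_of_nonneg hl.le]
      refine le_max_of_le_right ?_
      gcongr
      exact PiLp.norm_apply_le κ i
  rw [dyadicCutoff, ← mul_assoc, norm_mul, norm_mul, Complex.norm_real,
    Real.norm_of_nonneg (dyadicBump_nonneg _)]
  exact mul_le_mul_of_nonneg_right ((mul_le_mul_of_nonneg_right hsymbol
    (dyadicBump_nonneg _)).trans (max_one_mul_dyadicBump_le _)) (norm_nonneg _)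

end LittlewoodPaley

section HomogeneousStrichartz

theorem rpow_neg_mul_min_one_rpow_two {x ρ : ℝ} (θ : ℝ) (hx : 0 < x) (hρ : 0 < ρ) :
    (x ^ (-θ) * min 1 ((x * ρ) ^ 2)) ^ (2 : ℝ) =
      min 1 ((x * ρ) ^ (4 : ℝ)) * (x * ρ) ^ (-(2 * θ)) * (ρ ^ θ) ^ (2 : ℝ) := by
  have hmin : min 1 ((x * ρ) ^ 2) ^ (2 : ℝ) = min 1 ((x * ρ) ^ (4 : ℝ)) := by
    rw [(Real.monotoneOn_rpow_Ici_of_exponent_nonneg zero_le_two).map_min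
      (Set.mem_Ici.2 zero_le_one) (Set.mem_Ici.2 (by positivity)), Real.one_rpow,
      ← Real.rpow_natCast, ← Real.rpow_mul (by positivity)]
    norm_num
  have hpow : x ^ (-θ) = (x * ρ) ^ (-θ) * ρ ^ θ := by
    rw [Real.mul_rpow hx.le hρ.le, mul_assoc, ← Real.rpow_add hρ, neg_add_cancel, Real.rpow_zero,
      mul_one]
  rw [Real.mul_rpow (by positivity) (by positivity), hmin, hpow,
    Real.mul_rpow (by positivity) (by positivity), ← Real.rpow_mul (by positivity)]
  ring_nf

theorem exists_tsum_eLpNorm'_min_one_mul_le {V : Type*} [NormedAddCommGroup V]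
    [MeasurableSpace V] [OpensMeasurableSpace V] (μ : Measure V) {θ : ℝ} (hθ0 : 0 < θ)
    (hθ2 : θ < 2) :
    ∃ C : ℝ≥0∞, C ≠ ⊤ ∧ ∀ g : V → ℝ≥0∞, Measurable g →
      ∑' j : ℤ, (ENNReal.ofReal ((2 ^ j) ^ (-θ)) *
          eLpNorm' (fun κ => ENNReal.ofReal (min 1 ((2 ^ j * ‖κ‖) ^ 2)) * g κ) 2 μ) ^ (2 : ℝ) ≤
        C * eLpNorm' (fun κ => ‖κ‖ₑ ^ θ * g κ) 2 μ ^ (2 : ℝ) := by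
  obtain ⟨C, hC, hsum⟩ :=
    exists_tsum_min_one_rpow_mul_rpow_neg_le (a := 2 * θ) (b := 4) (by linarith) (by linarith)
  refine ⟨C, hC, fun g hg => ?_⟩
  set m : ℤ → V → ℝ≥0∞ := fun j κ =>
    ENNReal.ofReal ((2 ^ j) ^ (-θ)) * ENNReal.ofReal (min 1 ((2 ^ j * ‖κ‖) ^ 2))
  have hm (j : ℤ) {κ : V} (hκ : κ ≠ 0) : m j κ ^ (2 : ℝ) =
      ENNReal.ofReal (min 1 ((2 ^ j * ‖κ‖) ^ (4 : ℝ)) * (2 ^ j * ‖κ‖) ^ (-(2 * θ))) *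
        (‖κ‖ₑ ^ θ) ^ (2 : ℝ) := by
    have hκ' : 0 < ‖κ‖ := norm_pos_iff.2 hκ
    simp only [m]
    rw [← ENNReal.ofReal_mul (by positivity),
      ENNReal.ofReal_rpow_of_nonneg (by positivity) zero_le_two,
      rpow_neg_mul_min_one_rpow_two _ (by positivity) hκ', ENNReal.ofReal_mul (by positivity),
      ← ENNReal.ofReal_rpow_of_nonneg (by positivity) zero_le_two, ← ENNReal.ofReal_rpow_of_pos hκ',
      ofReal_norm]
  have hpointwise (κ : V) :
      ∑' j, (m j κ * g κ) ^ (2 : ℝ) ≤ C * (‖κ‖ₑ ^ θ * g κ) ^ (2 : ℝ) := by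
    rcases eq_or_ne κ 0 with rfl | hκ
    · simp [m]
    · simp_rw [ENNReal.mul_rpow_of_nonneg _ _ zero_le_two, hm _ hκ, mul_assoc]
      rw [ENNReal.tsum_mul_right]
      gcongr
      exact hsum _ (norm_pos_iff.2 hκ)
  calc _ = ∑' j, ∫⁻ κ, (m j κ * g κ) ^ (2 : ℝ) ∂μ := by
        refine tsum_congr fun j => ?_
        rw [← eLpNorm'_const_mul two_pos ofReal_ne_top, ← lintegral_rpow_eq_rpow_eLpNorm' two_pos]
        simp only [m, mul_assoc]
    _ = ∫⁻ κ, ∑' j, (m j κ * g κ) ^ (2 : ℝ) ∂μ :=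
        (lintegral_tsum fun j => (by fun_prop : Measurable _).aemeasurable).symm
    _ ≤ ∫⁻ κ, C * (‖κ‖ₑ ^ θ * g κ) ^ (2 : ℝ) ∂μ := lintegral_mono hpointwise
    _ = _ := by rw [lintegral_const_mul' _ _ hC, lintegral_rpow_eq_rpow_eLpNorm' two_pos]

theorem measurable_gradientSymbol (l : ℝ) (o : Option (Fin 3)) :
    Measurable (gradientSymbol l o) := by
  rcases o with - | i
  · exact measurable_const
  · exact (by fun_prop : Measurable fun κ : Ed 3 => (l * κ i : ℂ))

theorem integrable_gradientSymbol_mul_dyadicCutoff {l : ℝ} (hl : 0 < l) (o : Option (Fin 3))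
    {G : Ed 3 → ℂ} (hG : Measurable G) (hGi : Integrable G) :
    Integrable fun κ => gradientSymbol l o κ * dyadicCutoff l G κ := by
  refine (hGi.norm.const_mul 3).mono'
    ((measurable_gradientSymbol l o).mul (measurable_dyadicCutoff l hG)).aestronglyMeasurable
    (.of_forall fun κ => (norm_gradientSymbol_mul_dyadicCutoff_le hl o G κ).trans ?_)
  gcongr
  exact mul_le_of_le_one_right zero_le_three (min_le_left _ _)

/-- The `L^p` norm at time `t` of the piece of `waveExtension 0 G` with frequencies of size about
`l⁻¹`, together with that of `l` times its gradient. -/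
noncomputable def dyadicPieceNorm (p l : ℝ) (G : Ed 3 → ℂ) (t : ℝ) : ℝ≥0∞ :=
  2 * ∑ o, eLpNorm' (waveExtension (l ^ 2)
    (fun κ => gradientSymbol l o κ * dyadicCutoff l G κ) t) p volume

theorem measurable_eLpNorm'_waveExtension (L p : ℝ) {G : Ed 3 → ℂ} (hG : Measurable G) :
    Measurable fun t => eLpNorm' (waveExtension L G t) p volume :=
  ((measurable_uncurry_waveExtension L hG).enorm.pow_const p).lintegral_prod_right.pow_const _

theorem measurable_dyadicPieceNorm (p l : ℝ) {G : Ed 3 → ℂ} (hG : Measurable G) :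
    Measurable (dyadicPieceNorm p l G) :=
  (Finset.measurable_fun_sum _ fun o _ => measurable_eLpNorm'_waveExtension _ p
    ((measurable_gradientSymbol l o).mul (measurable_dyadicCutoff l hG))).const_mul 2

theorem exists_gagliardo_waveExtension_le_tsum {r p : ℝ} (hr0 : 0 < r) (hr1 : r < 1)
    (hp : 1 ≤ p) :
    ∃ C : ℝ≥0∞, C ≠ ⊤ ∧ ∀ G : Ed 3 → ℂ, Measurable G → Integrable G → ∀ t,
      gagliardo 3 r p (waveExtension 0 G t) ≤ C * (∑' j : ℤ,
        (ENNReal.ofReal ((2 ^ j) ^ (-r)) * dyadicPieceNorm p (2 ^ j) G t) ^ p) ^ (1 / p) := by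
  obtain ⟨C, hC, hgagliardo⟩ := exists_gagliardo_le_tsum (d := 3) (F := ℂ) hr0 hr1 hp
  refine ⟨C, hC, fun G hG hGi t => hgagliardo _ _
    (continuous_waveExtension le_rfl hGi t).stronglyMeasurable fun h => ?_⟩
  have hpiece (j : ℤ) (o : Option (Fin 3)) :=
    integrable_gradientSymbol_mul_dyadicCutoff (l := 2 ^ j) (by positivity) o hG hGi
  set u : ℤ → Ed 3 → ℂ := fun j => waveExtension ((2 ^ j) ^ 2) (dyadicCutoff (2 ^ j) G) t
  have hu (j : ℤ) : Continuous (u j) := continuous_waveExtension (sq_nonneg _)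
    (by simpa only [gradientSymbol, one_mul] using hpiece j none) t
  have hdiff (x : Ed 3) : ‖waveExtension 0 G t (x + h) - waveExtension 0 G t x‖ₑ ≤
      ∑' j, ‖u j (x + h) - u j x‖ₑ := by
    rw [← ((hasSum_waveExtension_dyadicCutoff hGi t (x + h)).sub
      (hasSum_waveExtension_dyadicCutoff hGi t x)).tsum_eq]
    exact enorm_tsum_le_tsum_enorm
  calc _ ≤ eLpNorm' (fun x => ∑' j, ‖u j (x + h) - u j x‖ₑ) p volume :=
        eLpNorm'_mono_enorm_ae (by linarith) (.of_forall hdiff)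
    _ ≤ ∑' j, eLpNorm' (fun x => ‖u j (x + h) - u j x‖ₑ) p volume :=
        eLpNorm'_tsum_le hp fun j => (by have := hu j; fun_prop : Continuous _).measurable
    _ ≤ _ := ENNReal.tsum_le_tsum fun j => by
        rw [eLpNorm'_enorm]
        exact eLpNorm'_waveExtension_add_sub_le hp (sq_nonneg _) (by positivity) (hpiece j) t h

theorem exists_eLpNorm'_dyadicPieceNorm_le {p : ℝ} (hp : 2 < p) :
    ∃ C : ℝ≥0∞, C ≠ ⊤ ∧ ∀ l : ℝ, 0 < l → ∀ G : Ed 3 → ℂ, Measurable G → Integrable G →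
      eLpNorm' (dyadicPieceNorm p l G) (2 * p / (p - 2)) volume ≤
        C * ENNReal.ofReal (l ^ (-((p - 2) / p))) *
          eLpNorm' (fun κ => ENNReal.ofReal (min 1 ((l * ‖κ‖) ^ 2)) * ‖G κ‖ₑ) 2 volume := by
  have hq : 1 ≤ 2 * p / (p - 2) := by rw [le_div_iff₀ (by linarith)]; linarith
  obtain ⟨C, hC, hwave⟩ := exists_eLpNorm'_waveExtension_le hp
  refine ⟨24 * C, by finiteness, fun l hl G hG hGi => ?_⟩
  set N : ℝ≥0∞ := eLpNorm' (fun κ => ENNReal.ofReal (min 1 ((l * ‖κ‖) ^ 2)) * ‖G κ‖ₑ) 2 volume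
  set H : Option (Fin 3) → Ed 3 → ℂ := fun o κ => gradientSymbol l o κ * dyadicCutoff l G κ
  have hH (o : Option (Fin 3)) : Measurable (H o) :=
    (measurable_gradientSymbol l o).mul (measurable_dyadicCutoff l hG)
  have hHN (o : Option (Fin 3)) : eLpNorm' (H o) 2 volume ≤ 3 * N := by
    rw [← eLpNorm'_const_mul two_pos ofNat_ne_top]
    refine eLpNorm'_mono_enorm_ae zero_le_two (.of_forall fun κ => ?_)
    rw [enorm_eq_self, ← mul_assoc, ← ofReal_norm (G κ), ← ofReal_norm (H o κ),
      ← ofReal_ofNat 3, ← ENNReal.ofReal_mul zero_le_three, ← ENNReal.ofReal_mul (by positivity)]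
    exact ENNReal.ofReal_le_ofReal (norm_gradientSymbol_mul_dyadicCutoff_le hl o G κ)
  have hexp : (l ^ 2) ^ (-((p - 2) / (2 * p))) = l ^ (-((p - 2) / p)) := by
    rw [← Real.rpow_natCast, ← Real.rpow_mul hl.le]
    congr 1
    field
  have hpiece (o : Option (Fin 3)) :
      eLpNorm' (fun t => eLpNorm' (waveExtension (l ^ 2) (H o) t) p volume)
        (2 * p / (p - 2)) volume ≤ C * ENNReal.ofReal (l ^ (-((p - 2) / p))) * (3 * N) := by
    grw [hwave (l ^ 2) (by positivity) (H o) (hH o)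
      (integrable_gradientSymbol_mul_dyadicCutoff hl o hG hGi), hHN o, hexp]
  calc eLpNorm' (dyadicPieceNorm p l G) (2 * p / (p - 2)) volume
      = 2 * eLpNorm' (fun t => ∑ o, eLpNorm' (waveExtension (l ^ 2) (H o) t) p volume)
          (2 * p / (p - 2)) volume := eLpNorm'_const_mul (by linarith) ofNat_ne_top _
    _ ≤ 2 * ∑ o, eLpNorm' (fun t => eLpNorm' (waveExtension (l ^ 2) (H o) t) p volume)
          (2 * p / (p - 2)) volume := by
        gcongr
        simp_rw [← tsum_fintype (L := .unconditional _)]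
        exact eLpNorm'_tsum_le hq fun o => measurable_eLpNorm'_waveExtension _ p (hH o)
    _ ≤ 2 * ∑ _o : Option (Fin 3), C * ENNReal.ofReal (l ^ (-((p - 2) / p))) * (3 * N) := by
        gcongr with o
        exact hpiece o
    _ = 24 * C * ENNReal.ofReal (l ^ (-((p - 2) / p))) * N := by
        rw [Finset.sum_const, Finset.card_univ, Fintype.card_option, Fintype.card_fin, nsmul_eq_mul]
        push_cast
        ring

theorem exists_eLpNorm'_gagliardo_waveExtension_le {r p : ℝ} (hp : 2 < p) (hr0 : 0 < r)
    (hr1 : r < 1) :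
    ∃ C : ℝ≥0∞, C ≠ ⊤ ∧ ∀ G : Ed 3 → ℂ, Measurable G → Integrable G →
      eLpNorm' (fun t => gagliardo 3 r p (waveExtension 0 G t)) (2 * p / (p - 2)) volume ≤
        C * eLpNorm' (fun κ => ‖κ‖ₑ ^ (r + (p - 2) / p) * ‖G κ‖ₑ) 2 volume := by
  have hq : 2 ≤ 2 * p / (p - 2) := by rw [le_div_iff₀ (by linarith)]; linarith
  have hs0 : 0 < (p - 2) / p := div_pos (by linarith) (by linarith)
  have hs1 : (p - 2) / p < 1 := by rw [div_lt_one (by linarith)]; linarith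
  obtain ⟨C₁, hC₁, hgagliardo⟩ := exists_gagliardo_waveExtension_le_tsum hr0 hr1
    (by linarith : 1 ≤ p)
  obtain ⟨C₂, hC₂, hpiece⟩ := exists_eLpNorm'_dyadicPieceNorm_le hp
  obtain ⟨C₃, hC₃, hsum⟩ := exists_tsum_eLpNorm'_min_one_mul_le (volume : Measure (Ed 3))
    (θ := r + (p - 2) / p) (by linarith) (by linarith)
  refine ⟨C₁ * (C₂ * C₃ ^ (1 / 2 : ℝ)), by finiteness, fun G hG hGi => ?_⟩
  set q : ℝ := 2 * p / (p - 2)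
  set B : ℤ → ℝ → ℝ≥0∞ := fun j t =>
    ENNReal.ofReal ((2 ^ j) ^ (-r)) * dyadicPieceNorm p (2 ^ j) G t
  set N : ℤ → ℝ≥0∞ := fun j =>
    eLpNorm' (fun κ => ENNReal.ofReal (min 1 ((2 ^ j * ‖κ‖) ^ 2)) * ‖G κ‖ₑ) 2 volume
  have hBN (j : ℤ) : eLpNorm' (B j) q volume ≤
      C₂ * (ENNReal.ofReal ((2 ^ j) ^ (-(r + (p - 2) / p))) * N j) := by
    rw [neg_add, Real.rpow_add (by positivity), ENNReal.ofReal_mul (by positivity),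
      eLpNorm'_const_mul (by linarith) ofReal_ne_top]
    grw [hpiece (2 ^ j) (by positivity) G hG hGi]
    exact (by ring : _ = _).le
  calc eLpNorm' (fun t => gagliardo 3 r p (waveExtension 0 G t)) q volume
      ≤ C₁ * eLpNorm' (fun t => (∑' j, B j t ^ p) ^ (1 / p)) q volume := by
        rw [← eLpNorm'_const_mul (by linarith) hC₁]
        exact eLpNorm'_mono_enorm_ae (by linarith)
          (.of_forall fun t => hgagliardo G hG hGi t)
    _ ≤ C₁ * (∑' j, eLpNorm' (B j) q volume ^ (2 : ℝ)) ^ (1 / 2 : ℝ) := by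
        gcongr
        exact eLpNorm'_tsum_rpow_le hp.le hq fun j =>
          (measurable_dyadicPieceNorm p (2 ^ j) hG).const_mul _
    _ ≤ C₁ * (∑' j, (C₂ * (ENNReal.ofReal ((2 ^ j) ^ (-(r + (p - 2) / p))) * N j)) ^ (2 : ℝ)) ^
          (1 / 2 : ℝ) := by
        gcongr with j
        exact hBN j
    _ ≤ _ := by
        simp_rw [ENNReal.mul_rpow_of_nonneg C₂ _ zero_le_two]
        grw [ENNReal.tsum_mul_left, hsum (fun κ => ‖G κ‖ₑ) hG.enorm]
        simp_rw [ENNReal.mul_rpow_of_nonneg _ _ (by norm_num : (0 : ℝ) ≤ 1 / 2), ← ENNReal.rpow_mul]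
        norm_num [mul_assoc]

end HomogeneousStrichartz

section GagliardoNorm

variable {d : ℕ} {E : Type*} [NormedAddCommGroup E]

/-- The measure `|x - y|^(-(r p + d)) dx dy` on pairs of points, for which the Gagliardo seminorm
of `f` is the `L^p` norm of `f x - f y`. -/
noncomputable def gagliardoMeasure (d : ℕ) (r p : ℝ) : Measure (Ed d × Ed d) :=
  (volume.prod volume).withDensity fun z => (‖z.1 - z.2‖ₑ ^ (r * p + d))⁻¹

instance (r p : ℝ) : SFinite (gagliardoMeasure d r p) := by
  unfold gagliardoMeasure
  infer_instance

theorem stronglyMeasurable_fst_sub_snd {f : Ed d → E} (hf : StronglyMeasurable f) :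
    StronglyMeasurable fun z : Ed d × Ed d => f z.1 - f z.2 :=
  (hf.comp_measurable measurable_fst).sub (hf.comp_measurable measurable_snd)

theorem gagliardo_eq_eLpNorm' (r p : ℝ) {f : Ed d → E} (hf : StronglyMeasurable f) :
    gagliardo d r p f = eLpNorm' (fun z => f z.1 - f z.2) p (gagliardoMeasure d r p) := by
  have hf' : Measurable fun z : Ed d × Ed d => ‖f z.1 - f z.2‖ₑ ^ p :=
    (stronglyMeasurable_fst_sub_snd hf).enorm.pow_const p
  have hweight : Measurable fun z : Ed d × Ed d => (‖z.1 - z.2‖ₑ ^ (r * p + d))⁻¹ := by fun_prop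
  rw [eLpNorm', gagliardoMeasure, lintegral_withDensity_eq_lintegral_mul _ hweight hf',
    lintegral_prod _ (hweight.mul hf').aemeasurable]
  simp only [Pi.mul_apply, mul_comm _⁻¹, ← div_eq_mul_inv]
  rfl

theorem gagliardo_add_le {r p : ℝ} (hp : 1 ≤ p) {f g : Ed d → E} (hf : StronglyMeasurable f)
    (hg : StronglyMeasurable g) :
    gagliardo d r p (fun x => f x + g x) ≤ gagliardo d r p f + gagliardo d r p g := by
  rw [gagliardo_eq_eLpNorm' r p (hf.fun_add hg), gagliardo_eq_eLpNorm' r p hf,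
    gagliardo_eq_eLpNorm' r p hg]
  simp_rw [add_sub_add_comm]
  exact eLpNorm'_add_le (stronglyMeasurable_fst_sub_snd hf).aestronglyMeasurable
    (stronglyMeasurable_fst_sub_snd hg).aestronglyMeasurable hp

theorem gagliardo_const_smul (r : ℝ) {p : ℝ} (hp : 0 < p) [NormedSpace ℝ E] (c : ℝ) {f : Ed d → E}
    (hf : StronglyMeasurable f) : gagliardo d r p (c • f) = ‖c‖ₑ * gagliardo d r p f := by
  rw [gagliardo_eq_eLpNorm' r p (hf.const_smul c), gagliardo_eq_eLpNorm' r p hf,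
    ← eLpNorm'_const_smul c hp]
  simp_rw [Pi.smul_apply, ← smul_sub]
  rfl

variable {S : Type*} [MeasurableSpace S]

theorem measurable_gagliardo (r p : ℝ) {F : S → Ed d → E}
    (hF : StronglyMeasurable (Function.uncurry F)) : Measurable fun s => gagliardo d r p (F s) := by
  simp_rw [fun s => gagliardo_eq_eLpNorm' r p (hF.of_uncurry_left (x := s))]
  have hdiff : StronglyMeasurable fun z : S × (Ed d × Ed d) => F z.1 z.2.1 - F z.1 z.2.2 :=
    (hF.comp_measurable (measurable_fst.prodMk measurable_snd.fst)).sub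
      (hF.comp_measurable (measurable_fst.prodMk measurable_snd.snd))
  exact (hdiff.enorm.pow_const p).lintegral_prod_right.pow_const _

theorem gagliardo_integral_le {r p : ℝ} (hp : 1 ≤ p) [NormedSpace ℝ E] {ν : Measure S}
    [SigmaFinite ν] {F : S → Ed d → E} (hF : StronglyMeasurable (Function.uncurry F)) :
    gagliardo d r p (fun x => ∫ s, F s x ∂ν) ≤ ∫⁻ s, gagliardo d r p (F s) ∂ν := by
  have hFs (x : Ed d) : AEStronglyMeasurable (F · x) ν := hF.of_uncurry_right.aestronglyMeasurable
  have hdiff : StronglyMeasurable fun z : (Ed d × Ed d) × S => F z.2 z.1.1 - F z.2 z.1.2 :=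
    (hF.comp_measurable (measurable_snd.prodMk measurable_fst.fst)).sub
      (hF.comp_measurable (measurable_snd.prodMk measurable_fst.snd))
  simp_rw [fun s => gagliardo_eq_eLpNorm' r p (hF.of_uncurry_left (x := s))]
  rw [gagliardo_eq_eLpNorm' r p hF.integral_prod_left]
  calc eLpNorm' (fun z => (∫ s, F s z.1 ∂ν) - ∫ s, F s z.2 ∂ν) p (gagliardoMeasure d r p)
      ≤ eLpNorm' (fun z => ∫⁻ s, ‖F s z.1 - F s z.2‖ₑ ∂ν) p (gagliardoMeasure d r p) :=
        eLpNorm'_mono_enorm_ae (by linarith)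
          (.of_forall fun z => enorm_integral_sub_integral_le (hFs z.1) (hFs z.2))
    _ ≤ ∫⁻ s, eLpNorm' (fun z => ‖F s z.1 - F s z.2‖ₑ) p (gagliardoMeasure d r p) ∂ν :=
        eLpNorm'_lintegral_le hp hdiff.enorm
    _ = _ := by simp_rw [eLpNorm'_enorm]

end GagliardoNorm

section HalfWave

theorem ftransform_congr_ae {d : ℕ} {f g : Ed d → ℂ} (h : f =ᵐ[volume] g) :
    ftransform d f = ftransform d g := by
  ext κ
  exact integral_congr_ae (h.mono fun x hx => by simp only [hx])

theorem halfWave_congr_ae {d : ℕ} (t : ℝ) {f g : Ed d → ℂ} (h : f =ᵐ[volume] g) :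
    halfWave d t f = halfWave d t g := by
  ext x
  rw [halfWave, halfWave, ftransform_congr_ae h]

theorem sobolevSemi_congr_ae {d : ℕ} (θ : ℝ) {f g : Ed d → ℂ} (h : f =ᵐ[volume] g) :
    sobolevSemi d θ f = sobolevSemi d θ g := by
  rw [sobolevSemi, sobolevSemi, ftransform_congr_ae h]

theorem ftransform_eq_planeWaveTransform (d : ℕ) (f : Ed d → ℂ) (κ : Ed d) :
    ftransform d f κ = planeWaveTransform f (-κ) := by
  simp only [ftransform, planeWaveTransform, planeWave, inner_neg_right, Complex.ofReal_neg,
    mul_neg, mul_comm]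

theorem measurable_ftransform {d : ℕ} {f : Ed d → ℂ} (hf : Integrable f) :
    Measurable (ftransform d f) := by
  rw [funext (ftransform_eq_planeWaveTransform d f)]
  exact ((continuous_planeWaveTransform hf).comp continuous_neg).measurable

theorem integrable_ftransform_schwartzMap {d : ℕ} (g : SchwartzMap (Ed d) ℂ) :
    Integrable (ftransform d g) := by
  have hfourier (κ : Ed d) :
      ftransform d g κ = FourierTransform.fourier g ((2 * Real.pi)⁻¹ • κ) := by
    rw [ftransform_eq_planeWaveTransform, planeWaveTransform_eq_fourier, neg_smul_neg]
    rfl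
  rw [funext hfourier]
  exact (SchwartzMap.integrable _).comp_smul (by positivity)

theorem sobolevSemi_eq_mul_eLpNorm' (d : ℕ) (θ : ℝ) (f : Ed d → ℂ) :
    sobolevSemi d θ f = ENNReal.ofReal ((2 * Real.pi) ^ (-(d : ℝ))) ^ (1 / 2 : ℝ) *
      eLpNorm' (fun κ => ‖κ‖ₑ ^ θ * ‖ftransform d f κ‖ₑ) 2 volume := by
  rw [sobolevSemi, ENNReal.mul_rpow_of_nonneg _ _ (by norm_num), eLpNorm']
  congr! 4 with κ
  rw [enorm_eq_self, ENNReal.mul_rpow_of_nonneg _ _ zero_le_two, ← ENNReal.rpow_mul, mul_comm θ,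
    ENNReal.rpow_two]
  rfl

theorem halfWave_eq_smul_waveExtension (t : ℝ) (g : Ed 3 → ℂ) :
    halfWave 3 t g =
      ((2 * Real.pi) ^ (-((3 : ℕ) : ℝ)) : ℝ) • waveExtension 0 (ftransform 3 g) t := by
  ext x
  rw [halfWave, Pi.smul_apply, Complex.real_smul, waveExtension]
  congr! 3 with κ
  rw [gaussWave, planeWave, ← Complex.exp_add, mul_comm]
  congr 2
  push_cast
  ring

theorem measurable_uncurry_ftransform {d : ℕ} {Y : Type*} [MeasurableSpace Y] {f : Y → Ed d → ℂ}
    (hf : Measurable (Function.uncurry f)) :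
    Measurable (Function.uncurry fun y => ftransform d (f y)) := by
  simp_rw [funext (ftransform_eq_planeWaveTransform d _)]
  exact (measurable_uncurry_planeWaveTransform hf).comp (measurable_fst.prodMk measurable_snd.neg)

theorem measurable_uncurry_halfWave {d : ℕ} {Y : Type*} [MeasurableSpace Y] {τ : Y → ℝ}
    (hτ : Measurable τ) {f : Y → Ed d → ℂ}
    (hf : Measurable (Function.uncurry fun y => ftransform d (f y))) :
    Measurable (Function.uncurry fun y => halfWave d (τ y) (f y)) := by
  have hphase : Measurable fun z : (Y × Ed d) × Ed d =>
      Complex.exp (Complex.I * ((⟪z.1.2, z.2⟫ : ℂ) + (τ z.1.1 : ℂ) * ((‖z.2‖ : ℝ) : ℂ))) := by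
    fun_prop
  exact ((hphase.mul (hf.comp (measurable_fst.fst.prodMk measurable_snd))
    ).stronglyMeasurable.integral_prod_right').measurable.const_mul _

theorem exists_eLpNorm'_gagliardo_halfWave_le {r p : ℝ} (hp : 2 < p) (hr0 : 0 < r)
    (hr1 : r < 1) :
    ∃ C : ℝ≥0∞, C ≠ ⊤ ∧ ∀ g : Ed 3 → ℂ, Integrable g → Integrable (ftransform 3 g) →
      eLpNorm' (fun t => gagliardo 3 r p (halfWave 3 t g)) (2 * p / (p - 2)) volume ≤
        C * sobolevSemi 3 (r + (p - 2) / p) g := by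
  have hq : 0 < 2 * p / (p - 2) := div_pos (by linarith) (by linarith)
  obtain ⟨C, hC, hwave⟩ := exists_eLpNorm'_gagliardo_waveExtension_le hp hr0 hr1
  set c : ℝ := (2 * Real.pi) ^ (-((3 : ℕ) : ℝ))
  have hc : ENNReal.ofReal c = ENNReal.ofReal c ^ (1 / 2 : ℝ) * ENNReal.ofReal c ^ (1 / 2 : ℝ) := by
    rw [← ENNReal.rpow_add_of_nonneg _ _ (by norm_num) (by norm_num)]
    norm_num
  refine ⟨C * ENNReal.ofReal c ^ (1 / 2 : ℝ), by finiteness, fun g hg hg' => ?_⟩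
  have hgagliardo (t : ℝ) : gagliardo 3 r p (halfWave 3 t g) =
      ENNReal.ofReal c * gagliardo 3 r p (waveExtension 0 (ftransform 3 g) t) := by
    rw [halfWave_eq_smul_waveExtension, gagliardo_const_smul r (by linarith) _
      (continuous_waveExtension le_rfl hg' t).stronglyMeasurable, ← ofReal_norm,
      Real.norm_of_nonneg (by positivity)]
  simp_rw [hgagliardo]
  rw [eLpNorm'_const_mul hq ofReal_ne_top, sobolevSemi_eq_mul_eLpNorm']
  grw [hwave _ (measurable_ftransform hg) hg']
  nth_rewrite 1 [hc]
  exact (by ring : _ = _).le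

theorem eLpNorm'_gagliardo_add_integral_le {d : ℕ} {r p q T : ℝ} (hp : 1 ≤ p) (hq : 1 ≤ q)
    {E : Type*} [NormedAddCommGroup E] [NormedSpace ℝ E] {u : ℝ → Ed d → E}
    (hu : StronglyMeasurable (Function.uncurry u)) {H : ℝ × ℝ → Ed d → E}
    (hH : StronglyMeasurable (Function.uncurry H)) :
    eLpNorm' (fun t => gagliardo d r p fun x => u t x + ∫ s in Set.Ioc 0 t, H (t, s) x) q
        (volume.restrict (Set.Ioc 0 T)) ≤
      eLpNorm' (fun t => gagliardo d r p (u t)) q volume +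
        ∫⁻ s in Set.Ioc 0 T, eLpNorm' (fun t => gagliardo d r p (H (t, s))) q volume := by
  have hHt (t : ℝ) : StronglyMeasurable (Function.uncurry fun s => H (t, s)) :=
    hH.comp_measurable ((measurable_const.prodMk measurable_fst).prodMk measurable_snd)
  have hgu := measurable_gagliardo r p hu
  have hgH := measurable_gagliardo r p hH
  have hslice : ∀ t ∈ Set.Ioc 0 T,
      gagliardo d r p (fun x => u t x + ∫ s in Set.Ioc 0 t, H (t, s) x) ≤
        gagliardo d r p (u t) + ∫⁻ s in Set.Ioc 0 T, gagliardo d r p (H (t, s)) := by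
    intro t ht
    grw [gagliardo_add_le hp hu.of_uncurry_left (hHt t).integral_prod_left,
      gagliardo_integral_le hp (hHt t), Set.Ioc_subset_Ioc_right ht.2]
  calc _ ≤ eLpNorm' (fun t => gagliardo d r p (u t) +
          ∫⁻ s in Set.Ioc 0 T, gagliardo d r p (H (t, s))) q (volume.restrict (Set.Ioc 0 T)) :=
        eLpNorm'_mono_enorm_ae (by linarith) (ae_restrict_of_forall_mem measurableSet_Ioc hslice)
    _ ≤ eLpNorm' (fun t => gagliardo d r p (u t) +
          ∫⁻ s in Set.Ioc 0 T, gagliardo d r p (H (t, s))) q volume :=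
        eLpNorm'_mono_measure _ Measure.restrict_le_self (by linarith)
    _ ≤ eLpNorm' (fun t => gagliardo d r p (u t)) q volume +
          eLpNorm' (fun t => ∫⁻ s in Set.Ioc 0 T, gagliardo d r p (H (t, s))) q volume :=
        eLpNorm'_add_le hgu.aestronglyMeasurable
          hgH.lintegral_prod_right'.aestronglyMeasurable hq
    _ ≤ _ := by grw [eLpNorm'_lintegral_le hq hgH]

theorem exists_eLpNorm'_gagliardo_duhamel_le {r p : ℝ} (hp : 2 < p) (hr0 : 0 < r) (hr1 : r < 1) :
    ∃ C : ℝ≥0∞, C ≠ ⊤ ∧ ∀ (T : ℝ) (w₀ : Ed 3 → ℂ) (f : ℝ → Ed 3 → ℂ),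
      Integrable w₀ → Integrable (ftransform 3 w₀) → Measurable (Function.uncurry f) →
      (∀ᵐ s ∂volume.restrict (Set.Ioc 0 T), Integrable (f s) ∧ Integrable (ftransform 3 (f s))) →
      eLpNorm' (fun t => gagliardo 3 r p fun x =>
          halfWave 3 t w₀ x + ∫ s in Set.Ioc 0 t, halfWave 3 (t - s) (f s) x)
          (2 * p / (p - 2)) (volume.restrict (Set.Ioc 0 T)) ≤
        C * (sobolevSemi 3 (r + (p - 2) / p) w₀ +
          ∫⁻ s in Set.Ioc 0 T, sobolevSemi 3 (r + (p - 2) / p) (f s)) := by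
  obtain ⟨C, hC, hwave⟩ := exists_eLpNorm'_gagliardo_halfWave_le hp hr0 hr1
  refine ⟨C, hC, fun T w₀ f hw₀ hw₀' hf hfs => ?_⟩
  have hq : 1 ≤ 2 * p / (p - 2) := by rw [one_le_div (by linarith)]; linarith
  have hu : Measurable (Function.uncurry fun t => halfWave 3 t w₀) :=
    measurable_uncurry_halfWave measurable_id ((measurable_ftransform hw₀).comp measurable_snd)
  have hH : Measurable (Function.uncurry fun z : ℝ × ℝ => halfWave 3 (z.1 - z.2) (f z.2)) :=
    measurable_uncurry_halfWave (measurable_fst.sub measurable_snd)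
      (measurable_uncurry_ftransform (hf.comp (measurable_fst.snd.prodMk measurable_snd)))
  have hsource : ∀ᵐ s ∂volume.restrict (Set.Ioc 0 T),
      eLpNorm' (fun t => gagliardo 3 r p (halfWave 3 (t - s) (f s))) (2 * p / (p - 2)) volume ≤
        C * sobolevSemi 3 (r + (p - 2) / p) (f s) := by
    filter_upwards [hfs] with s hs
    simp_rw [sub_eq_add_neg]
    exact (eLpNorm'_comp_add_right _ _ _).trans_le (hwave _ hs.1 hs.2)
  grw [eLpNorm'_gagliardo_add_integral_le (by linarith) hq hu.stronglyMeasurable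
    hH.stronglyMeasurable, hwave w₀ hw₀ hw₀', lintegral_mono_ae hsource,
    lintegral_const_mul' _ _ hC, mul_add]

end HalfWave

theorem stmt17_general (p r θ : ℝ) (hp2 : 2 < p) (hr0 : 0 < r) (hr1 : r < 1)
    (hθ : θ = r + (p - 2) / p) :
    ∃ C : ℝ, 0 < C ∧ ∀ (T : ℝ) (w₀ : Ed 3 → ℂ) (f : ℝ → Ed 3 → ℂ),
      Integrable w₀ → Integrable (ftransform 3 w₀) →
      AEStronglyMeasurable (Function.uncurry f) (volume.restrict (Set.Ioc 0 T ×ˢ Set.univ)) →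
      (∀ᵐ s ∂volume.restrict (Set.Ioc 0 T), Integrable (f s) ∧ Integrable (ftransform 3 (f s))) →
      (∫⁻ t in Set.Ioc (0 : ℝ) T,
          gagliardo 3 r p
            (fun x => halfWave 3 t w₀ x + ∫ s in (0 : ℝ)..t, halfWave 3 (t - s) (f s) x)
            ^ (2 * p / (p - 2))) ^ ((p - 2) / (2 * p))
        ≤ ENNReal.ofReal C *
            (sobolevSemi 3 θ w₀ + ∫⁻ t in Set.Ioc (0 : ℝ) T, sobolevSemi 3 θ (f t)) := by
  obtain ⟨C, hC, hduhamel⟩ := exists_eLpNorm'_gagliardo_duhamel_le hp2 hr0 hr1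
  refine ⟨C.toReal + 1, by positivity, fun T w₀ f hw₀ hw₀' hf hfs => ?_⟩
  rw [Measure.volume_eq_prod, ← Measure.prod_restrict, Measure.restrict_univ] at hf
  let g : ℝ → Ed 3 → ℂ := Function.curry (hf.mk (Function.uncurry f))
  have hfg : ∀ᵐ s ∂volume.restrict (Set.Ioc 0 T), f s =ᵐ[volume] g s :=
    Measure.ae_ae_of_ae_prod hf.ae_eq_mk
  have hgs : ∀ᵐ s ∂volume.restrict (Set.Ioc 0 T),
      Integrable (g s) ∧ Integrable (ftransform 3 (g s)) := by
    filter_upwards [hfg, hfs] with s hs hfs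
    exact ⟨hfs.1.congr hs, ftransform_congr_ae hs ▸ hfs.2⟩
  have hduhamel_congr : ∀ t ∈ Set.Ioc 0 T,
      (fun x => halfWave 3 t w₀ x + ∫ s in (0 : ℝ)..t, halfWave 3 (t - s) (f s) x) =
        fun x => halfWave 3 t w₀ x + ∫ s in Set.Ioc 0 t, halfWave 3 (t - s) (g s) x := by
    intro t ht
    have hfg_t := ae_restrict_of_ae_restrict_of_subset (Set.Ioc_subset_Ioc_right ht.2) hfg
    ext x
    rw [intervalIntegral.integral_of_le ht.1.le,
      integral_congr_ae (hfg_t.mono fun s hs => congrFun (halfWave_congr_ae (t - s) hs) x)]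
  have hsource : ∫⁻ t in Set.Ioc 0 T, sobolevSemi 3 θ (f t) =
      ∫⁻ t in Set.Ioc 0 T, sobolevSemi 3 θ (g t) :=
    lintegral_congr_ae (hfg.mono fun s hs => sobolevSemi_congr_ae θ hs)
  rw [setLIntegral_congr_fun measurableSet_Ioc fun t ht =>
    congrArg (gagliardo 3 r p · ^ (2 * p / (p - 2))) (hduhamel_congr t ht), hsource, hθ,
    ← one_div_div (2 * p)]
  refine (hduhamel T w₀ g hw₀ hw₀' hf.stronglyMeasurable_mk.measurable hgs).trans ?_
  gcongr
  rw [ENNReal.ofReal_add toReal_nonneg zero_le_one, ofReal_toReal hC]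
  exact le_self_add

/-- Strichartz estimate for the half-wave equation in `d = 3`:
for `2 < p < ∞`, `0 < r < 1`, `θ = r + (p−2)/p`, and
`w(t) = e^{itD}w₀ + ∫₀^t e^{i(t−s)D} f(s) ds`,
`(∫₀^T [w(t)]_{r,p}^{2p/(p−2)} dt)^{(p−2)/(2p)} ≤ C ([w₀]_θ + ∫₀^T [f(t)]_θ dt)`
with `C` independent of `T`. -/
theorem stmt17 (p r θ : ℝ) (hp2 : 2 < p) (hr0 : 0 < r) (hr1 : r < 1)
    (hθ : θ = r + (p - 2) / p) :
    ∃ C : ℝ, 0 < C ∧ ∀ (T : ℝ), 0 < T →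
      ∀ (w₀ : SchwartzMap (Ed 3) ℂ) (f : ℝ → SchwartzMap (Ed 3) ℂ),
      ContinuousOn (fun q : ℝ × Ed 3 => f q.1 q.2) (Set.Icc 0 T ×ˢ Set.univ) →
      (∫⁻ t in Set.Ioc (0 : ℝ) T, sobolevSemi 3 θ ⇑(f t)) ≠ ⊤ →
      (∫⁻ t in Set.Ioc (0 : ℝ) T,
          gagliardo 3 r p
            (fun x => halfWave 3 t (⇑w₀) x +
              ∫ s in (0 : ℝ)..t, halfWave 3 (t - s) (⇑(f s)) x)
            ^ (2 * p / (p - 2))) ^ ((p - 2) / (2 * p))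
        ≤ ENNReal.ofReal C *
            (sobolevSemi 3 θ ⇑w₀ + ∫⁻ t in Set.Ioc (0 : ℝ) T, sobolevSemi 3 θ ⇑(f t)) := by
  obtain ⟨C, hC, hgeneral⟩ := stmt17_general p r θ hp2 hr0 hr1 hθ
  exact ⟨C, hC, fun T _ w₀ f hf _ => hgeneral T w₀ (fun t => f t) w₀.integrable
    (integrable_ftransform_schwartzMap w₀) ((hf.mono (Set.prod_mono_left Set.Ioc_subset_Icc_self
      )).aestronglyMeasurable (measurableSet_Ioc.prod .univ))
    (.of_forall fun t => ⟨(f t).integrable, integrable_ftransform_schwartzMap (f t)⟩)⟩
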